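/- arXiv:2301.06218 — 3 statements merged into one kernel-verified Lean document; each statement's English description precedes it below -/
import Mathlib

section
/- Let A ∈ F₂[x] be a perfect polynomial with 1 ≤ ω(A) ≤ 4. Then either A = (x(x+1))^{2ⁿ−1} for some positive integer n, or A is one of the nine polynomials: x(x+1)²Q₂, x²(x+1)Q₂, x(x+1)²Q₂²Q₄c, x²(x+1)Q₂²Q₄c, x³(x+1)⁴Q₄ₐ, x⁴(x+1)³Q₄ᵦ, x³(x+1)⁶Q₃ₐQ₃ᵦ, x⁶(x+1)³Q₃ₐQ₃ᵦ, x⁴(x+1)⁴Q₄ₐQ₄ᵦ, where Q₂ = x²+x+1, Q₃ₐ = x³+x+1, Q₃ᵦ = x³+x²+1, Q₄ₐ = x⁴+x³+1, Q₄ᵦ = x⁴+x³+x²+x+1, Q₄c = x⁴+x+1. -/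
/-!
Write `geo n R = 1 + R + ⋯ + R ^ (n - 1)`. If `A = ∏ P ^ N` is the factorization of `A`, then
`σ(A) = ∏ geo (N + 1) P`, so that `A` is perfect exactly when these two products agree.

*A perfect polynomial with at most four primes is divisible by `x` and `x + 1`.* If `X - c` does not
divide `A`, evaluation at `c` shows that all exponents are even, and then `A` has no root at all. Let
`p` be the least degree of a prime factor. Expanding `σ(A) = A (1 + ∑ 1 / P + O(x ^ (-2 p)))`, the
equality `σ(A) = A` bounds the degree of `∑ A / P` by `deg A - 2 p`; in particular the number of primes
of minimal degree is even. Moreover a square `Q²` dividing `σ(P ^ (2 m))` divides `P'`, which is itself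
a square, so `P` must have degree larger than `2 deg Q`. Together these facts dispose of at most three
primes (`odd_two`, `odd_three`); with four primes they force all degrees to be equal and all exponents
to be two. There `σ(P²) = Q R` for suitable `P`, `Q`, `R`, and a symmetry of the cube roots of unity
modulo `P` shows that the fourth prime `S` satisfies `σ(S²) = Q R = σ(P²)`, which is impossible
(`equal_degree_endgame`, `odd_four`).

*Solving the exponent equations.* Now `A = x ^ a y ^ b P ^ c Q ^ d` with `y = x + 1` and at most two
further primes, `deg P ≤ deg Q`. Every divisor sum splits as
`geo (2 ^ k u) R = (R + 1) ^ (2 ^ k - 1) (geo u R) ^ (2 ^ k)` with `u` odd. The odd parts `geo u R` are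
products of `P` and `Q` with exponents at most one, and only `R = x, y, P` can contribute. Comparing
the exponents of `x`, `y`, `P`, `Q` gives a system of equations between powers of two (`Config`), most
cases of which fall by parity. The remaining input is polynomial: if `geo u x` is prime and
`geo u x + 1` splits over `x` and `y`, then `u` is `3` or `5` (`Lin.geo_irreducible`), and if
`geo u x = P Q`, then reversal of coefficients either fixes both primes or exchanges them, which
determines `P`, or both primes (`Lin.two_primes`). The solutions are the polynomials `Sporadic` up to
exchanging `x` and `y`, together with the powers `(x y) ^ (2 ^ n - 1)` that appear when there is no
further prime.
-/

open Polynomial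

/-- The sum of all divisors of a polynomial over `F₂` (junk value `0` when the
divisor set is infinite, i.e. for `A = 0`). -/
noncomputable def sigma (A : Polynomial (ZMod 2)) : Polynomial (ZMod 2) :=
  ∑ᶠ (D : Polynomial (ZMod 2)) (_ : D ∣ A), D

/-- A binary polynomial is odd if it evaluates to `1` at both `0` and `1`. -/
def IsOdd (B : Polynomial (ZMod 2)) : Prop := B.eval 0 = 1 ∧ B.eval 1 = 1

/-- A binary polynomial is even if it is not odd. -/
def IsEven (B : Polynomial (ZMod 2)) : Prop := ¬ IsOdd B

/-- The number of pairwise distinct irreducible factors of a binary polynomial. -/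
noncomputable def omega (A : Polynomial (ZMod 2)) : ℕ :=
  {P : Polynomial (ZMod 2) | Irreducible P ∧ P ∣ A}.ncard

namespace F2Perfect

/-! ### Divisor sums and factorizations -/

/-- The geometric sum `1 + R + ⋯ + R ^ (n - 1)`; for `R` irreducible, `σ(R ^ N) = geo (N + 1) R`. -/
noncomputable def geo (n : ℕ) (R : (ZMod 2)[X]) : (ZMod 2)[X] := ∑ i ∈ Finset.range n, R ^ i

lemma eq_one_of_isUnit {p : (ZMod 2)[X]} (h : IsUnit p) : p = 1 := by
  obtain ⟨r, hr, rfl⟩ := Polynomial.isUnit_iff.1 h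
  have : r = 1 := by
    have h0 : r ≠ 0 := hr.ne_zero
    revert h0; clear hr h; revert r; decide
  simp [this]

lemma eq_of_associated {p q : (ZMod 2)[X]} (h : Associated p q) : p = q := by
  obtain ⟨u, rfl⟩ := h
  rw [eq_one_of_isUnit u.isUnit, mul_one]

lemma eq_of_dvd_irr {p q : (ZMod 2)[X]} (hp : Irreducible p) (hq : Irreducible q) (h : p ∣ q) :
    p = q :=
  eq_of_associated (hp.associated_of_dvd hq h)

lemma finite_divisors {A : (ZMod 2)[X]} (hA : A ≠ 0) : {D | D ∣ A}.Finite := by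
  have : Fintype ((ZMod 2)[X])ˣ :=
    ⟨{1}, fun u => by simpa using Units.ext (eq_one_of_isUnit u.isUnit)⟩
  have := UniqueFactorizationMonoid.fintypeSubtypeDvd A hA
  exact (inferInstance : Finite {D // D ∣ A})

lemma sigma_eq_sum {A : (ZMod 2)[X]} (hA : A ≠ 0) :
    sigma A = ∑ D ∈ (finite_divisors hA).toFinset, D := by
  unfold sigma
  exact finsum_mem_eq_finite_toFinset_sum (fun D : (ZMod 2)[X] => D) (finite_divisors hA)

lemma sigma_pow_mul {P B : (ZMod 2)[X]} (hP : Irreducible P) (hB : B ≠ 0) (hPB : ¬ P ∣ B) (n : ℕ) :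
    sigma (P ^ n * B) = geo (n + 1) P * sigma B := by
  classical
  have hne : P ^ n * B ≠ 0 := mul_ne_zero (pow_ne_zero _ hP.ne_zero) hB
  rw [sigma_eq_sum hne, sigma_eq_sum hB, geo, Finset.sum_mul_sum, ← Finset.sum_product']
  symm
  refine Finset.sum_bij (fun a _ => P ^ a.1 * a.2) ?_ ?_ ?_ ?_
  · rintro ⟨i, D⟩ h
    simp only [Finset.mem_product, Finset.mem_range, Set.Finite.mem_toFinset,
      Set.mem_ofPred_eq] at h ⊢
    exact mul_dvd_mul (pow_dvd_pow _ (by omega)) h.2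
  · rintro ⟨i, D⟩ h ⟨j, E⟩ h' heq
    simp only [Finset.mem_product, Finset.mem_range, Set.Finite.mem_toFinset,
      Set.mem_ofPred_eq] at h h' heq
    have hD : ¬ P ∣ D := fun hh => hPB (hh.trans h.2)
    have hE : ¬ P ∣ E := fun hh => hPB (hh.trans h'.2)
    have hij : i = j := by
      have h1 := emultiplicity_mul hP.prime (a := P ^ i) (b := D)
      have h2 := emultiplicity_mul hP.prime (a := P ^ j) (b := E)
      rw [emultiplicity_pow_self_of_prime hP.prime, emultiplicity_eq_zero.2 hD] at h1
      rw [emultiplicity_pow_self_of_prime hP.prime, emultiplicity_eq_zero.2 hE] at h2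
      rw [heq, h2] at h1
      simpa using h1.symm
    subst hij
    simpa using mul_left_cancel₀ (pow_ne_zero _ hP.ne_zero) heq
  · intro D hD
    simp only [Set.Finite.mem_toFinset, Set.mem_ofPred_eq] at hD
    obtain ⟨d₁, d₂, h1, h2, rfl⟩ := exists_dvd_and_dvd_of_dvd_mul hD
    obtain ⟨i, hi, hd⟩ := (dvd_prime_pow hP.prime n).1 h1
    refine ⟨(i, d₂), ?_, ?_⟩
    · simp only [Finset.mem_product, Finset.mem_range, Set.Finite.mem_toFinset, Set.mem_ofPred_eq]
      exact ⟨by omega, h2⟩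
    · simp [eq_of_associated hd]
  · simp

lemma sigma_one : sigma 1 = 1 := by
  rw [sigma_eq_sum one_ne_zero]
  have : (finite_divisors (one_ne_zero (α := (ZMod 2)[X]))).toFinset = {1} := by
    ext D
    simp only [Set.Finite.mem_toFinset, Set.mem_ofPred_eq, Finset.mem_singleton]
    exact ⟨fun h => eq_one_of_isUnit (isUnit_of_dvd_one h), fun h => h ▸ dvd_rfl⟩
  rw [this]; simp

lemma sigma_prod (s : Finset (ZMod 2)[X]) (N : (ZMod 2)[X] → ℕ) (hs : ∀ P ∈ s, Irreducible P) :
    sigma (∏ P ∈ s, P ^ N P) = ∏ P ∈ s, geo (N P + 1) P := by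
  classical
  induction s using Finset.induction_on with
  | empty => simpa using sigma_one
  | insert P s hPs ih =>
    have hP := hs P (Finset.mem_insert_self _ _)
    have hs' : ∀ Q ∈ s, Irreducible Q := fun Q hQ => hs Q (Finset.mem_insert_of_mem hQ)
    rw [Finset.prod_insert hPs, Finset.prod_insert hPs, sigma_pow_mul hP, ih hs']
    · exact Finset.prod_ne_zero_iff.2 fun Q hQ => pow_ne_zero _ (hs' Q hQ).ne_zero
    · intro h
      obtain ⟨Q, hQ, hd⟩ := (hP.prime.dvd_finsetProd_iff _).1 h
      have := eq_of_dvd_irr hP (hs' Q hQ) (hP.prime.dvd_of_dvd_pow hd)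
      exact hPs (this ▸ hQ)

lemma exists_factorization {A : (ZMod 2)[X]} (hA : A ≠ 0) :
    ∃ (s : Finset (ZMod 2)[X]) (N : (ZMod 2)[X] → ℕ), (∀ P ∈ s, Irreducible P) ∧
      (∀ P ∈ s, 1 ≤ N P) ∧ A = ∏ P ∈ s, P ^ N P ∧ omega A = s.card := by
  classical
  set f := UniqueFactorizationMonoid.factors A with hf
  have hirr : ∀ P ∈ f, Irreducible P := fun P h => UniqueFactorizationMonoid.irreducible_of_factor P h
  have hprod : f.prod = A := eq_of_associated (UniqueFactorizationMonoid.factors_prod hA)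
  refine ⟨f.toFinset, fun P => f.count P, fun P h => hirr P (by simpa using h),
    fun P h => Multiset.one_le_count_iff_mem.2 (by simpa using h), ?_, ?_⟩
  · rw [← Finset.prod_multiset_count, hprod]
  · unfold omega
    rw [← Set.ncard_coe_finset]
    congr 1
    ext P
    simp only [Set.mem_ofPred_eq, Multiset.mem_toFinset, Finset.mem_coe]
    constructor
    · rintro ⟨h1, h2⟩
      obtain ⟨Q, hQ, h⟩ := UniqueFactorizationMonoid.exists_mem_factors_of_dvd hA h1 h2
      rwa [eq_of_associated h]
    · intro h
      exact ⟨hirr P h, UniqueFactorizationMonoid.dvd_of_mem_factors h⟩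

lemma omega_zero : omega 0 = 0 := by
  unfold omega
  apply Set.Infinite.ncard
  intro hfin
  set M : (ZMod 2)[X] := ∏ P ∈ hfin.toFinset, P with hM
  have hM0 : M ≠ 0 := by
    refine Finset.prod_ne_zero_iff.2 fun P hP => ?_
    have : Irreducible P ∧ P ∣ 0 := by simpa using hP
    exact this.1.ne_zero
  have hdeg : 0 < (X * M + 1).natDegree := by
    have h1 : (X * M).natDegree = M.natDegree + 1 := natDegree_X_mul hM0
    have h2 : (X * M + 1).natDegree = (X * M).natDegree := by
      simpa using natDegree_add_C (p := X * M) (a := (1 : ZMod 2))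
    omega
  obtain ⟨P, -, hP, hd⟩ := exists_monic_irreducible_factor _ (not_isUnit_of_natDegree_pos _ hdeg)
  have hPM : P ∣ M := Finset.dvd_prod_of_mem _ (by simpa using hP)
  exact hP.not_isUnit (isUnit_of_dvd_one ((dvd_add_right (hPM.mul_left X)).1 hd))

/-! ### Geometric sums over `F₂` -/

lemma two_eq_zero : (2 : (ZMod 2)[X]) = 0 := by
  have := CharTwo.add_self_eq_zero (1 : (ZMod 2)[X])
  rwa [one_add_one_eq_two] at this

lemma add_eq_zero_iff {a b : (ZMod 2)[X]} : a + b = 0 ↔ a = b := CharTwo.add_eq_zero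

lemma geo_zero (R : (ZMod 2)[X]) : geo 0 R = 0 := by simp [geo]

lemma geo_one (R : (ZMod 2)[X]) : geo 1 R = 1 := by simp [geo]

lemma geo_succ (n : ℕ) (R : (ZMod 2)[X]) : geo (n + 1) R = 1 + R * geo n R := by
  simp only [geo, Finset.sum_range_succ', Finset.mul_sum, pow_zero, pow_succ']
  ring

lemma geo_succ' (n : ℕ) (R : (ZMod 2)[X]) : geo (n + 1) R = geo n R + R ^ n := by
  simp only [geo, Finset.sum_range_succ]

lemma geo_mul (n : ℕ) (R : (ZMod 2)[X]) : geo n R * (R + 1) = R ^ n + 1 := by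
  induction n with
  | zero => simp [geo_zero, CharTwo.add_self_eq_zero]
  | succ n ih =>
    rw [geo_succ', add_mul, ih]
    linear_combination (R ^ n) * two_eq_zero

lemma geo_mul_index (m n : ℕ) (R : (ZMod 2)[X]) :
    geo (m * n) R = geo m R * geo n (R ^ m) := by
  induction n with
  | zero => simp [geo_zero]
  | succ n ih =>
    have : geo (m * n + m) R = geo (m * n) R + R ^ (m * n) * geo m R := by
      simp only [geo, Finset.sum_range_add, pow_add, Finset.mul_sum]
    rw [mul_add, mul_one, this, ih, geo_succ', ← pow_mul]
    ring

lemma geo_dvd_geo {m n : ℕ} (h : m ∣ n) (R : (ZMod 2)[X]) : geo m R ∣ geo n R := by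
  obtain ⟨k, rfl⟩ := h
  exact ⟨_, geo_mul_index m k R⟩

lemma geo_two_mul (n : ℕ) (R : (ZMod 2)[X]) : geo (n * 2) R = (R + 1) * geo n R ^ 2 := by
  rw [geo_mul_index, geo_succ, geo_one, mul_one]
  linear_combination - geo n R * geo_mul n R

/-- `1 + R + ⋯ + R ^ (2 ^ k u - 1) = (1 + R) ^ (2 ^ k - 1) (1 + ⋯ + R ^ (u - 1)) ^ (2 ^ k)`. -/
lemma geo_two_pow_mul (k u : ℕ) (R : (ZMod 2)[X]) :
    geo (2 ^ k * u) R = (R + 1) ^ (2 ^ k - 1) * geo u R ^ 2 ^ k := by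
  induction k with
  | zero => simp
  | succ k ih =>
    have h1 : 2 ^ (k + 1) * u = (2 ^ k * u) * 2 := by ring
    have h2 : 2 ^ (k + 1) - 1 = 1 + (2 ^ k - 1) * 2 := by
      have := Nat.one_le_two_pow (n := k)
      rw [pow_succ]; omega
    rw [h1, geo_two_mul, ih, h2]
    ring

lemma geo_odd (m : ℕ) (R : (ZMod 2)[X]) :
    geo (2 * m + 1) R = 1 + R * (R + 1) * geo m R ^ 2 := by
  rw [geo_succ, mul_comm 2 m, geo_two_mul]; ring

lemma geo_odd_add_one (m : ℕ) (R : (ZMod 2)[X]) :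
    geo (2 * m + 1) R + 1 = R * (R + 1) * geo m R ^ 2 := by
  rw [geo_odd]; linear_combination two_eq_zero

lemma derivative_geo_odd (m : ℕ) (R : (ZMod 2)[X]) :
    derivative (geo (2 * m + 1) R) = derivative R * geo m R ^ 2 := by
  rw [geo_odd]
  simp only [derivative_add, derivative_mul, derivative_one, derivative_pow]
  push_cast
  have h2 : (C (2 : ZMod 2) : (ZMod 2)[X]) = 0 := by
    have : (2 : ZMod 2) = 0 := by decide
    rw [this, C_0]
  simp only [h2]
  linear_combination (derivative R * R * geo m R ^ 2) * two_eq_zero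

lemma isCoprime_geo_odd_half (m : ℕ) (R : (ZMod 2)[X]) :
    IsCoprime (geo (2 * m + 1) R) (geo m R) :=
  ⟨1, -(R * (R + 1) * geo m R), by rw [geo_odd]; ring⟩

lemma isCoprime_geo_self {n : ℕ} (hn : n ≠ 0) (R : (ZMod 2)[X]) : IsCoprime (geo n R) R := by
  obtain ⟨n, rfl⟩ := Nat.exists_eq_succ_of_ne_zero hn
  exact ⟨1, - geo n R, by rw [Nat.succ_eq_add_one, geo_succ]; ring⟩

lemma isCoprime_geo_add_one {n : ℕ} (hn : Odd n) (R : (ZMod 2)[X]) :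
    IsCoprime (geo n R) (R + 1) := by
  obtain ⟨m, rfl⟩ := hn
  exact ⟨1, -(R * geo m R ^ 2), by rw [geo_odd]; ring⟩

/-- In characteristic two every derivative over `F₂` is a perfect square. -/
lemma derivative_eq_sq (f : (ZMod 2)[X]) : ∃ g, derivative f = g ^ 2 := by
  induction f using Polynomial.induction_on' with
  | add p q hp hq =>
    obtain ⟨g, hg⟩ := hp
    obtain ⟨h, hh⟩ := hq
    exact ⟨g + h, by rw [derivative_add, hg, hh, CharTwo.add_sq]⟩
  | monomial n a =>
    rw [derivative_monomial]
    rcases Nat.even_or_odd' n with ⟨m, rfl | rfl⟩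
    · refine ⟨0, ?_⟩
      have : ((2 * m : ℕ) : ZMod 2) = 0 := by
        push_cast
        have : (2 : ZMod 2) = 0 := by decide
        rw [this, zero_mul]
      rw [this]; simp
    · refine ⟨monomial m a, ?_⟩
      have h1 : ((2 * m + 1 : ℕ) : ZMod 2) = 1 := by
        push_cast
        have : (2 : ZMod 2) = 0 := by decide
        rw [this]; simp
      have h2 : a * a = a := by revert a; decide
      have h3 : 2 * m + 1 - 1 = m + m := by omega
      rw [h1, sq, monomial_mul_monomial, h2, mul_one, h3]

lemma derivative_ne_zero {P : (ZMod 2)[X]} (hP : Irreducible P) : derivative P ≠ 0 := by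
  intro h
  have := PerfectField.separable_of_irreducible hP
  rw [Polynomial.Separable, h, isCoprime_zero_right] at this
  exact hP.not_isUnit this

/-- With `n = 2 m + 1`, the derivative of `geo n P` is `P' * geo m P ^ 2`, and `geo n P` is coprime to
`geo m P`; so a repeated factor of `geo n P` divides `P'`. -/
lemma pow_dvd_derivative {P Q : (ZMod 2)[X]} {k n : ℕ} (hn : Odd n)
    (h : Q ^ (k + 1) ∣ geo n P) : Q ^ k ∣ derivative P := by
  obtain ⟨m, rfl⟩ := hn
  rcases Nat.eq_zero_or_pos k with rfl | hk
  · simp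
  have h1 : Q ^ k ∣ derivative P * geo m P ^ 2 := by
    rw [← derivative_geo_odd]
    simpa using Polynomial.pow_sub_one_dvd_derivative_of_pow_dvd h
  have h2 : IsCoprime (Q ^ k) (geo m P ^ 2) :=
    ((isCoprime_geo_odd_half m P).of_isCoprime_of_dvd_left
      ((dvd_pow_self Q (Nat.succ_ne_zero k)).trans h)).pow
  exact h2.dvd_of_dvd_mul_right h1

lemma natDegree_derivative_lt' {P : (ZMod 2)[X]} (hP : Irreducible P) :
    (derivative P).natDegree + 1 ≤ P.natDegree :=
  natDegree_derivative_lt hP.natDegree_pos.ne'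

lemma degree_of_pow_dvd {P Q : (ZMod 2)[X]} (hP : Irreducible P) {k n : ℕ}
    (hn : Odd n) (h : Q ^ (k + 1) ∣ geo n P) : k * Q.natDegree + 1 ≤ P.natDegree := by
  have h1 := natDegree_le_of_dvd (pow_dvd_derivative hn h) (derivative_ne_zero hP)
  rw [natDegree_pow] at h1
  have := natDegree_derivative_lt' hP
  omega

/-- A square factor `Q²` of `1 + P + ⋯ + P ^ (2 m)` divides `P'`, which is itself a square. -/
lemma degree_of_sq_dvd {P Q : (ZMod 2)[X]} (hP : Irreducible P) (hQ : Irreducible Q) {n : ℕ}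
    (hn : Odd n) (h : Q ^ 2 ∣ geo n P) : 2 * Q.natDegree + 1 ≤ P.natDegree := by
  obtain ⟨g, hg⟩ := derivative_eq_sq P
  have h0 := pow_dvd_derivative (k := 1) hn h
  rw [pow_one, hg] at h0
  have h1 : Q ^ 2 ∣ derivative P := by
    rw [hg]; exact pow_dvd_pow_of_dvd (hQ.prime.dvd_of_dvd_pow h0) 2
  have h2 := natDegree_le_of_dvd h1 (derivative_ne_zero hP)
  rw [natDegree_pow] at h2
  have := natDegree_derivative_lt' hP
  omega

lemma natDegree_add_one (R : (ZMod 2)[X]) : (R + 1).natDegree = R.natDegree := by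
  simpa using natDegree_add_C (p := R) (a := (1 : ZMod 2))

lemma natDegree_geo {n : ℕ} (hn : n ≠ 0) {R : (ZMod 2)[X]} (hR : 0 < R.natDegree) :
    (geo n R).natDegree = (n - 1) * R.natDegree := by
  have h := congrArg natDegree (geo_mul n R)
  rw [natDegree_add_one, natDegree_pow, natDegree_mul, natDegree_add_one] at h
  · obtain ⟨n, rfl⟩ := Nat.exists_eq_succ_of_ne_zero hn
    rw [Nat.succ_eq_add_one, add_mul] at h
    simp; omega
  · intro h0
    rw [h0, zero_mul] at h
    have := natDegree_add_one (R ^ n)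
    rw [← geo_mul, h0, natDegree_pow] at this
    simp at this; omega
  · intro h0
    have := natDegree_add_one R
    rw [h0] at this; simp at this; omega

/-! ### Divisibility by prime powers -/

lemma dvd_mul_pow_cases {D U P : (ZMod 2)[X]} (hP : Irreducible P) {n : ℕ} (h : D ∣ U * P ^ n) :
    ∃ D' k, D = D' * P ^ k ∧ D' ∣ U ∧ k ≤ n := by
  obtain ⟨d₁, d₂, h1, h2, rfl⟩ := exists_dvd_and_dvd_of_dvd_mul h
  obtain ⟨k, hk, hd⟩ := (dvd_prime_pow hP.prime n).1 h2
  exact ⟨d₁, k, by rw [eq_of_associated hd], h1, hk⟩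

lemma not_dvd_pow {P Q : (ZMod 2)[X]} (hP : Irreducible P) (hQ : Irreducible Q) (h : P ≠ Q) (n : ℕ) :
    ¬ P ∣ Q ^ n := fun hd => h (eq_of_dvd_irr hP hQ (hP.prime.dvd_of_dvd_pow hd))

lemma not_dvd_mul {P U V : (ZMod 2)[X]} (hP : Irreducible P) (hU : ¬ P ∣ U) (hV : ¬ P ∣ V) :
    ¬ P ∣ U * V := fun h => (hP.prime.dvd_or_dvd h).elim hU hV

lemma exp_eq {P U V : (ZMod 2)[X]} (hP : Irreducible P) (hU : ¬ P ∣ U) (hV : ¬ P ∣ V) {a b : ℕ}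
    (h : P ^ a * U = P ^ b * V) : a = b := by
  have h1 := emultiplicity_mul hP.prime (a := P ^ a) (b := U)
  have h2 := emultiplicity_mul hP.prime (a := P ^ b) (b := V)
  rw [emultiplicity_pow_self_of_prime hP.prime, emultiplicity_eq_zero.2 hU] at h1
  rw [emultiplicity_pow_self_of_prime hP.prime, emultiplicity_eq_zero.2 hV] at h2
  rw [h, h2] at h1
  simpa using h1.symm

lemma not_dvd_geo_self {P : (ZMod 2)[X]} (hP : Irreducible P) {n : ℕ} (hn : n ≠ 0) :
    ¬ P ∣ geo n P := fun h =>
  hP.not_isUnit ((isCoprime_geo_self hn P).isUnit_of_dvd' h dvd_rfl)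

/-! ### The asymptotic expansion of `σ(A)` -/

/-- `Expansion p σ A E` says that, for large `x`, `σ = A + E + O(A / x ^ (2 p))` with
`E = O(A / x ^ p)`. -/
def Expansion (p : ℕ) (σ A E : (ZMod 2)[X]) : Prop :=
  degree (E * X ^ p) ≤ degree A ∧ degree ((σ + A + E) * X ^ (2 * p)) ≤ degree A

lemma degree_mul_le_mul {F G A B : (ZMod 2)[X]} (h1 : degree F ≤ degree A)
    (h2 : degree G ≤ degree B) : degree (F * G) ≤ degree (A * B) := by
  rw [degree_mul, degree_mul]; exact add_le_add h1 h2

lemma degree_le_of_mul_X_pow {F A : (ZMod 2)[X]} {n : ℕ} (h : degree (F * X ^ n) ≤ degree A) :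
    degree F ≤ degree A := by
  refine le_trans ?_ h
  rw [degree_mul, degree_X_pow]
  exact le_add_of_nonneg_right (by exact_mod_cast Nat.zero_le n)

/-- The first-order terms obey the Leibniz rule. -/
lemma Expansion.mul {p : ℕ} {σ A E σ' A' E' : (ZMod 2)[X]} (h : Expansion p σ A E)
    (h' : Expansion p σ' A' E') : Expansion p (σ * σ') (A * A') (A * E' + E * A') := by
  obtain ⟨h1, h2⟩ := h
  obtain ⟨h1', h2'⟩ := h'
  have g1 := degree_le_of_mul_X_pow h1
  have g2 := degree_le_of_mul_X_pow h2
  have gk := degree_le_of_mul_X_pow h1'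
  have g2' := degree_le_of_mul_X_pow h2'
  constructor
  · rw [add_mul]
    refine (degree_add_le _ _).trans (max_le ?_ ?_)
    · rw [mul_assoc]; exact degree_mul_le_mul le_rfl h1'
    · rw [mul_right_comm]; exact degree_mul_le_mul h1 le_rfl
  · have key : (σ * σ' + A * A' + (A * E' + E * A')) * X ^ (2 * p) =
        (E * X ^ p) * (E' * X ^ p) + (A + E + (σ + A + E)) * ((σ' + A' + E') * X ^ (2 * p)) +
        ((σ + A + E) * X ^ (2 * p)) * (A' + E') := by
      linear_combination (- X ^ (2 * p) * (σ * E' + σ * A' + σ' * A + σ' * E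
        + 2 * A * A' + 3 * A * E' + 3 * E * A' + 3 * E * E') + X ^ (2 * p) *
          (A * A' + 2 * A * E' + 2 * E * A' + E * E')) * two_eq_zero
    rw [key]
    refine (degree_add_le _ _).trans (max_le ((degree_add_le _ _).trans (max_le ?_ ?_)) ?_)
    · exact degree_mul_le_mul h1 h1'
    · exact degree_mul_le_mul ((degree_add_le _ _).trans
        (max_le ((degree_add_le _ _).trans (max_le le_rfl g1)) g2)) h2'
    · exact degree_mul_le_mul h2 ((degree_add_le _ _).trans (max_le le_rfl gk))

/-- For `N = n + 2`, the sum `σ(P ^ N) = P ^ N + P ^ (N - 1) + P ^ (N - 2) + ⋯` has relative error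
`O(P ^ (-2))` after two terms. -/
lemma expansion_geo {P : (ZMod 2)[X]} (hP : Irreducible P) {p : ℕ} (hp : p ≤ P.natDegree) (n : ℕ) :
    Expansion p (geo (n + 3) P) (P ^ (n + 2)) (P ^ (n + 1)) := by
  have hP0 := hP.ne_zero
  constructor
  · rw [pow_succ P (n + 1)]
    refine degree_mul_le_mul le_rfl ?_
    rw [degree_X_pow, degree_eq_natDegree hP0]; exact_mod_cast hp
  · have : geo (n + 3) P + P ^ (n + 2) + P ^ (n + 1) = geo (n + 1) P := by
      rw [geo_succ' (n + 2), geo_succ' (n + 1)]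
      linear_combination (P ^ (n + 2) + P ^ (n + 1)) * two_eq_zero
    rw [this, pow_add]
    refine degree_mul_le_mul ?_ ?_
    · refine degree_le_of_natDegree_le ?_ |>.trans_eq (degree_eq_natDegree (pow_ne_zero n hP0)).symm
      rw [natDegree_geo (Nat.succ_ne_zero n) hP.natDegree_pos, natDegree_pow]; simp
    · rw [degree_X_pow, degree_pow, degree_eq_natDegree hP0]
      have : 2 * p ≤ 2 * P.natDegree := by omega
      rw [nsmul_eq_mul]
      exact_mod_cast this

/-- If `σ(A) = A`, the second-order term of the expansion must be small. -/
lemma Expansion.bound {p : ℕ} {A U V W E : (ZMod 2)[X]} (h : Expansion p A A E) (hE : E = U * W)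
    (hA : A = U * V) (hA0 : A ≠ 0) (hW : W ≠ 0) : W.natDegree + 2 * p ≤ V.natDegree := by
  have hU : U ≠ 0 := by rintro rfl; simp at hA; exact hA0 hA
  have hV : V ≠ 0 := by rintro rfl; simp at hA; exact hA0 hA
  have h2 := h.2
  rw [CharTwo.add_self_eq_zero, zero_add, hE, hA] at h2
  have h3 := natDegree_le_natDegree h2
  rw [natDegree_mul (mul_ne_zero hU hW) (pow_ne_zero _ X_ne_zero), natDegree_mul hU hW,
    natDegree_mul hU hV, natDegree_X_pow] at h3
  omega

lemma natDegree_add_left {F G : (ZMod 2)[X]} (h : G.natDegree < F.natDegree) :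
    (F + G).natDegree = F.natDegree := natDegree_add_eq_left_of_natDegree_lt h

lemma natDegree_add_lt {P Q : (ZMod 2)[X]} (hP : 0 < P.natDegree)
    (h : P.natDegree = Q.natDegree) : (P + Q).natDegree < P.natDegree := by
  have hP0 : P ≠ 0 := by rintro rfl; simp at hP
  have hQ0 : Q ≠ 0 := by rintro rfl; simp at h; omega
  have hlead : ∀ F : (ZMod 2)[X], F ≠ 0 → F.leadingCoeff = 1 := by
    intro F hF
    have := leadingCoeff_ne_zero.2 hF
    revert this; generalize F.leadingCoeff = c; revert c; decide
  by_cases h0 : P + Q = 0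
  · rw [h0]; simpa using hP
  have := degree_sub_lt_left (p := P) (q := Q)
    (by rw [degree_eq_natDegree hP0, degree_eq_natDegree hQ0, h]) hP0
    (by rw [hlead P hP0, hlead Q hQ0])
  rw [CharTwo.sub_eq_add] at this
  exact natDegree_lt_natDegree h0 this

lemma natDegree_add_pos {P Q : (ZMod 2)[X]} (hP : eval 0 P = 1) (hQ : eval 0 Q = 1) (h : P ≠ Q) :
    0 < (P + Q).natDegree := by
  by_contra h0
  have h0 : (P + Q).natDegree = 0 := by omega
  obtain ⟨c, hc⟩ := natDegree_eq_zero.1 h0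
  have := congrArg (eval 0) hc
  rw [eval_C, eval_add, hP, hQ] at this
  have h2 : (1 + 1 : ZMod 2) = 0 := by decide
  rw [h2] at this
  rw [this, C_0] at hc
  exact h (add_eq_zero_iff.1 hc.symm)

lemma ne_zero_of_natDegree {F : (ZMod 2)[X]} (h : 0 < F.natDegree) : F ≠ 0 := by
  rintro rfl; simp at h

/-! ### Polynomials all of whose exponents are even -/

lemma odd_one {P : (ZMod 2)[X]} (hP : Irreducible P) {n : ℕ}
    (h : geo (n + 3) P = P ^ (n + 2)) : False := by
  have := not_dvd_geo_self hP (n := n + 3) (by omega)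
  rw [h] at this
  exact this (dvd_pow_self _ (by omega))

/-- The first-order term of the expansion is `A (1 / P + 1 / Q)`, whose numerator `P + Q` is too large in
degree for `σ(A) = A` whether or not `P` and `Q` have the same degree. -/
lemma odd_two {P Q : (ZMod 2)[X]} (hP : Irreducible P) (hQ : Irreducible Q) (hPQ : P ≠ Q)
    (eP : eval 0 P = 1) (eQ : eval 0 Q = 1) (hpq : P.natDegree ≤ Q.natDegree) {a b : ℕ}
    (h : geo (a + 3) P * geo (b + 3) Q = P ^ (a + 2) * Q ^ (b + 2)) : False := by
  have hE := (expansion_geo hP le_rfl a).mul (expansion_geo hQ hpq b)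
  rw [h] at hE
  have hpos := natDegree_add_pos eP eQ hPQ
  have := hE.bound (U := P ^ (a + 1) * Q ^ (b + 1)) (V := P * Q) (W := P + Q) (by ring) (by ring)
    (mul_ne_zero (pow_ne_zero _ hP.ne_zero) (pow_ne_zero _ hQ.ne_zero)) (ne_zero_of_natDegree hpos)
  rw [natDegree_mul hP.ne_zero hQ.ne_zero] at this
  rcases hpq.lt_or_eq with hlt | heq
  · rw [add_comm P Q, natDegree_add_left hlt] at this
    have := hP.natDegree_pos
    omega
  · omega

/-- Three-prime case: `σ(P ^ n)`, `n` even, is a product of powers of the other primes, and an exponent at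
least two forces `P` to have large degree. -/
lemma row_three {P Q R : (ZMod 2)[X]} (hP : Irreducible P) (hQ : Irreducible Q)
    (hR : Irreducible R) {n a b c : ℕ} (hn : Even n)
    (h : geo (n + 1) P ∣ Q ^ b * R ^ c * P ^ a) :
    ∃ i j, geo (n + 1) P = Q ^ i * R ^ j ∧ n * P.natDegree = i * Q.natDegree + j * R.natDegree ∧
      (2 ≤ i → 2 * Q.natDegree + 1 ≤ P.natDegree) ∧
      (2 ≤ j → 2 * R.natDegree + 1 ≤ P.natDegree) := by
  obtain ⟨D₁, k, h1, hd, -⟩ := dvd_mul_pow_cases hP h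
  have hk : k = 0 := by
    by_contra hk
    exact not_dvd_geo_self hP (n := n + 1) (by omega) (h1 ▸ (dvd_pow_self P hk).mul_left D₁)
  subst hk
  rw [pow_zero, mul_one] at h1
  obtain ⟨D₂, j, h2, hd, -⟩ := dvd_mul_pow_cases hR hd
  obtain ⟨i, -, h3⟩ := (dvd_prime_pow hQ.prime _).1 hd
  have h3 := eq_of_associated h3
  subst h3; subst h2
  refine ⟨i, j, h1, ?_, fun h => ?_, fun h => ?_⟩
  · have := natDegree_geo (n := n + 1) (by omega) hP.natDegree_pos
    rw [h1, natDegree_mul (pow_ne_zero _ hQ.ne_zero) (pow_ne_zero _ hR.ne_zero), natDegree_pow,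
      natDegree_pow] at this
    simpa using this.symm
  · exact degree_of_sq_dvd hP hQ hn.add_one (h1 ▸ (pow_dvd_pow Q h).mul_right _)
  · exact degree_of_sq_dvd hP hR hn.add_one (h1 ▸ (pow_dvd_pow R h).mul_left _)

/-- The analogue of `row_three` for four primes. -/
lemma row_four {P Q R S : (ZMod 2)[X]} (hP : Irreducible P) (hQ : Irreducible Q)
    (hR : Irreducible R) (hS : Irreducible S) {n a b c d : ℕ} (hn : Even n)
    (h : geo (n + 1) P ∣ Q ^ b * R ^ c * S ^ d * P ^ a) :
    ∃ i j k, geo (n + 1) P = Q ^ i * R ^ j * S ^ k ∧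
      n * P.natDegree = i * Q.natDegree + j * R.natDegree + k * S.natDegree ∧
      (2 ≤ i → 2 * Q.natDegree + 1 ≤ P.natDegree) ∧
      (2 ≤ j → 2 * R.natDegree + 1 ≤ P.natDegree) ∧
      (2 ≤ k → 2 * S.natDegree + 1 ≤ P.natDegree) := by
  obtain ⟨D₁, k', h1, hd, -⟩ := dvd_mul_pow_cases hP h
  have hk : k' = 0 := by
    by_contra hk
    exact not_dvd_geo_self hP (n := n + 1) (by omega) (h1 ▸ (dvd_pow_self P hk).mul_left D₁)
  subst hk
  rw [pow_zero, mul_one] at h1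
  obtain ⟨D₂, k, h2, hd, -⟩ := dvd_mul_pow_cases hS hd
  obtain ⟨D₃, j, h2', hd, -⟩ := dvd_mul_pow_cases hR hd
  obtain ⟨i, -, h3⟩ := (dvd_prime_pow hQ.prime _).1 hd
  have h3 := eq_of_associated h3
  subst h3; subst h2'; subst h2
  refine ⟨i, j, k, h1, ?_, fun h => ?_, fun h => ?_, fun h => ?_⟩
  · have := natDegree_geo (n := n + 1) (by omega) hP.natDegree_pos
    rw [h1, natDegree_mul (mul_ne_zero (pow_ne_zero _ hQ.ne_zero) (pow_ne_zero _ hR.ne_zero))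
      (pow_ne_zero _ hS.ne_zero), natDegree_mul (pow_ne_zero _ hQ.ne_zero)
      (pow_ne_zero _ hR.ne_zero), natDegree_pow, natDegree_pow, natDegree_pow] at this
    simpa using this.symm
  · exact degree_of_sq_dvd hP hQ hn.add_one (h1 ▸ ((pow_dvd_pow Q h).mul_right _).mul_right _)
  · exact degree_of_sq_dvd hP hR hn.add_one (h1 ▸ ((pow_dvd_pow R h).mul_left _).mul_right _)
  · exact degree_of_sq_dvd hP hS hn.add_one (h1 ▸ (pow_dvd_pow S h).mul_left _)

/-- No perfect polynomial has exactly three primes and all exponents even when the two primes of smallest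
degree take the value `1` at `0`. -/
lemma odd_three {P Q R : (ZMod 2)[X]} (hP : Irreducible P) (hQ : Irreducible Q)
    (hR : Irreducible R) (hPQ : P ≠ Q) (hPR : P ≠ R) (hQR : Q ≠ R)
    (eP : eval 0 P = 1) (eQ : eval 0 Q = 1)
    (hpq : P.natDegree ≤ Q.natDegree) (hqr : Q.natDegree ≤ R.natDegree) {a b c : ℕ}
    (ha : Even a) (hb : Even b) (hc : Even c)
    (h : geo (a + 3) P * geo (b + 3) Q * geo (c + 3) R =
      P ^ (a + 2) * Q ^ (b + 2) * R ^ (c + 2)) : False := by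
  have hE := ((expansion_geo hP le_rfl a).mul (expansion_geo hQ hpq b)).mul
    (expansion_geo hR (hpq.trans hqr) c)
  rw [h] at hE
  have hP0 := hP.ne_zero
  have hQ0 := hQ.ne_zero
  have hR0 := hR.ne_zero
  have hPd := hP.natDegree_pos
  have hA : P ^ (a + 2) * Q ^ (b + 2) * R ^ (c + 2) ≠ 0 :=
    mul_ne_zero (mul_ne_zero (pow_ne_zero _ hP0) (pow_ne_zero _ hQ0)) (pow_ne_zero _ hR0)
  have bound : P * Q + R * (P + Q) ≠ 0 →
      (P * Q + R * (P + Q)).natDegree + P.natDegree ≤ Q.natDegree + R.natDegree := by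
    intro h0
    have := hE.bound (U := P ^ (a + 1) * Q ^ (b + 1) * R ^ (c + 1)) (V := P * Q * R)
      (W := P * Q + R * (P + Q)) (by ring) (by ring) hA h0
    rw [natDegree_mul (mul_ne_zero hP0 hQ0) hR0, natDegree_mul hP0 hQ0] at this
    omega
  have hpos := natDegree_add_pos eP eQ hPQ
  have d1 : (P * Q).natDegree = P.natDegree + Q.natDegree := natDegree_mul hP0 hQ0
  have d2 : (R * (P + Q)).natDegree = R.natDegree + (P + Q).natDegree :=
    natDegree_mul hR0 (ne_zero_of_natDegree hpos)
  have hpq' : P.natDegree = Q.natDegree := by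
    by_contra hne
    have hlt : P.natDegree < Q.natDegree := by omega
    have d3 : (P + Q).natDegree = Q.natDegree := by rw [add_comm, natDegree_add_left hlt]
    have d4 : (P * Q + R * (P + Q)).natDegree = R.natDegree + Q.natDegree := by
      rw [add_comm, natDegree_add_left (by omega)]; omega
    have := bound (ne_zero_of_natDegree (by omega))
    omega
  have hr : R.natDegree < 2 * P.natDegree := by
    by_contra hge
    have d4 : (P * Q + R * (P + Q)).natDegree = R.natDegree + (P + Q).natDegree := by
      rw [add_comm, natDegree_add_left (by omega)]; omega
    have := bound (ne_zero_of_natDegree (by omega))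
    omega
  obtain ⟨i₁, j₁, rP, dP, b1, b2⟩ := row_three (n := a + 2) (a := a + 2) (b := b + 2) (c := c + 2)
    hP hQ hR (by simpa [parity_simps] using ha) (by
      rw [show Q ^ (b + 2) * R ^ (c + 2) * P ^ (a + 2) = P ^ (a + 2) * Q ^ (b + 2) * R ^ (c + 2) by
        ring, ← h]
      exact ⟨geo (b + 3) Q * geo (c + 3) R, by ring⟩)
  obtain ⟨i₂, j₂, rQ, dQ, b3, b4⟩ := row_three (n := b + 2) (a := b + 2) (b := a + 2) (c := c + 2)
    hQ hP hR (by simpa [parity_simps] using hb) (by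
      rw [show P ^ (a + 2) * R ^ (c + 2) * Q ^ (b + 2) = P ^ (a + 2) * Q ^ (b + 2) * R ^ (c + 2) by
        ring, ← h]
      exact ⟨geo (a + 3) P * geo (c + 3) R, by ring⟩)
  obtain ⟨i₃, j₃, rR, dR, b5, b6⟩ := row_three (n := c + 2) (a := c + 2) (b := a + 2) (c := b + 2)
    hR hP hQ (by simpa [parity_simps] using hc) (by
      rw [show P ^ (a + 2) * Q ^ (b + 2) * R ^ (c + 2) = P ^ (a + 2) * Q ^ (b + 2) * R ^ (c + 2) by
        ring, ← h]
      exact ⟨geo (a + 3) P * geo (b + 3) Q, by ring⟩)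
  have colR : c + 2 = j₁ + j₂ := by
    refine exp_eq hR (U := P ^ (a + 2) * Q ^ (b + 2)) (V := Q ^ i₁ * P ^ i₂ * (P ^ i₃ * Q ^ j₃))
      ?_ ?_ ?_
    · exact not_dvd_mul hR (not_dvd_pow hR hP hPR.symm _) (not_dvd_pow hR hQ hQR.symm _)
    · exact not_dvd_mul hR
        (not_dvd_mul hR (not_dvd_pow hR hQ hQR.symm _) (not_dvd_pow hR hP hPR.symm _))
        (not_dvd_mul hR (not_dvd_pow hR hP hPR.symm _) (not_dvd_pow hR hQ hQR.symm _))
    · rw [rP, rQ, rR] at h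
      linear_combination - h
  have hj1 : j₁ = 1 := by omega
  have hj2 : j₂ = 1 := by omega
  have hc0 : c = 0 := by omega
  subst hc0
  have hr' : R.natDegree = P.natDegree := by
    have : i₃ ≤ 1 := by by_contra hh; have := b5 (by omega); omega
    have : j₃ ≤ 1 := by by_contra hh; have := b6 (by omega); omega
    interval_cases i₃ <;> interval_cases j₃ <;> omega
  have hlt := natDegree_add_lt hPd hpq'
  have d4 : (P * Q + R * (P + Q)).natDegree = P.natDegree + Q.natDegree := by
    rw [natDegree_add_left (by omega)]; omega
  have := bound (ne_zero_of_natDegree (by omega))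
  omega

/-- If `σ(P²) = σ(S²)` then `(P + S)(P + S + 1) = 0`, impossible for distinct primes with value `1`
at `0`. -/
lemma twin_absurd {P S W : (ZMod 2)[X]} (hne : P ≠ S) (eP : eval 0 P = 1) (eS : eval 0 S = 1)
    (h1 : geo 3 P = W) (h2 : geo 3 S = W) : False := by
  have e : ∀ R : (ZMod 2)[X], geo 3 R = 1 + R + R ^ 2 := by
    intro R; simp [geo, Finset.sum_range_succ]
  rw [e] at h1 h2
  have h0 : (P + S) * (P + S + 1) = 0 := by
    linear_combination h1 - h2 + (P * S + S + S ^ 2) * two_eq_zero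
  rcases mul_eq_zero.1 h0 with h | h
  · exact hne (add_eq_zero_iff.1 h)
  · have := congrArg (eval 0) h
    simp only [eval_add, eP, eS, eval_one, eval_zero] at this
    revert this; decide

lemma geo_three (R : (ZMod 2)[X]) : geo 3 R = 1 + R + R ^ 2 := by
  simp [geo, Finset.sum_range_succ]

/-- If `σ(P²) = QR` then `QR ≡ 1 mod P`, hence `Q` is a primitive cube root of unity modulo `P`
only if `R` is. -/
lemma dvd_geo_three_of_dvd {P Q R : (ZMod 2)[X]} (h : geo 3 P = Q * R) (hd : P ∣ geo 3 Q) :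
    P ∣ geo 3 R := by
  have h1 : P ∣ Q * R - 1 := ⟨1 + P, by rw [← h, geo_three]; ring⟩
  have h2 : geo 3 R = R ^ 2 * geo 3 Q - (Q * R - 1) * (R + Q * R + 1) := by
    rw [geo_three, geo_three]; ring
  rw [h2]
  exact dvd_sub (hd.mul_left _) (h1.mul_right _)

/-- The case of four primes of equal degree with all exponents two and `σ(P²) = Q R`. By
`dvd_geo_three_of_dvd`, `P` divides both or neither of `σ(Q²)` and `σ(R²)`; as it divides
`σ(Q²) σ(R²) σ(S²)` exactly twice, it cannot divide `σ(S²)`. Hence `σ(S²) = Q R` as well, against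
`twin_absurd`. -/
lemma equal_degree_endgame {P Q R S U V : (ZMod 2)[X]} (hPS : P ≠ S)
    (eP : eval 0 P = 1) (eS : eval 0 S = 1) (hU : ¬ P ∣ U) (hV : ¬ P ∣ V) {i₂ i₃ i₄ j₄ k₄ : ℕ}
    (rP : geo 3 P = Q * R) (rQ : geo 3 Q = P ^ i₂ * U) (rR : geo 3 R = P ^ i₃ * V)
    (rS : geo 3 S = P ^ i₄ * Q ^ j₄ * R ^ k₄)
    (h3 : i₃ ≤ 1) (hi : i₄ ≤ 1) (hj : j₄ ≤ 1) (hk : k₄ ≤ 1)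
    (hrow : i₄ + j₄ + k₄ = 2) (hcol : i₂ + i₃ + i₄ = 2) : False := by
  have h4 : i₄ = 0 := by
    by_contra h4
    by_cases h : i₂ = 0
    · have h3 : i₃ ≠ 0 := by omega
      have := dvd_geo_three_of_dvd (by rw [rP, mul_comm]) (rR ▸ (dvd_pow_self P h3).mul_right V)
      rw [rQ, h, pow_zero, one_mul] at this
      exact hU this
    · have := dvd_geo_three_of_dvd rP (rQ ▸ (dvd_pow_self P h).mul_right U)
      rw [rR, show i₃ = 0 by omega, pow_zero, one_mul] at this
      exact hV this
  have hj4 : j₄ = 1 := by omega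
  have hk4 : k₄ = 1 := by omega
  rw [h4, hj4, hk4, pow_zero, one_mul, pow_one, pow_one] at rS
  exact twin_absurd hPS eP eS rP rS

lemma row_total {n i j k : ℕ} (h : n + n + 2 = i + j + k) (hi : i ≤ 1) (hj : j ≤ 1)
    (hk : k ≤ 1) : n = 0 := by omega

lemma row_cases {i j k : ℕ} (h : 0 + 0 + 2 = i + j + k) (hi : i ≤ 1) (hj : j ≤ 1) (hk : k ≤ 1) :
    (k = 0 ∧ i = 1 ∧ j = 1) ∨ (j = 0 ∧ i = 1 ∧ k = 1) ∨ (i = 0 ∧ j = 1 ∧ k = 1) := by omega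

/-- The four-prime analogue of `odd_three`. -/
lemma odd_four {P Q R S : (ZMod 2)[X]} (hP : Irreducible P) (hQ : Irreducible Q)
    (hR : Irreducible R) (hS : Irreducible S) (hPQ : P ≠ Q) (hPR : P ≠ R) (hPS : P ≠ S)
    (hQR : Q ≠ R) (hQS : Q ≠ S) (hRS : R ≠ S)
    (eP : eval 0 P = 1) (eQ : eval 0 Q = 1) (eR : eval 0 R = 1) (eS : eval 0 S = 1)
    (hpq : P.natDegree ≤ Q.natDegree) (hqr : Q.natDegree ≤ R.natDegree)
    (hrs : R.natDegree ≤ S.natDegree) {a b c d : ℕ}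
    (ha : Even a) (hb : Even b) (hc : Even c) (hd : Even d)
    (h : geo (a + 3) P * geo (b + 3) Q * geo (c + 3) R * geo (d + 3) S =
      P ^ (a + 2) * Q ^ (b + 2) * R ^ (c + 2) * S ^ (d + 2)) : False := by
  have hE := (((expansion_geo hP le_rfl a).mul (expansion_geo hQ hpq b)).mul
    (expansion_geo hR (hpq.trans hqr) c)).mul (expansion_geo hS (hpq.trans (hqr.trans hrs)) d)
  rw [h] at hE
  have hP0 := hP.ne_zero
  have hQ0 := hQ.ne_zero
  have hR0 := hR.ne_zero
  have hS0 := hS.ne_zero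
  have hPd := hP.natDegree_pos
  have hA : P ^ (a + 2) * Q ^ (b + 2) * R ^ (c + 2) * S ^ (d + 2) ≠ 0 :=
    mul_ne_zero (mul_ne_zero (mul_ne_zero (pow_ne_zero _ hP0) (pow_ne_zero _ hQ0))
      (pow_ne_zero _ hR0)) (pow_ne_zero _ hS0)
  have bound : R * S * (P + Q) + P * Q * (R + S) ≠ 0 →
      (R * S * (P + Q) + P * Q * (R + S)).natDegree + P.natDegree ≤
        Q.natDegree + R.natDegree + S.natDegree := by
    intro h0
    have := hE.bound (U := P ^ (a + 1) * Q ^ (b + 1) * R ^ (c + 1) * S ^ (d + 1))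
      (V := P * Q * R * S) (W := R * S * (P + Q) + P * Q * (R + S)) (by ring) (by ring) hA h0
    rw [natDegree_mul (mul_ne_zero (mul_ne_zero hP0 hQ0) hR0) hS0,
      natDegree_mul (mul_ne_zero hP0 hQ0) hR0, natDegree_mul hP0 hQ0] at this
    omega
  have hpos := natDegree_add_pos eP eQ hPQ
  have hpos' := natDegree_add_pos eR eS hRS
  have d1 : (P * Q * (R + S)).natDegree = P.natDegree + Q.natDegree + (R + S).natDegree := by
    rw [natDegree_mul (mul_ne_zero hP0 hQ0) (ne_zero_of_natDegree hpos'), natDegree_mul hP0 hQ0]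
  have d2 : (R * S * (P + Q)).natDegree = R.natDegree + S.natDegree + (P + Q).natDegree := by
    rw [natDegree_mul (mul_ne_zero hR0 hS0) (ne_zero_of_natDegree hpos), natDegree_mul hR0 hS0]
  have d3 : (R + S).natDegree ≤ S.natDegree :=
    (natDegree_add_le _ _).trans (max_le hrs le_rfl)
  -- The number of primes of minimal degree is even, so `P` and `Q` have the same degree.
  have hpq' : P.natDegree = Q.natDegree := by
    by_contra hne
    have hlt : P.natDegree < Q.natDegree := by omega
    have d3 : (P + Q).natDegree = Q.natDegree := by rw [add_comm, natDegree_add_left hlt]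
    have d4 : (R * S * (P + Q) + P * Q * (R + S)).natDegree = (R * S * (P + Q)).natDegree :=
      natDegree_add_left (by omega)
    have := bound (ne_zero_of_natDegree (by omega))
    omega
  have hr : R.natDegree < 2 * P.natDegree := by
    by_contra hge
    have d4 : (R * S * (P + Q) + P * Q * (R + S)).natDegree = (R * S * (P + Q)).natDegree :=
      natDegree_add_left (by omega)
    have := bound (ne_zero_of_natDegree (by omega))
    omega
  have hs : R.natDegree = P.natDegree → S.natDegree = P.natDegree := by
    intro hrp
    by_contra hne
    have hlt : R.natDegree < S.natDegree := by omega
    have := natDegree_add_lt hPd hpq'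
    have d3 : (R + S).natDegree = S.natDegree := by rw [add_comm, natDegree_add_left hlt]
    have d4 : (R * S * (P + Q) + P * Q * (R + S)).natDegree = (P * Q * (R + S)).natDegree := by
      rw [add_comm]; exact natDegree_add_left (by omega)
    have := bound (ne_zero_of_natDegree (by omega))
    omega
  obtain ⟨i₁, j₁, k₁, rP, dP, b1, b2, b3⟩ := row_four (n := a + 2) (a := a + 2) (b := b + 2)
    (c := c + 2) (d := d + 2) hP hQ hR hS (by simpa [parity_simps] using ha)
    ⟨geo (b + 3) Q * geo (c + 3) R * geo (d + 3) S, by linear_combination - h⟩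
  obtain ⟨i₂, j₂, k₂, rQ, dQ, b4, b5, b6⟩ := row_four (n := b + 2) (a := b + 2) (b := a + 2)
    (c := c + 2) (d := d + 2) hQ hP hR hS (by simpa [parity_simps] using hb)
    ⟨geo (a + 3) P * geo (c + 3) R * geo (d + 3) S, by linear_combination - h⟩
  obtain ⟨i₃, j₃, k₃, rR, dR, b7, b8, b9⟩ := row_four (n := c + 2) (a := c + 2) (b := a + 2)
    (c := b + 2) (d := d + 2) hR hP hQ hS (by simpa [parity_simps] using hc)
    ⟨geo (a + 3) P * geo (b + 3) Q * geo (d + 3) S, by linear_combination - h⟩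
  obtain ⟨i₄, j₄, k₄, rS, dS, b10, b11, b12⟩ := row_four (n := d + 2) (a := d + 2) (b := a + 2)
    (c := b + 2) (d := c + 2) hS hP hQ hR (by simpa [parity_simps] using hd)
    ⟨geo (a + 3) P * geo (b + 3) Q * geo (c + 3) R, by linear_combination - h⟩
  have nd3 : ∀ {T U V W : (ZMod 2)[X]}, Irreducible T → Irreducible U → Irreducible V →
      Irreducible W → T ≠ U → T ≠ V → T ≠ W → ∀ i j k : ℕ, ¬ T ∣ U ^ i * V ^ j * W ^ k :=
    fun hT hU hV hW h1 h2 h3 i j k => not_dvd_mul hT (not_dvd_mul hT (not_dvd_pow hT hU h1 _)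
      (not_dvd_pow hT hV h2 _)) (not_dvd_pow hT hW h3 _)
  rw [rP, rQ, rR, rS] at h
  have colP : a + 2 = i₂ + i₃ + i₄ :=
    exp_eq hP (nd3 hP hQ hR hS hPQ hPR hPS (b + 2) (c + 2) (d + 2))
      (nd3 hP hQ hR hS hPQ hPR hPS (i₁ + j₃ + j₄) (j₁ + j₂ + k₄) (k₁ + k₂ + k₃))
      (by linear_combination - h)
  have colQ : b + 2 = i₁ + j₃ + j₄ :=
    exp_eq hQ (nd3 hQ hP hR hS hPQ.symm hQR hQS (a + 2) (c + 2) (d + 2))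
      (nd3 hQ hP hR hS hPQ.symm hQR hQS (i₂ + i₃ + i₄) (j₁ + j₂ + k₄) (k₁ + k₂ + k₃))
      (by linear_combination - h)
  have colR : c + 2 = j₁ + j₂ + k₄ :=
    exp_eq hR (nd3 hR hP hQ hS hPR.symm hQR.symm hRS (a + 2) (b + 2) (d + 2))
      (nd3 hR hP hQ hS hPR.symm hQR.symm hRS (i₂ + i₃ + i₄) (i₁ + j₃ + j₄) (k₁ + k₂ + k₃))
      (by linear_combination - h)
  have colS : d + 2 = k₁ + k₂ + k₃ :=
    exp_eq hS (nd3 hS hP hQ hR hPS.symm hQS.symm hRS.symm (a + 2) (b + 2) (c + 2))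
      (nd3 hS hP hQ hR hPS.symm hQS.symm hRS.symm (i₂ + i₃ + i₄) (i₁ + j₃ + j₄) (j₁ + j₂ + k₄))
      (by linear_combination - h)
  obtain ⟨a', rfl⟩ := ha
  obtain ⟨b', rfl⟩ := hb
  obtain ⟨c', rfl⟩ := hc
  obtain ⟨d', rfl⟩ := hd
  have hi1 : i₁ ≤ 1 := by by_contra hh; have := b1 (by omega); omega
  have hj1 : j₁ ≤ 1 := by by_contra hh; have := b2 (by omega); omega
  have hk1 : k₁ ≤ 1 := by by_contra hh; have := b3 (by omega); omega
  have hi2 : i₂ ≤ 1 := by by_contra hh; have := b4 (by omega); omega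
  have hj2 : j₂ ≤ 1 := by by_contra hh; have := b5 (by omega); omega
  have hk2 : k₂ ≤ 1 := by by_contra hh; have := b6 (by omega); omega
  have hi3 : i₃ ≤ 1 := by by_contra hh; have := b7 (by omega); omega
  have hj3 : j₃ ≤ 1 := by by_contra hh; have := b8 (by omega); omega
  have hk3 : k₃ ≤ 1 := by by_contra hh; have := b9 (by omega); omega
  -- `S` is missing from one of the other three rows, which is then too short.
  have step : ∀ {n i j p r : ℕ}, 0 < p → p ≤ r → r < 2 * p → i ≤ 1 → j ≤ 1 →
      (n + n + 2) * p = i * p + j * r → r = p := by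
    intro n i j p r hp h1 h2 hi hj heq
    have : (n + n + 2) * p = 2 * (n * p) + 2 * p := by ring
    have hn : n = 0 ∨ p ≤ n * p := by
      rcases Nat.eq_zero_or_pos n with h | h
      · exact Or.inl h
      · exact Or.inr (Nat.le_mul_of_pos_left _ h)
    interval_cases i <;> interval_cases j <;> rcases hn with rfl | hn <;> omega
  have hrp : R.natDegree = P.natDegree := by
    have hk : k₁ = 0 ∨ k₂ = 0 ∨ k₃ = 0 := by omega
    rcases hk with rfl | rfl | rfl
    · exact step hPd (hpq.trans hqr) hr hi1 hj1 (by rw [dP, hpq']; ring)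
    · exact step hPd (hpq.trans hqr) hr hi2 hj2 (by rw [← hpq'] at dQ; rw [dQ]; ring)
    · rw [← hpq'] at dR
      have h1 : 2 * R.natDegree ≤ (c' + c' + 2) * R.natDegree := Nat.mul_le_mul_right _ (by omega)
      interval_cases i₃ <;> interval_cases j₃ <;> omega
  have hsp := hs hrp
  rw [hrp, hsp, ← hpq'] at dP dQ dR
  rw [hrp, hsp, ← hpq'] at dS
  have hi4 : i₄ ≤ 1 := by by_contra hh; have := b10 (by omega); omega
  have hj4 : j₄ ≤ 1 := by by_contra hh; have := b11 (by omega); omega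
  have hk4 : k₄ ≤ 1 := by by_contra hh; have := b12 (by omega); omega
  have row : ∀ {n i j k : ℕ}, (n + n + 2) * P.natDegree =
      i * P.natDegree + j * P.natDegree + k * P.natDegree → n + n + 2 = i + j + k := by
    intro n i j k hh
    rw [← add_mul, ← add_mul] at hh
    exact Nat.eq_of_mul_eq_mul_right hPd hh
  have r1 := row dP
  have r2 := row dQ
  have r3 := row dR
  have r4 := row dS
  clear b1 b2 b3 b4 b5 b6 b7 b8 b9 b10 b11 b12 dP dQ dR dS row step bound hs hrp hsp hr hpq' d1 d2 d3
    hpos hpos' hpq hqr hrs hPd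
  have ha0 : a' = 0 := row_total r1 hi1 hj1 hk1
  have hb0 : b' = 0 := row_total r2 hi2 hj2 hk2
  have hc0 : c' = 0 := row_total r3 hi3 hj3 hk3
  have hd0 : d' = 0 := row_total r4 hi4 hj4 hk4
  subst ha0 hb0 hc0 hd0
  have nd2 : ∀ {T U V : (ZMod 2)[X]}, Irreducible T → Irreducible U → Irreducible V →
      T ≠ U → T ≠ V → ∀ i j : ℕ, ¬ T ∣ U ^ i * V ^ j :=
    fun hT hU hV h1 h2 i j => not_dvd_mul hT (not_dvd_pow hT hU h1 _) (not_dvd_pow hT hV h2 _)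
  norm_num at rP rQ rR rS
  have e1 : i₂ + i₃ + i₄ = 2 := colP.symm
  have e4 : i₄ + j₄ + k₄ = 2 := r4.symm
  rcases row_cases r1 hi1 hj1 hk1 with ⟨hk, hi, hj⟩ | ⟨hk, hi, hj⟩ | ⟨hk, hi, hj⟩
  · refine equal_degree_endgame (Q := Q) (R := R) hPS eP eS
      (nd2 hP hR hS hPR hPS j₂ k₂) (nd2 hP hQ hS hPQ hPS j₃ k₃) ?_ (by rw [rQ]; ring)
      (by rw [rR]; ring) rS hi3 hi4 hj4 hk4 e4 e1
    rw [rP, hk, hi, hj]; ring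
  · refine equal_degree_endgame (Q := Q) (R := S) hPR eP eR
      (nd2 hP hR hS hPR hPS j₂ k₂) (nd2 hP hQ hR hPQ hPR j₄ k₄) ?_ (by rw [rQ]; ring)
      (by rw [rS]; ring) rR hi4 hi3 hj3 hk3 r3.symm (by rw [← e1]; ring)
    rw [rP, hk, hi, hj]; ring
  · refine equal_degree_endgame (Q := R) (R := S) hPQ eP eQ
      (nd2 hP hQ hS hPQ hPS j₃ k₃) (nd2 hP hQ hR hPQ hPR j₄ k₄) ?_ (by rw [rR]; ring)
      (by rw [rS]; ring) rQ hi4 hi2 hj2 hk2 r2.symm (by rw [← e1]; ring)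
    rw [rP, hk, hi, hj]; ring

/-! ### A perfect polynomial is divisible by `X` and `X + 1` -/

lemma zmod_two_cases (a : ZMod 2) : a = 0 ∨ a = 1 := by
  revert a; decide

lemma eval_geo_of_one {P : (ZMod 2)[X]} {c : ZMod 2} (h : eval c P = 1) (n : ℕ) :
    eval c (geo n P) = n := by
  simp [geo, eval_finsetSum, h]

lemma eval_geo_of_zero {P : (ZMod 2)[X]} {c : ZMod 2} (h : eval c P = 0) (n : ℕ) :
    eval c (geo (n + 1) P) = 1 := by
  rw [geo_succ]; simp [h]

lemma eval_eq_one_of_ne {P : (ZMod 2)[X]} (hP : Irreducible P) {c : ZMod 2}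
    (h : P ≠ X - C c) : eval c P = 1 := by
  rcases zmod_two_cases (eval c P) with h0 | h0
  · exact absurd (eq_of_dvd_irr (irreducible_X_sub_C c) hP (dvd_iff_isRoot.2 h0)).symm h
  · exact h0

/-- If no prime of `A` vanishes at `c`, then `σ(A)(c) = 1` makes each exponent even. -/
lemma even_of_not_mem {s : Finset (ZMod 2)[X]} {N : (ZMod 2)[X] → ℕ}
    (hs : ∀ P ∈ s, Irreducible P) (h : ∏ P ∈ s, geo (N P + 1) P = ∏ P ∈ s, P ^ N P)
    {c : ZMod 2} (hc : X - C c ∉ s) : ∀ P ∈ s, Even (N P) := by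
  have h1 : ∀ P ∈ s, eval c P = 1 := fun P hP =>
    eval_eq_one_of_ne (hs P hP) (fun e => hc (e ▸ hP))
  have h2 : ∏ P ∈ s, eval c (geo (N P + 1) P) = 1 := by
    rw [← eval_prod, h, eval_prod]
    exact Finset.prod_eq_one fun P hP => by rw [eval_pow, h1 P hP, one_pow]
  intro P hP
  have h3 : eval c (geo (N P + 1) P) ≠ 0 := by
    intro h0
    rw [Finset.prod_eq_zero hP h0] at h2
    exact zero_ne_one h2
  rw [eval_geo_of_one (h1 P hP)] at h3
  by_contra hodd
  rw [Nat.not_even_iff_odd] at hodd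
  exact h3 ((ZMod.natCast_eq_zero_iff_even).2 hodd.add_one)

/-- If one linear polynomial is not among the primes, all exponents are even, so `σ(A)` takes the value `1`
at both points and `A` has no linear factor at all. -/
lemma not_mem_of_not_mem {s : Finset (ZMod 2)[X]} {N : (ZMod 2)[X] → ℕ}
    (hs : ∀ P ∈ s, Irreducible P) (hN : ∀ P ∈ s, 1 ≤ N P)
    (h : ∏ P ∈ s, geo (N P + 1) P = ∏ P ∈ s, P ^ N P)
    {c : ZMod 2} (hc : X - C c ∉ s) (c' : ZMod 2) : X - C c' ∉ s := by
  intro hmem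
  have he := even_of_not_mem hs h hc
  have h2 : ∏ P ∈ s, eval c' (geo (N P + 1) P) = 1 := by
    refine Finset.prod_eq_one fun P hP => ?_
    rcases zmod_two_cases (eval c' P) with h0 | h0
    · exact eval_geo_of_zero h0 _
    · rw [eval_geo_of_one h0]
      have := (ZMod.natCast_eq_zero_iff_even).2 (he P hP)
      push_cast
      rw [this, zero_add]
  rw [← eval_prod, h, eval_prod, Finset.prod_eq_zero hmem] at h2
  · exact zero_ne_one h2
  · have := hN _ hmem
    rw [eval_pow, eval_sub, eval_X, eval_C, sub_self, zero_pow (by omega)]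

lemma exists_min_degree {s : Finset (ZMod 2)[X]} {n : ℕ} (h : s.card = n + 1) :
    ∃ P t, P ∉ t ∧ s = insert P t ∧ t.card = n ∧ ∀ Q ∈ t, P.natDegree ≤ Q.natDegree := by
  obtain ⟨P, hP, hmin⟩ := s.exists_min_image natDegree (Finset.card_pos.1 (by omega))
  refine ⟨P, s.erase P, Finset.notMem_erase _ _, (Finset.insert_erase hP).symm, ?_,
    fun Q hQ => hmin Q (Finset.mem_of_mem_erase hQ)⟩
  rw [Finset.card_erase_of_mem hP, h, Nat.add_sub_cancel]

/-- A perfect polynomial with at most four prime factors has a root, hence both roots. -/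
lemma mem_of_perfect {s : Finset (ZMod 2)[X]} {N : (ZMod 2)[X] → ℕ}
    (hs : ∀ P ∈ s, Irreducible P) (hN : ∀ P ∈ s, 1 ≤ N P)
    (h : ∏ P ∈ s, geo (N P + 1) P = ∏ P ∈ s, P ^ N P) (h1 : 1 ≤ s.card) (h4 : s.card ≤ 4)
    (c : ZMod 2) : X - C c ∈ s := by
  by_contra hc
  have he := even_of_not_mem hs h hc
  have h0 := not_mem_of_not_mem hs hN h hc 0
  have ev : ∀ P ∈ s, eval 0 P = 1 := fun P hP => eval_eq_one_of_ne (hs P hP) (fun e => h0 (e ▸ hP))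
  clear hc h0
  have ex : ∀ P ∈ s, ∃ n, N P = n + 2 ∧ Even n := by
    intro P hP
    have h1 := hN P hP
    obtain ⟨k, hk⟩ := he P hP
    exact ⟨N P - 2, by omega, k - 1, by omega⟩
  obtain ⟨n, hn⟩ : ∃ n, s.card = n + 1 := ⟨s.card - 1, by omega⟩
  obtain ⟨P, t, hPt, rfl, ht, hPm⟩ := exists_min_degree hn
  rw [Finset.prod_insert hPt, Finset.prod_insert hPt] at h
  simp only [Finset.forall_mem_insert] at hs ev ex
  obtain ⟨hP, hs⟩ := hs
  obtain ⟨eP, ev⟩ := ev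
  obtain ⟨⟨a, hNa, ha⟩, ex⟩ := ex
  rw [hNa] at h
  rcases n with _ | n
  · rw [Finset.card_eq_zero.1 ht] at h
    simp only [Finset.prod_empty, mul_one] at h
    exact odd_one hP h
  obtain ⟨Q, t, hQt, rfl, ht, hQm⟩ := exists_min_degree ht
  rw [Finset.prod_insert hQt, Finset.prod_insert hQt] at h
  simp only [Finset.forall_mem_insert] at hs ev ex hPm
  obtain ⟨hQ, hs⟩ := hs
  obtain ⟨eQ, ev⟩ := ev
  obtain ⟨⟨b, hNb, hb⟩, ex⟩ := ex
  obtain ⟨dPQ, hPm⟩ := hPm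
  simp only [Finset.mem_insert, not_or] at hPt
  obtain ⟨hPQ, hPt⟩ := hPt
  rw [hNb] at h
  rcases n with _ | n
  · rw [Finset.card_eq_zero.1 ht] at h
    simp only [Finset.prod_empty, mul_one] at h
    exact odd_two hP hQ hPQ eP eQ dPQ h
  obtain ⟨R, t, hRt, rfl, ht, hRm⟩ := exists_min_degree ht
  rw [Finset.prod_insert hRt, Finset.prod_insert hRt] at h
  simp only [Finset.forall_mem_insert] at hs ev ex hPm hQm
  obtain ⟨hR, hs⟩ := hs
  obtain ⟨eR, ev⟩ := ev
  obtain ⟨⟨c, hNc, hc⟩, ex⟩ := ex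
  obtain ⟨dQR, hQm⟩ := hQm
  simp only [Finset.mem_insert, not_or] at hPt hQt
  obtain ⟨hPR, hPt⟩ := hPt
  obtain ⟨hQR, hQt⟩ := hQt
  rw [hNc] at h
  rcases n with _ | n
  · rw [Finset.card_eq_zero.1 ht] at h
    simp only [Finset.prod_empty, mul_one] at h
    exact odd_three hP hQ hR hPQ hPR hQR eP eQ dPQ dQR ha hb hc (by linear_combination h)
  obtain ⟨S, t, hSt, rfl, ht, -⟩ := exists_min_degree ht
  rw [Finset.prod_insert hSt, Finset.prod_insert hSt] at h
  simp only [Finset.forall_mem_insert] at hs ev ex hRm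
  obtain ⟨hS, -⟩ := hs
  obtain ⟨eS, -⟩ := ev
  obtain ⟨⟨d, hNd, hd⟩, -⟩ := ex
  obtain ⟨dRS, -⟩ := hRm
  simp only [Finset.mem_insert, not_or] at hPt hQt hRt
  rw [hNd] at h
  have : t = ∅ := Finset.card_eq_zero.1 (by omega)
  rw [this] at h
  simp only [Finset.prod_empty, mul_one] at h
  exact odd_four hP hQ hR hS hPQ hPR hPt.1 hQR hQt.1 hRt.1 eP eQ eR eS dPQ dQR dRS ha hb hc hd
    (by linear_combination h)

/-! ### The two linear primes -/

/-- `Lin x y` says that `x` and `y` are the two polynomials `X`, `X + 1` of degree one, in either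
order. Arguments about this pair are thereby symmetric in `x` and `y`. -/
def Lin (x y : (ZMod 2)[X]) : Prop := ∃ c : ZMod 2, x = X - C c ∧ y = X - C (c + 1)

section Lin
variable {x y : (ZMod 2)[X]}

lemma Lin.symm (h : Lin x y) : Lin y x := by
  obtain ⟨c, rfl, rfl⟩ := h
  exact ⟨c + 1, rfl, by rw [show c + 1 + 1 = c by revert c; decide]⟩

lemma Lin.eq_add_one (h : Lin x y) : y = x + 1 := by
  obtain ⟨c, rfl, rfl⟩ := h
  rw [C_add, C_1]; linear_combination - two_eq_zero

lemma Lin.eq_add_one' (h : Lin x y) : x = y + 1 := h.symm.eq_add_one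

lemma Lin.irr (h : Lin x y) : Irreducible x := by
  obtain ⟨c, rfl, -⟩ := h
  exact irreducible_X_sub_C c

lemma Lin.irr' (h : Lin x y) : Irreducible y := h.symm.irr

lemma Lin.deg (h : Lin x y) : x.natDegree = 1 := by
  obtain ⟨c, rfl, -⟩ := h
  exact natDegree_X_sub_C c

lemma Lin.deg' (h : Lin x y) : y.natDegree = 1 := h.symm.deg

lemma Lin.ne (h : Lin x y) : x ≠ y := by
  rw [h.eq_add_one]; simp

lemma Lin.isCoprime (h : Lin x y) : IsCoprime x y :=
  ⟨-1, 1, by rw [h.eq_add_one]; ring⟩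

lemma Lin.dvd_add_one (h : Lin x y) {P : (ZMod 2)[X]} (hP : Irreducible P) (hx : P ≠ x) :
    x ∣ P + 1 := by
  obtain ⟨c, rfl, -⟩ := h
  rw [dvd_iff_isRoot, IsRoot.def, eval_add, eval_one, eval_eq_one_of_ne hP hx]
  decide

lemma Lin.not_dvd_geo (h : Lin x y) {n : ℕ} (hn : n ≠ 0) : ¬ x ∣ geo n x :=
  not_dvd_geo_self h.irr hn

lemma Lin.not_dvd_geo' (h : Lin x y) {n : ℕ} (hn : Odd n) : ¬ y ∣ geo n x := fun hd =>
  h.irr'.not_isUnit ((isCoprime_geo_add_one hn x).isUnit_of_dvd' hd (by rw [h.eq_add_one]))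

lemma Lin.natDegree_geo (h : Lin x y) {n : ℕ} (hn : n ≠ 0) : (geo n x).natDegree = n - 1 := by
  rw [F2Perfect.natDegree_geo hn (by rw [h.deg]; exact one_pos), h.deg, mul_one]

lemma Lin.eq_one_of_geo_eq_one (h : Lin x y) {n : ℕ} (hn : Odd n) (h1 : geo n x = 1) : n = 1 := by
  have := h.natDegree_geo hn.pos.ne'
  rw [h1, natDegree_one] at this
  have := hn.pos
  omega

/-- If `1 + x + ⋯ + x ^ (m - 1)` is a power of `y`, then `m` is a power of two. -/
lemma Lin.two_pow_of_geo_eq (h : Lin x y) {m t : ℕ} (hm : m ≠ 0) (hd : geo m x = y ^ t) :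
    ∃ k, m = 2 ^ k := by
  obtain ⟨k, n, hn, rfl⟩ := Nat.exists_eq_two_pow_mul_odd hm
  refine ⟨k, ?_⟩
  have h1 : geo n x ∣ y ^ t := by
    rw [← hd]; exact geo_dvd_geo (Dvd.intro_left _ rfl) x
  obtain ⟨i, -, hi⟩ := (dvd_prime_pow h.irr'.prime t).1 h1
  have hi := eq_of_associated hi
  have : i = 0 := by
    by_contra h0
    exact h.not_dvd_geo' hn (hi ▸ dvd_pow_self y h0)
  rw [this, pow_zero] at hi
  rw [h.eq_one_of_geo_eq_one hn hi, mul_one]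

/-- Irreducible divisors of `1 + x + ⋯ + x ^ (2 ^ T)`: `x` has order dividing `2 ^ T + 1` modulo
such a `P`, so `x ^ (2 ^ (2 T)) ≡ x`. -/
lemma Lin.natDegree_dvd (h : Lin x y) {P : (ZMod 2)[X]} (hP : Irreducible P) {T : ℕ}
    (hd : P ∣ geo (2 ^ T + 1) x) : P.natDegree ∣ 2 * T := by
  apply hP.natDegree_dvd_of_dvd_X_pow_card_pow_sub_X
  have h0 : 2 ^ T + 1 ∣ 2 ^ (2 * T) - 1 :=
    ⟨2 ^ T - 1, by rw [mul_comm 2 T, pow_mul]; simpa using Nat.sq_sub_sq (2 ^ T) 1⟩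
  have h1 : P ∣ x ^ (2 ^ (2 * T)) + x := by
    have h2 := geo_mul (2 ^ (2 * T) - 1) x
    have h3 : x ^ (2 ^ (2 * T)) + x = x * (x ^ (2 ^ (2 * T) - 1) + 1) := by
      rw [mul_add, ← pow_succ', Nat.sub_add_cancel Nat.one_le_two_pow, mul_one]
    rw [h3, ← h2]
    exact ((hd.trans (geo_dvd_geo h0 x)).mul_right _).mul_left _
  obtain ⟨c, rfl, -⟩ := h
  rw [sub_pow_char_pow] at h1
  convert h1 using 1
  have : c ^ (2 ^ (2 * T)) = c := by
    rcases zmod_two_cases c with rfl | rfl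
    · exact zero_pow (by positivity)
    · exact one_pow _
  rw [← C_pow, this, Nat.card_zmod]
  linear_combination (C c - X) * two_eq_zero

lemma two_mul_lt_two_pow {T : ℕ} (h : 3 ≤ T) : 2 * T < 2 ^ T := by
  induction T, h using Nat.le_induction with
  | base => norm_num
  | succ n hn ih => rw [pow_succ]; omega

/-- If `P = 1 + x + ⋯ + x ^ (u - 1)` is irreducible and `P + 1 = x ^ i y ^ j` splits, then
`u = 2 ^ T + 1`, and comparing `deg P = 2 ^ T` with the order of `x` leaves `u = 3, 5`. -/
lemma Lin.geo_irreducible (h : Lin x y) {u i j : ℕ} (hu : Odd u) (hP : Irreducible (geo u x))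
    (hs : geo u x + 1 = x ^ i * y ^ j) : u = 3 ∨ u = 5 := by
  obtain ⟨m, rfl⟩ := hu
  have hm : m ≠ 0 := by
    rintro rfl
    rw [mul_zero, zero_add, geo_one] at hP
    exact not_irreducible_one hP
  have h1 : geo m x ∣ y ^ j * x ^ i := by
    rw [mul_comm, ← hs, geo_odd_add_one]
    exact (dvd_pow_self _ two_ne_zero).mul_left _
  obtain ⟨D, k, hD, hDy, -⟩ := dvd_mul_pow_cases h.irr h1
  obtain ⟨t, -, ht⟩ := (dvd_prime_pow h.irr'.prime j).1 hDy
  rw [eq_of_associated ht] at hD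
  have hk : k = 0 := by
    by_contra h0
    exact h.not_dvd_geo hm (hD ▸ (dvd_pow_self x h0).mul_left _)
  rw [hk, pow_zero, mul_one] at hD
  obtain ⟨k, rfl⟩ := h.two_pow_of_geo_eq hm hD
  rw [← pow_succ'] at hP ⊢
  have h2 := h.natDegree_dvd hP dvd_rfl
  rw [h.natDegree_geo (by positivity), Nat.add_sub_cancel] at h2
  have h3 := Nat.le_of_dvd (by omega) h2
  have h4 : k < 2 := by
    by_contra h4
    have := two_mul_lt_two_pow (T := k + 1) (by omega)
    omega
  interval_cases k <;> simp

end Lin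

/-! ### Pairs of primes with product `1 + x + ⋯ + x ^ (u - 1)` -/

lemma coeff_geo_X (u n : ℕ) : coeff (geo u (X : (ZMod 2)[X])) n = if n < u then 1 else 0 := by
  simp [geo, finsetSum_coeff, coeff_X_pow]

lemma lin_zero : Lin X (X + 1) := ⟨0, by simp, by simp; linear_combination two_eq_zero⟩

lemma reverse_geo (u : ℕ) : reverse (geo u (X : (ZMod 2)[X])) = geo u X := by
  rcases Nat.eq_zero_or_pos u with rfl | hu
  · simp [geo_zero]
  ext n
  rw [coeff_reverse, lin_zero.natDegree_geo hu.ne', coeff_geo_X, coeff_geo_X]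
  by_cases hn : n ≤ u - 1
  · rw [revAt_le hn, if_pos (by omega), if_pos (by omega)]
  · rw [revAt_eq_self_of_lt (by omega)]

lemma reflect_X_add_one_pow (j : ℕ) : reflect j ((X + 1 : (ZMod 2)[X]) ^ j) = (X + 1) ^ j := by
  have hd : (X + 1 : (ZMod 2)[X]).natDegree = 1 := lin_zero.deg'
  induction j with
  | zero => simp [reflect_one]
  | succ j ih =>
    rw [pow_succ, reflect_mul _ _ (by rw [natDegree_pow, hd, mul_one]) hd.le, ih, reflect_add,
      reflect_one_X, reflect_one, pow_one, add_comm 1]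

lemma natDegree_of_add_one {P : (ZMod 2)[X]} {i j : ℕ} (h : P + 1 = X ^ i * (X + 1) ^ j) :
    P.natDegree = i + j := by
  rw [← natDegree_add_one, h, natDegree_mul (pow_ne_zero _ X_ne_zero)
    (pow_ne_zero _ lin_zero.irr'.ne_zero), natDegree_pow, natDegree_pow, natDegree_X, lin_zero.deg']
  ring

lemma reverse_of_add_one {P : (ZMod 2)[X]} {i j : ℕ} (h : P + 1 = X ^ i * (X + 1) ^ j) :
    reverse P = X ^ (i + j) + (X + 1) ^ j := by
  have hP : P = 1 + X ^ i * (X + 1) ^ j := by rw [← h]; linear_combination - two_eq_zero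
  rw [reverse, natDegree_of_add_one h, hP, reflect_add, reflect_one,
    reflect_mul _ _ (natDegree_X_pow i).le (by rw [natDegree_pow, lin_zero.deg', mul_one]),
    reflect_monomial, revAt_le le_rfl, Nat.sub_self, pow_zero, one_mul, reflect_X_add_one_pow]

lemma natCast_mul_zero_pow (n : ℕ) : (n : ZMod 2) * 0 ^ (n - 1) = if n = 1 then 1 else 0 := by
  rcases n with _ | _ | n <;> simp

/-- Values at `0` and `1` of the derivative of the identity `x ^ p + y ^ j = 1 + x ^ k y ^ l`. -/
lemma derivative_values {p j k l : ℕ} (hp : 2 ≤ p) (hk : 1 ≤ k) (hl : 1 ≤ l)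
    (h : (X : (ZMod 2)[X]) ^ p + (X + 1) ^ j = 1 + X ^ k * (X + 1) ^ l) :
    ((j : ZMod 2) = if k = 1 then 1 else 0) ∧
      (p : ZMod 2) + (if j = 1 then 1 else 0) = if l = 1 then 1 else 0 := by
  have h2 : (1 + 1 : ZMod 2) = 0 := by decide
  have hd := congrArg derivative h
  simp only [derivative_add, derivative_mul, derivative_pow, derivative_one, derivative_X,
    map_natCast] at hd
  have e0 := congrArg (eval 0) hd
  have e1 := congrArg (eval 1) hd
  simp [h2] at e0 e1
  rw [zero_pow (show p - 1 ≠ 0 by omega), zero_pow (show k ≠ 0 by omega), mul_zero, zero_mul,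
    zero_add, add_zero, natCast_mul_zero_pow] at e0
  rw [zero_pow (show l ≠ 0 by omega), mul_zero, zero_add, natCast_mul_zero_pow,
    natCast_mul_zero_pow] at e1
  exact ⟨e0, e1⟩

lemma eq_of_dvd_of_natDegree_le {P Q : (ZMod 2)[X]} (h : P ∣ Q) (hQ : Q ≠ 0)
    (hd : Q.natDegree ≤ P.natDegree) : P = Q := by
  obtain ⟨C, rfl⟩ := h
  have hC : C ≠ 0 := right_ne_zero_of_mul hQ
  rw [natDegree_mul (left_ne_zero_of_mul hQ) hC] at hd
  have hC1 : C = 1 := eq_one_of_isUnit (isUnit_iff_degree_eq_zero.2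
    (by rw [degree_eq_natDegree hC, show C.natDegree = 0 by omega]; rfl))
  rw [hC1, mul_one]

/-- `1 + x + ⋯ + x ^ (u - 1)` is self-reciprocal, so reversal permutes its prime factors. -/
lemma reverse_cases {P Q : (ZMod 2)[X]} (hP : Irreducible P) (hQ : Irreducible Q)
    {u : ℕ} (h : P * Q = geo u X) (hd : P.natDegree ≤ Q.natDegree) :
    reverse P = P ∨ (reverse P = Q ∧ reverse Q = P) := by
  have hr : reverse P * reverse Q = P * Q := by
    rw [← reverse_mul_of_domain, h, reverse_geo]
  have rP0 : reverse P ≠ 0 := by rw [Ne, reverse_eq_zero]; exact hP.ne_zero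
  have rQ0 : reverse Q ≠ 0 := by rw [Ne, reverse_eq_zero]; exact hQ.ne_zero
  have dP := reverse_natDegree_le P
  have dQ := reverse_natDegree_le Q
  rcases hQ.prime.dvd_or_dvd (hr ▸ dvd_mul_left Q P : Q ∣ reverse P * reverse Q) with h1 | h1
  · have e1 : Q = reverse P := eq_of_dvd_of_natDegree_le h1 rP0 (by omega)
    refine Or.inr ⟨e1.symm, ?_⟩
    rw [← e1, mul_comm] at hr
    exact mul_right_cancel₀ hQ.ne_zero hr
  · have e1 : Q = reverse Q := eq_of_dvd_of_natDegree_le h1 rQ0 dQ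
    rw [← e1] at hr
    exact Or.inl (mul_right_cancel₀ hQ.ne_zero hr)

/-- Otherwise `P + 1` is a square, so `P' = 0`. -/
lemma not_irr_of_even {P : (ZMod 2)[X]} (hP : Irreducible P) {i j : ℕ}
    (h : P + 1 = X ^ i * (X + 1) ^ j) (hi : Even i) (hj : Even j) : False := by
  obtain ⟨i, rfl⟩ := hi
  obtain ⟨j, rfl⟩ := hj
  apply derivative_ne_zero hP
  have h1 := congrArg derivative h
  rw [show (X : (ZMod 2)[X]) ^ (i + i) * (X + 1) ^ (j + j) = (X ^ i * (X + 1) ^ j) ^ 2 by ring,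
    derivative_add, derivative_one, add_zero, pow_two, derivative_mul] at h1
  rw [h1]
  linear_combination (derivative (X ^ i * (X + 1) ^ j : (ZMod 2)[X])) * X ^ i * (X + 1) ^ j *
    two_eq_zero

lemma natCast_eq_one {n : ℕ} : (n : ZMod 2) = 1 ↔ Odd n := ZMod.natCast_eq_one_iff_odd

lemma natCast_eq_zero {n : ℕ} : (n : ZMod 2) = 0 ↔ Even n := ZMod.natCast_eq_zero_iff_even

/-- Comparing the derivatives of `P` and `reverse P` at `0` and `1` gives parity conditions on `i` and `j`,
from which `P` is of the form `1 + x + ⋯ + x ^ (u - 1)`; then `Lin.geo_irreducible` applies. -/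
lemma self_reciprocal {P : (ZMod 2)[X]} (hP : Irreducible P) {i j : ℕ} (hi : 1 ≤ i) (hj : 1 ≤ j)
    (h : P + 1 = X ^ i * (X + 1) ^ j) (hr : reverse P = P) : P = geo 3 X ∨ P = geo 5 X := by
  have hP1 : P = 1 + X ^ i * (X + 1) ^ j := by rw [← h]; linear_combination - two_eq_zero
  have hr' := hr
  rw [reverse_of_add_one h] at hr
  obtain ⟨h0, h1⟩ := derivative_values (by omega) hi hj (hr.trans hP1)
  rw [add_eq_right, natCast_eq_zero] at h1
  by_cases hi1 : i = 1
  · rw [if_pos hi1, natCast_eq_one] at h0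
    subst hi1
    have h2 : geo (j + 1) X = (X + 1) ^ j := by
      have h3 := geo_mul (j + 1) X
      apply mul_right_cancel₀ lin_zero.irr'.ne_zero
      rw [h3]
      linear_combination hr.trans hP1 + (1 - (X + 1) ^ j) * two_eq_zero
    have h3 : P = geo (j + 2) X := by rw [geo_succ, h2, hP1]; ring
    rw [h3] at h hP
    rcases lin_zero.geo_irreducible (by simpa [parity_simps] using h0) hP h with h4 | h4
    · left; rw [h3, h4]
    · right; rw [h3, h4]
  · rw [if_neg hi1, natCast_eq_zero] at h0
    exact (not_irr_of_even hP h (by simpa [parity_simps, h0] using h1) h0).elim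

/-- The product of `1 + x ^ l y` and `1 + x y ^ l` is `1 + x + ⋯` only if `l = 2`, as seen from the
coefficient of `x ^ 2`. -/
lemma mutual_aux {P Q : (ZMod 2)[X]} {l u : ℕ} (hl : 2 ≤ l)
    (hP : P + 1 = X ^ l * (X + 1) ^ 1) (hQ : Q + 1 = X ^ 1 * (X + 1) ^ l)
    (hr : reverse Q = P) (h : P * Q = geo u X) : P = 1 + X ^ 2 * (X + 1) ∧
      Q = 1 + X * (X + 1) ^ 2 := by
  have hP1 : P = 1 + X ^ l * (X + 1) := by rw [pow_one] at hP; rw [← hP]; linear_combination - two_eq_zero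
  have hQ1 : Q = 1 + X * (X + 1) ^ l := by rw [pow_one] at hQ; rw [← hQ]; linear_combination - two_eq_zero
  by_cases h2 : l = 2
  · rw [hP1, hQ1, h2]; exact ⟨rfl, rfl⟩
  exfalso
  obtain ⟨m, rfl⟩ : ∃ m, l = m + 3 := ⟨l - 3, by omega⟩
  rw [reverse_of_add_one hQ, hP1] at hr
  have hy : (X + 1 : (ZMod 2)[X]) ^ (m + 3) = 1 + X ^ (m + 3) := by
    linear_combination hr
  have h3 : P * Q = 1 + X + X ^ 3 * (X ^ m * (X + (X + 1) * Q)) := by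
    rw [hP1, hQ1, hy]; ring
  have hdeg : u - 1 = (m + 3 + 1) + (1 + (m + 3)) := by
    rw [← lin_zero.natDegree_geo (n := u), ← h, natDegree_mul, natDegree_of_add_one hP,
      natDegree_of_add_one hQ]
    · rintro rfl
      have := natDegree_of_add_one hP
      simp at this
    · rintro rfl
      have := natDegree_of_add_one hQ
      simp at this
    · rintro rfl
      rw [geo_zero, mul_eq_zero] at h
      rcases h with rfl | rfl
      · have := natDegree_of_add_one hP
        simp at this
      · have := natDegree_of_add_one hQ
        simp at this
  have h4 := coeff_geo_X u 2
  rw [← h, h3, if_pos (by omega), coeff_add, coeff_X_pow_mul', if_neg (by norm_num)] at h4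
  simp [coeff_X, coeff_one] at h4

/-- The same parity comparison when reversal exchanges `P` and `Q`: only the two cubics remain. -/
lemma mutual_reciprocal {P Q : (ZMod 2)[X]} (hP : Irreducible P) (hQ : Irreducible Q) (hPQ : P ≠ Q)
    {i j k l u : ℕ} (hi : 1 ≤ i) (hj : 1 ≤ j) (hk : 1 ≤ k) (hl : 1 ≤ l)
    (h1 : P + 1 = X ^ i * (X + 1) ^ j) (h2 : Q + 1 = X ^ k * (X + 1) ^ l) (h : P * Q = geo u X)
    (r1 : reverse P = Q) (r2 : reverse Q = P) :
    (P = 1 + X ^ 2 * (X + 1) ∧ Q = 1 + X * (X + 1) ^ 2) ∨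
      (Q = 1 + X ^ 2 * (X + 1) ∧ P = 1 + X * (X + 1) ^ 2) := by
  have hP1 : P = 1 + X ^ i * (X + 1) ^ j := by rw [← h1]; linear_combination - two_eq_zero
  have hQ1 : Q = 1 + X ^ k * (X + 1) ^ l := by rw [← h2]; linear_combination - two_eq_zero
  have e1 := r1
  have e2 := r2
  rw [reverse_of_add_one h1] at e1
  rw [reverse_of_add_one h2] at e2
  have hdeg : i + j = k + l := by
    have d1 := reverse_natDegree_le P
    have d2 := reverse_natDegree_le Q
    rw [r1, natDegree_of_add_one h1, natDegree_of_add_one h2] at d1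
    rw [r2, natDegree_of_add_one h1, natDegree_of_add_one h2] at d2
    omega
  obtain ⟨a0, a1⟩ := derivative_values (by omega) hk hl (e1.trans hQ1)
  obtain ⟨b0, b1⟩ := derivative_values (by omega) hi hj (e2.trans hP1)
  rw [← hdeg] at b1
  by_cases hp : Even (i + j)
  · exfalso
    by_cases hje : Even j
    · exact not_irr_of_even hP h1 (by simpa [parity_simps, hje] using hp) hje
    · by_cases hle : Even l
      · exact not_irr_of_even hQ h2 (by rw [hdeg] at hp; simpa [parity_simps, hle] using hp) hle
      · rw [natCast_eq_one.2 (Nat.not_even_iff_odd.1 hje)] at a0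
        rw [natCast_eq_one.2 (Nat.not_even_iff_odd.1 hle)] at b0
        have hk1 : k = 1 := by by_contra h0; rw [if_neg h0] at a0; exact one_ne_zero a0
        have hi1 : i = 1 := by by_contra h0; rw [if_neg h0] at b0; exact one_ne_zero b0
        have hjl : j = l := by omega
        exact hPQ (by rw [hP1, hQ1, hk1, hi1, hjl])
  · rw [natCast_eq_one.2 (Nat.not_even_iff_odd.1 hp)] at a1
    rw [Nat.not_even_iff_odd] at hp
    by_cases hj1 : j = 1
    · subst hj1
      rw [Nat.cast_one] at a0
      have hk1 : k = 1 := by by_contra h0; rw [if_neg h0] at a0; exact one_ne_zero a0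
      have hil : i = l := by omega
      subst hk1 hil
      have hi2 : 2 ≤ i := by
        obtain ⟨t, ht⟩ := hp
        omega
      exact Or.inl (mutual_aux hi2 h1 h2 r2 h)
    · rw [if_neg hj1, add_zero] at a1
      have hl1 : l = 1 := by by_contra h0; rw [if_neg h0] at a1; exact one_ne_zero a1
      subst hl1
      rw [Nat.cast_one] at b0
      have hi1 : i = 1 := by by_contra h0; rw [if_neg h0] at b0; exact one_ne_zero b0
      have hjk : k = j := by omega
      subst hi1 hjk
      have hi2 : 2 ≤ k := by omega
      exact Or.inr (mutual_aux hi2 h2 h1 r1 (by rw [mul_comm]; exact h))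

lemma two_primes_X {P Q : (ZMod 2)[X]} (hP : Irreducible P) (hQ : Irreducible Q) (hPQ : P ≠ Q)
    (hd : P.natDegree ≤ Q.natDegree)
    {i j k l e u : ℕ} (hi : 1 ≤ i) (hj : 1 ≤ j) (hk : 1 ≤ k) (hl : 1 ≤ l)
    (h1 : P + 1 = X ^ i * (X + 1) ^ j) (h2 : Q + 1 = X ^ k * (X + 1) ^ l * P ^ e)
    (h : P * Q = geo u X) : P = geo 3 X ∨ P = geo 5 X ∨
      (P = 1 + X ^ 2 * (X + 1) ∧ Q = 1 + X * (X + 1) ^ 2) ∨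
      (Q = 1 + X ^ 2 * (X + 1) ∧ P = 1 + X * (X + 1) ^ 2) := by
  rcases reverse_cases hP hQ h hd with r | ⟨r1, r2⟩
  · rcases self_reciprocal hP hi hj h1 r with h | h
    · exact Or.inl h
    · exact Or.inr (Or.inl h)
  · have he : e = 0 := by
      by_contra he
      have d1 := natDegree_add_one Q
      rw [h2, natDegree_mul (mul_ne_zero (pow_ne_zero _ X_ne_zero)
        (pow_ne_zero _ lin_zero.irr'.ne_zero)) (pow_ne_zero _ hP.ne_zero), natDegree_mul
        (pow_ne_zero _ X_ne_zero) (pow_ne_zero _ lin_zero.irr'.ne_zero), natDegree_pow,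
        natDegree_pow, natDegree_pow, natDegree_X, lin_zero.deg'] at d1
      have d2 := reverse_natDegree_le P
      rw [r1] at d2
      have := Nat.le_mul_of_pos_left P.natDegree (Nat.pos_of_ne_zero he)
      omega
    rw [he, pow_zero, mul_one] at h2
    exact Or.inr (Or.inr (mutual_reciprocal hP hQ hPQ hi hj hk hl h1 h2 h r1 r2))

/-- If `P Q = 1 + x + ⋯ + x ^ (u - 1)`, where `P + 1` splits over `x`, `y` and `Q + 1` over `x`, `y`,
`P`, then `P = geo 3 x`, or `P = geo 5 x`, or `P` and `Q` are the two irreducible cubics. -/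
lemma Lin.two_primes {x y P Q : (ZMod 2)[X]} (hL : Lin x y)
    (hP : Irreducible P) (hQ : Irreducible Q) (hPQ : P ≠ Q) (hd : P.natDegree ≤ Q.natDegree)
    {i j k l e u : ℕ} (hi : 1 ≤ i) (hj : 1 ≤ j) (hk : 1 ≤ k) (hl : 1 ≤ l)
    (h1 : P + 1 = x ^ i * y ^ j) (h2 : Q + 1 = x ^ k * y ^ l * P ^ e)
    (h : P * Q = geo u x) : P = geo 3 x ∨ P = geo 5 x ∨
      (P = 1 + x ^ 2 * y ∧ Q = 1 + x * y ^ 2) ∨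
      (Q = 1 + x ^ 2 * y ∧ P = 1 + x * y ^ 2) := by
  have hy := hL.eq_add_one
  obtain ⟨c, hx, -⟩ := hL
  -- The substitution `X ↦ X + c` sends `x` to `X`.
  set φ := algEquivAevalXAddC c with hφ
  have fx : φ x = X := by simp [hφ, hx]
  have fy : φ y = X + 1 := by rw [hy, map_add, fx, map_one]
  have fd : ∀ F : (ZMod 2)[X], (φ F).natDegree = F.natDegree := fun F => by
    rw [hφ, algEquivAevalXAddC_apply, ← comp_eq_aeval, natDegree_comp, natDegree_X_add_C, mul_one]
  have fg : ∀ n, φ (geo n x) = geo n X := fun n => by simp [geo, fx]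
  have inj : ∀ {F G : (ZMod 2)[X]}, φ F = φ G → F = G := fun h => φ.injective h
  have key := two_primes_X ((MulEquiv.irreducible_iff φ).2 hP) ((MulEquiv.irreducible_iff φ).2 hQ)
    (fun h => hPQ (inj h)) (by rw [fd, fd]; exact hd) hi hj hk hl (e := e) (u := u)
    (by rw [← map_one φ, ← map_add, h1]; simp [fx, fy])
    (by rw [← map_one φ, ← map_add, h2]; simp [fx, fy])
    (by rw [← map_mul, h, fg])
  rcases key with h | h | ⟨h, h'⟩ | ⟨h, h'⟩
  · exact Or.inl (inj (by rw [h, fg]))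
  · exact Or.inr (Or.inl (inj (by rw [h, fg])))
  · exact Or.inr (Or.inr (Or.inl ⟨inj (by rw [h]; simp [fx, fy]), inj (by rw [h']; simp [fx, fy])⟩))
  · exact Or.inr (Or.inr (Or.inr ⟨inj (by rw [h]; simp [fx, fy]), inj (by rw [h']; simp [fx, fy])⟩))

/-! ### Exponent equations for two odd primes -/

/-- Two distinct irreducible polynomials `P`, `Q` other than `x`, `y`, with `deg P ≤ deg Q`. -/
structure OddPair (x y P Q : (ZMod 2)[X]) : Prop where
  lin : Lin x y
  irrP : Irreducible P
  irrQ : Irreducible Q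
  ne : P ≠ Q
  Px : P ≠ x
  Py : P ≠ y
  Qx : Q ≠ x
  Qy : Q ≠ y
  deg : P.natDegree ≤ Q.natDegree

lemma OddPair.symm {x y P Q : (ZMod 2)[X]} (h : OddPair x y P Q) : OddPair y x P Q :=
  ⟨h.lin.symm, h.irrP, h.irrQ, h.ne, h.Py, h.Px, h.Qy, h.Qx, h.deg⟩

section rows
variable {x y P Q : (ZMod 2)[X]} {a b c d : ℕ}

lemma dvd_four (h : OddPair x y P Q) {D : (ZMod 2)[X]} (hD : D ∣ x ^ a * y ^ b * P ^ c * Q ^ d) :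
    ∃ i j e f, D = x ^ i * y ^ j * P ^ e * Q ^ f := by
  obtain ⟨D₁, f, rfl, h1, -⟩ := dvd_mul_pow_cases h.irrQ hD
  obtain ⟨D₂, e, rfl, h2, -⟩ := dvd_mul_pow_cases h.irrP h1
  obtain ⟨D₃, j, rfl, h3, -⟩ := dvd_mul_pow_cases h.lin.irr' h2
  obtain ⟨i, -, hi⟩ := (dvd_prime_pow h.lin.irr.prime a).1 h3
  exact ⟨i, j, e, f, by rw [eq_of_associated hi]⟩

lemma eq_zero_of_not_dvd {x U V D : (ZMod 2)[X]} {i : ℕ} (h : D = U * x ^ i * V) (hx : ¬ x ∣ D) :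
    i = 0 := by
  by_contra h0
  exact hx (h ▸ ((dvd_pow_self x h0).mul_left U).mul_right V)

/-- The odd part `geo u x` of `σ(x ^ (n - 1))` is squarefree, because `x' = 1`, and prime to `x` and `y`. -/
lemma row_x (h : OddPair x y P Q) {n : ℕ} (hn : n ≠ 0)
    (hd : geo n x ∣ x ^ a * y ^ b * P ^ c * Q ^ d) :
    ∃ α u ε η, Odd u ∧ n = 2 ^ α * u ∧ geo u x = P ^ ε * Q ^ η ∧ ε ≤ 1 ∧ η ≤ 1 := by
  obtain ⟨α, u, hu, rfl⟩ := Nat.exists_eq_two_pow_mul_odd hn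
  obtain ⟨i, j, ε, η, he⟩ := dvd_four h ((geo_dvd_geo (Dvd.intro_left _ rfl) x).trans hd)
  have hi : i = 0 := eq_zero_of_not_dvd (U := 1) (V := y ^ j * P ^ ε * Q ^ η) (by rw [he]; ring)
    (h.lin.not_dvd_geo hu.pos.ne')
  have hj : j = 0 := eq_zero_of_not_dvd (U := x ^ i) (V := P ^ ε * Q ^ η) (by rw [he]; ring)
    (h.lin.not_dvd_geo' hu)
  rw [hi, hj, pow_zero, pow_zero, one_mul, one_mul] at he
  refine ⟨α, u, ε, η, hu, rfl, he, ?_, ?_⟩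
  · by_contra h0
    have := degree_of_pow_dvd (k := 1) (Q := P) h.lin.irr hu
      (he ▸ (pow_dvd_pow P (by omega : 1 + 1 ≤ ε)).mul_right _)
    rw [h.lin.deg] at this
    have := h.irrP.natDegree_pos
    omega
  · by_contra h0
    have := degree_of_pow_dvd (k := 1) (Q := Q) h.lin.irr hu
      (he ▸ (pow_dvd_pow Q (by omega : 1 + 1 ≤ η)).mul_left _)
    rw [h.lin.deg] at this
    have := h.irrQ.natDegree_pos
    omega

/-- An odd prime `P` is congruent to `1` modulo `x` and `y`, so these do not divide
`1 + P + ⋯ + P ^ (w - 1)` with `w` odd. -/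
lemma not_dvd_geo_odd (hL : Lin x y) (hP : Irreducible P) (hx : P ≠ x) {w : ℕ} (hw : Odd w) :
    ¬ x ∣ geo w P := fun hd =>
  hL.irr.not_isUnit ((isCoprime_geo_add_one hw P).isUnit_of_dvd' hd (hL.dvd_add_one hP hx))

/-- The odd part of `σ(P ^ (n - 1))` is `1` or `Q`; it cannot contain `Q²` because `deg P ≤ deg Q`. -/
lemma row_P (h : OddPair x y P Q) {n : ℕ} (hn : n ≠ 0)
    (hd : geo n P ∣ x ^ a * y ^ b * P ^ c * Q ^ d) :
    ∃ γ w o, Odd w ∧ n = 2 ^ γ * w ∧ geo w P = Q ^ o ∧ o ≤ 1 := by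
  obtain ⟨γ, w, hw, rfl⟩ := Nat.exists_eq_two_pow_mul_odd hn
  obtain ⟨i, j, e, o, he⟩ := dvd_four h ((geo_dvd_geo (Dvd.intro_left _ rfl) P).trans hd)
  have hi : i = 0 := eq_zero_of_not_dvd (U := 1) (V := y ^ j * P ^ e * Q ^ o) (by rw [he]; ring)
    (not_dvd_geo_odd h.lin h.irrP h.Px hw)
  have hj : j = 0 := eq_zero_of_not_dvd (U := x ^ i) (V := P ^ e * Q ^ o) (by rw [he]; ring)
    (not_dvd_geo_odd h.lin.symm h.irrP h.Py hw)
  have hk : e = 0 := eq_zero_of_not_dvd (U := x ^ i * y ^ j) (V := Q ^ o) (by rw [he])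
    (not_dvd_geo_self h.irrP hw.pos.ne')
  rw [hi, hj, hk, pow_zero, pow_zero, pow_zero, one_mul, one_mul, one_mul] at he
  refine ⟨γ, w, o, hw, rfl, he, ?_⟩
  by_contra h0
  have := degree_of_sq_dvd h.irrP h.irrQ hw (he ▸ pow_dvd_pow Q (by omega : 2 ≤ o))
  have := h.deg
  omega

/-- The odd part of `σ(Q ^ (n - 1))` is trivial, for reasons of degree. -/
lemma row_Q (h : OddPair x y P Q) {n : ℕ} (hn : n ≠ 0)
    (hd : geo n Q ∣ x ^ a * y ^ b * P ^ c * Q ^ d) : ∃ δ, n = 2 ^ δ := by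
  obtain ⟨δ, w, hw, rfl⟩ := Nat.exists_eq_two_pow_mul_odd hn
  obtain ⟨i, j, k, o, he⟩ := dvd_four h ((geo_dvd_geo (Dvd.intro_left _ rfl) Q).trans hd)
  have hi : i = 0 := eq_zero_of_not_dvd (U := 1) (V := y ^ j * P ^ k * Q ^ o) (by rw [he]; ring)
    (not_dvd_geo_odd h.lin h.irrQ h.Qx hw)
  have hj : j = 0 := eq_zero_of_not_dvd (U := x ^ i) (V := P ^ k * Q ^ o) (by rw [he]; ring)
    (not_dvd_geo_odd h.lin.symm h.irrQ h.Qy hw)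
  have ho : o = 0 := eq_zero_of_not_dvd (U := x ^ i * y ^ j * P ^ k) (V := 1) (by rw [he]; ring)
    (not_dvd_geo_self h.irrQ hw.pos.ne')
  rw [hi, hj, ho, pow_zero, pow_zero, pow_zero, one_mul, one_mul, mul_one] at he
  refine ⟨δ, ?_⟩
  have hdeg := natDegree_geo hw.pos.ne' h.irrQ.natDegree_pos
  rw [he, natDegree_pow] at hdeg
  have hp := h.irrP.natDegree_pos
  obtain ⟨m, rfl⟩ := hw
  rcases k with _ | k
  · have : m = 0 := by
      by_contra hm
      have := Nat.le_mul_of_pos_left Q.natDegree (show 0 < 2 * m + 1 - 1 by omega)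
      have := h.irrQ.natDegree_pos
      omega
    rw [this, mul_zero, zero_add, mul_one]
  · have h1 := degree_of_pow_dvd (k := k) (Q := P) h.irrQ ⟨m, rfl⟩ he.symm.dvd
    have h2 : m = 0 := by
      by_contra hm
      have h3 := Nat.mul_le_mul_right Q.natDegree (show 2 ≤ 2 * m + 1 - 1 by omega)
      rw [add_mul, one_mul] at hdeg
      have := h.deg
      omega
    rw [h2, mul_zero, zero_add, mul_one]

/-- All consequences of `σ(A) = A` for `A = x ^ a y ^ b P ^ c Q ^ d` that the classification uses:
the shape of `σ` of each prime power, and a comparison of the exponents of `x`, `y`, `P`, `Q`. -/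
structure Config (x y P Q : (ZMod 2)[X]) (a b c d : ℕ) (α u ε η β v ε' η' γ w o δ i j k l e : ℕ) :
    Prop where
  odd : OddPair x y P Q
  ha : a + 1 = 2 ^ α * u
  hb : b + 1 = 2 ^ β * v
  hc : c + 1 = 2 ^ γ * w
  hd : d + 1 = 2 ^ δ
  hu : Odd u
  hv : Odd v
  hw : Odd w
  gx : geo u x = P ^ ε * Q ^ η
  gy : geo v y = P ^ ε' * Q ^ η'
  gP : geo w P = Q ^ o
  hε : ε ≤ 1
  hη : η ≤ 1
  hε' : ε' ≤ 1
  hη' : η' ≤ 1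
  ho : o ≤ 1
  hδ : 1 ≤ δ
  hi : 1 ≤ i
  hj : 1 ≤ j
  hk : 1 ≤ k
  hl : 1 ≤ l
  P1 : P + 1 = x ^ i * y ^ j
  Q1 : Q + 1 = x ^ k * y ^ l * P ^ e
  ex : a = (2 ^ β - 1) + i * (2 ^ γ - 1) + k * (2 ^ δ - 1)
  ey : b = (2 ^ α - 1) + j * (2 ^ γ - 1) + l * (2 ^ δ - 1)
  eP : c = 2 ^ α * ε + 2 ^ β * ε' + e * (2 ^ δ - 1)
  eQ : d = 2 ^ α * η + 2 ^ β * η' + 2 ^ γ * o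

lemma Config.symm {α u ε η β v ε' η' γ w o δ i j k l e : ℕ}
    (h : Config x y P Q a b c d α u ε η β v ε' η' γ w o δ i j k l e) :
    Config y x P Q b a c d β v ε' η' α u ε η γ w o δ j i l k e where
  odd := h.odd.symm
  ha := h.hb
  hb := h.ha
  hc := h.hc
  hd := h.hd
  hu := h.hv
  hv := h.hu
  hw := h.hw
  gx := h.gy
  gy := h.gx
  gP := h.gP
  hε := h.hε'
  hη := h.hη'
  hε' := h.hε
  hη' := h.hη
  ho := h.ho
  hδ := h.hδ
  hi := h.hj
  hj := h.hi
  hk := h.hl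
  hl := h.hk
  P1 := by rw [h.P1]; ring
  Q1 := by rw [h.Q1]; ring
  ex := h.ey
  ey := h.ex
  eP := by rw [h.eP]; ring
  eQ := by rw [h.eQ]; ring

lemma not_dvd_three {T U V W : (ZMod 2)[X]} (hT : Irreducible T) (hU : Irreducible U)
    (hV : Irreducible V) (hW : Irreducible W) (h1 : T ≠ U) (h2 : T ≠ V) (h3 : T ≠ W) (i j k : ℕ) :
    ¬ T ∣ U ^ i * V ^ j * W ^ k :=
  not_dvd_mul hT (not_dvd_mul hT (not_dvd_pow hT hU h1 _) (not_dvd_pow hT hV h2 _))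
    (not_dvd_pow hT hW h3 _)

lemma exponents_eq (h : OddPair x y P Q) {a' b' c' d' : ℕ}
    (he : x ^ a * y ^ b * P ^ c * Q ^ d = x ^ a' * y ^ b' * P ^ c' * Q ^ d') :
    a = a' ∧ b = b' ∧ c = c' ∧ d = d' := by
  have ix := h.lin.irr
  have iy := h.lin.irr'
  have nxy := h.lin.ne
  refine ⟨exp_eq ix (not_dvd_three ix iy h.irrP h.irrQ nxy h.Px.symm h.Qx.symm b c d)
      (not_dvd_three ix iy h.irrP h.irrQ nxy h.Px.symm h.Qx.symm b' c' d')
      (by linear_combination he),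
    exp_eq iy (not_dvd_three iy ix h.irrP h.irrQ nxy.symm h.Py.symm h.Qy.symm a c d)
      (not_dvd_three iy ix h.irrP h.irrQ nxy.symm h.Py.symm h.Qy.symm a' c' d')
      (by linear_combination he),
    exp_eq h.irrP (not_dvd_three h.irrP ix iy h.irrQ h.Px h.Py h.ne a b d)
      (not_dvd_three h.irrP ix iy h.irrQ h.Px h.Py h.ne a' b' d')
      (by linear_combination he),
    exp_eq h.irrQ (not_dvd_three h.irrQ ix iy h.irrP h.Qx h.Qy h.ne.symm a b c)
      (not_dvd_three h.irrQ ix iy h.irrP h.Qx h.Qy h.ne.symm a' b' c')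
      (by linear_combination he)⟩

/-- `P + 1` and `Q + 1` are divisible by `x`. -/
lemma one_le_exp (hL : Lin x y) (hP : Irreducible P) (hx : P ≠ x) {D : (ZMod 2)[X]} {i : ℕ}
    (h : P + 1 = x ^ i * D) (hD : ¬ x ∣ D) : 1 ≤ i := by
  by_contra h0
  rw [show i = 0 by omega, pow_zero, one_mul] at h
  exact hD (h ▸ hL.dvd_add_one hP hx)

lemma not_dvd_add_one_self (hP : Irreducible P) : ¬ P ∣ P + 1 := fun hd =>
  hP.not_isUnit (isUnit_of_dvd_one ((dvd_add_right dvd_rfl).1 hd))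

lemma exists_config (h : OddPair x y P Q) (hc : 1 ≤ c) (hd : 1 ≤ d)
    (hA : geo (a + 1) x * geo (b + 1) y * geo (c + 1) P * geo (d + 1) Q =
      x ^ a * y ^ b * P ^ c * Q ^ d) :
    ∃ α u ε η β v ε' η' γ w o δ i j k l e,
      Config x y P Q a b c d α u ε η β v ε' η' γ w o δ i j k l e := by
  have dx : geo (a + 1) x ∣ x ^ a * y ^ b * P ^ c * Q ^ d :=
    ⟨geo (b + 1) y * geo (c + 1) P * geo (d + 1) Q, by rw [← hA]; ring⟩
  have dy : geo (b + 1) y ∣ y ^ b * x ^ a * P ^ c * Q ^ d :=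
    ⟨geo (a + 1) x * geo (c + 1) P * geo (d + 1) Q, by rw [mul_comm (y ^ b), ← hA]; ring⟩
  have dP : geo (c + 1) P ∣ x ^ a * y ^ b * P ^ c * Q ^ d :=
    ⟨geo (a + 1) x * geo (b + 1) y * geo (d + 1) Q, by rw [← hA]; ring⟩
  have dQ : geo (d + 1) Q ∣ x ^ a * y ^ b * P ^ c * Q ^ d :=
    ⟨geo (a + 1) x * geo (b + 1) y * geo (c + 1) P, by rw [← hA]; ring⟩
  obtain ⟨α, u, ε, η, hu, hau, gx, hε, hη⟩ := row_x h (by omega : a + 1 ≠ 0) dx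
  obtain ⟨β, v, ε', η', hv, hbv, gy, hε', hη'⟩ := row_x h.symm (by omega : b + 1 ≠ 0) dy
  obtain ⟨γ, w, o, hw, hcw, gP, ho⟩ := row_P h (by omega : c + 1 ≠ 0) dP
  obtain ⟨δ, hdδ⟩ := row_Q h (by omega : d + 1 ≠ 0) dQ
  have hδ : 1 ≤ δ := by
    by_contra h0
    rw [show δ = 0 by omega] at hdδ
    omega
  have sQ : geo (d + 1) Q = (Q + 1) ^ (2 ^ δ - 1) := by
    rw [hdδ]
    have := geo_two_pow_mul δ 1 Q
    rwa [mul_one, geo_one, one_pow, mul_one] at this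
  have sP : geo (c + 1) P = (P + 1) ^ (2 ^ γ - 1) * (Q ^ o) ^ 2 ^ γ := by
    rw [hcw, geo_two_pow_mul, gP]
  have sx : geo (a + 1) x = y ^ (2 ^ α - 1) * (P ^ ε * Q ^ η) ^ 2 ^ α := by
    rw [hau, geo_two_pow_mul, gx, h.lin.eq_add_one]
  have sy : geo (b + 1) y = x ^ (2 ^ β - 1) * (P ^ ε' * Q ^ η') ^ 2 ^ β := by
    rw [hbv, geo_two_pow_mul, gy, h.lin.eq_add_one']
  have h2 : ∀ {n : ℕ}, 1 ≤ n → 2 ^ n - 1 ≠ 0 := by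
    intro n hn
    have := Nat.pow_le_pow_right (n := 2) (by norm_num) hn
    omega
  obtain ⟨k, l, e, f, hQ1⟩ := dvd_four h ((dvd_pow_self (Q + 1) (h2 hδ)).trans (sQ ▸ dQ))
  have hf : f = 0 := eq_zero_of_not_dvd (U := x ^ k * y ^ l * P ^ e) (V := 1) (by rw [hQ1]; ring)
    (not_dvd_add_one_self h.irrQ)
  rw [hf, pow_zero, mul_one] at hQ1
  have hP1A : P + 1 ∣ x ^ a * y ^ b * P ^ c * Q ^ d := by
    by_cases hγ : γ = 0
    · rw [hγ, pow_zero, one_mul] at hcw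
      obtain ⟨m, rfl⟩ := hw
      have ho1 : o = 1 := by
        by_contra h0
        have := natDegree_geo (n := 2 * m + 1) (by omega) h.irrP.natDegree_pos
        rw [gP, show o = 0 by omega, pow_zero, natDegree_one] at this
        have := Nat.le_mul_of_pos_left P.natDegree (show 0 < 2 * m + 1 - 1 by omega)
        have := h.irrP.natDegree_pos
        omega
      have hQ := geo_odd_add_one m P
      rw [gP, ho1, pow_one] at hQ
      exact (Dvd.intro_left P rfl |>.mul_right (geo m P ^ 2)).trans
        (hQ ▸ (dvd_pow_self (Q + 1) (h2 hδ)).trans (sQ ▸ dQ))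
    · exact ((dvd_pow_self (P + 1) (h2 (by omega))).mul_right _).trans (sP ▸ dP)
  obtain ⟨i, j, e₁, f₁, hP1⟩ := dvd_four h hP1A
  have he₁ : e₁ = 0 := eq_zero_of_not_dvd (U := x ^ i * y ^ j) (V := Q ^ f₁) hP1
    (not_dvd_add_one_self h.irrP)
  have hf₁ : f₁ = 0 := by
    by_contra h0
    have h3 : Q ∣ P + 1 := hP1 ▸ (dvd_pow_self Q h0).mul_left _
    have h4 := eq_of_dvd_of_natDegree_le h3 (ne_zero_of_natDegree
      (by rw [natDegree_add_one]; exact h.irrP.natDegree_pos)) (by rw [natDegree_add_one]; exact h.deg)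
    have h5 := h.lin.dvd_add_one h.irrP h.Px
    rw [← h4] at h5
    exact h.Qx (eq_of_dvd_irr h.lin.irr h.irrQ h5).symm
  rw [he₁, hf₁, pow_zero, pow_zero, mul_one, mul_one] at hP1
  have ix := h.lin.irr
  have iy := h.lin.irr'
  have nxy := h.lin.ne
  have hi : 1 ≤ i := one_le_exp h.lin h.irrP h.Px hP1 (not_dvd_pow ix iy nxy _)
  have hj : 1 ≤ j := one_le_exp h.lin.symm h.irrP h.Py (by rw [hP1, mul_comm])
    (not_dvd_pow iy ix nxy.symm _)
  have hk : 1 ≤ k := one_le_exp h.lin h.irrQ h.Qx (by rw [hQ1, mul_assoc])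
    (not_dvd_mul ix (not_dvd_pow ix iy nxy _) (not_dvd_pow ix h.irrP h.Px.symm _))
  have hl : 1 ≤ l := one_le_exp h.lin.symm h.irrQ h.Qy (by rw [hQ1, mul_comm (x ^ k), mul_assoc])
    (not_dvd_mul iy (not_dvd_pow iy ix nxy.symm _) (not_dvd_pow iy h.irrP h.Py.symm _))
  have key : x ^ a * y ^ b * P ^ c * Q ^ d =
      x ^ ((2 ^ β - 1) + i * (2 ^ γ - 1) + k * (2 ^ δ - 1)) *
      y ^ ((2 ^ α - 1) + j * (2 ^ γ - 1) + l * (2 ^ δ - 1)) *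
      P ^ (2 ^ α * ε + 2 ^ β * ε' + e * (2 ^ δ - 1)) *
      Q ^ (2 ^ α * η + 2 ^ β * η' + 2 ^ γ * o) := by
    rw [← hA, sx, sy, sP, sQ, hP1, hQ1]
    simp only [pow_add, mul_pow, ← pow_mul]
    ring
  obtain ⟨ex, ey, eP, eQ⟩ := exponents_eq h key
  exact ⟨α, u, ε, η, β, v, ε', η', γ, w, o, δ, i, j, k, l, e, ⟨h, hau, hbv, hcw, hdδ, hu, hv, hw, gx,
    gy, gP, hε, hη, hε', hη', ho, hδ, hi, hj, hk, hl, hP1, hQ1, ex, ey, eP, eQ⟩⟩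

end rows

/-! ### Two and three prime factors -/

/-- The sporadic perfect polynomials, up to exchanging `x` and `y`. -/
def Sporadic (x y A : (ZMod 2)[X]) : Prop :=
  A = x ^ 2 * y * geo 3 x ∨ A = x ^ 2 * y * geo 3 x ^ 2 * geo 3 (geo 3 x) ∨
  A = x ^ 4 * y ^ 3 * geo 5 x ∨ A = x ^ 6 * y ^ 3 * ((1 + x ^ 2 * y) * (1 + x * y ^ 2)) ∨
  A = x ^ 4 * y ^ 4 * (geo 5 x * geo 5 y)

section small
variable {x y P : (ZMod 2)[X]} {a b c : ℕ}

lemma geo_five (R : (ZMod 2)[X]) : geo 5 R = 1 + R + R ^ 2 + R ^ 3 + R ^ 4 := by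
  simp [geo, Finset.sum_range_succ]

lemma Lin.geo_three_add_one (h : Lin x y) : geo 3 x + 1 = x ^ 1 * y ^ 1 := by
  rw [geo_three, h.eq_add_one]; linear_combination two_eq_zero

lemma Lin.geo_five_add_one (h : Lin x y) : geo 5 x + 1 = x ^ 1 * y ^ 3 := by
  rw [geo_five, h.eq_add_one]; linear_combination (1 - x ^ 2 - x ^ 3) * two_eq_zero

lemma Lin.geo_three_symm (h : Lin x y) : geo 3 y = geo 3 x := by
  rw [geo_three, geo_three, h.eq_add_one]; linear_combination (1 + x) * two_eq_zero

lemma Lin.exp_eq (h : Lin x y) {i j i' j' : ℕ} (he : x ^ i * y ^ j = x ^ i' * y ^ j') :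
    i = i' ∧ j = j' :=
  ⟨F2Perfect.exp_eq h.irr (not_dvd_pow h.irr h.irr' h.ne _) (not_dvd_pow h.irr h.irr' h.ne _) he,
    F2Perfect.exp_eq h.irr' (not_dvd_pow h.irr' h.irr h.ne.symm i)
      (not_dvd_pow h.irr' h.irr h.ne.symm i') (by linear_combination he)⟩

lemma two_pow_cases (n : ℕ) : (n = 0 ∧ 2 ^ n = 1) ∨ (n ≠ 0 ∧ ∃ k, 2 ^ n = 2 * k ∧ 1 ≤ k) := by
  rcases n with _ | n
  · exact Or.inl ⟨rfl, rfl⟩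
  · exact Or.inr ⟨n.succ_ne_zero, 2 ^ n, by rw [pow_succ]; ring, Nat.one_le_two_pow⟩

lemma two_primes_case (h : Lin x y) (hA : geo (a + 1) x * geo (b + 1) y = x ^ a * y ^ b) :
    ∃ n, a = 2 ^ n - 1 ∧ b = 2 ^ n - 1 := by
  have row : ∀ {x y : (ZMod 2)[X]} {a b : ℕ}, Lin x y → geo (a + 1) x ∣ x ^ a * y ^ b →
      ∃ α, a + 1 = 2 ^ α ∧ geo (a + 1) x = y ^ (2 ^ α - 1) := by
    intro x y a b h hd
    obtain ⟨D, k, hD, hDx, -⟩ := dvd_mul_pow_cases h.irr' hd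
    obtain ⟨i, -, hi⟩ := (dvd_prime_pow h.irr.prime a).1 hDx
    rw [eq_of_associated hi] at hD
    have hi : i = 0 := by
      by_contra h0
      exact h.not_dvd_geo (by omega) (hD ▸ (dvd_pow_self x h0).mul_right _)
    rw [hi, pow_zero, one_mul] at hD
    obtain ⟨α, hα⟩ := h.two_pow_of_geo_eq (by omega) hD
    refine ⟨α, hα, ?_⟩
    have := geo_two_pow_mul α 1 x
    rw [hα, h.eq_add_one]
    rwa [mul_one, geo_one, one_pow, mul_one] at this
  obtain ⟨α, hα, sx⟩ := row h ⟨_, hA.symm⟩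
  obtain ⟨β, hβ, sy⟩ := row (b := a) h.symm (Dvd.intro_left _ (by rw [hA, mul_comm]))
  rw [sx, sy, mul_comm] at hA
  have := h.exp_eq hA
  exact ⟨α, by omega, by omega⟩

lemma row_three_x (h : Lin x y) (hP : Irreducible P) {n : ℕ} (hn : n ≠ 0)
    (hd : geo n x ∣ x ^ a * y ^ b * P ^ c) :
    ∃ α u ε, Odd u ∧ n = 2 ^ α * u ∧ geo u x = P ^ ε ∧ ε ≤ 1 := by
  obtain ⟨α, u, hu, rfl⟩ := Nat.exists_eq_two_pow_mul_odd hn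
  obtain ⟨D, ε, hD, hd, -⟩ := dvd_mul_pow_cases hP ((geo_dvd_geo (Dvd.intro_left _ rfl) x).trans hd)
  obtain ⟨E, j, hE, hd, -⟩ := dvd_mul_pow_cases h.irr' hd
  obtain ⟨i, -, hi⟩ := (dvd_prime_pow h.irr.prime a).1 hd
  rw [hE, eq_of_associated hi] at hD
  have hi : i = 0 := eq_zero_of_not_dvd (U := 1) (V := y ^ j * P ^ ε) (by rw [hD]; ring)
    (h.not_dvd_geo hu.pos.ne')
  have hj : j = 0 := eq_zero_of_not_dvd (U := x ^ i) (V := P ^ ε) hD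
    (h.not_dvd_geo' hu)
  rw [hi, hj, pow_zero, pow_zero, one_mul, one_mul] at hD
  refine ⟨α, u, ε, hu, rfl, hD, ?_⟩
  by_contra h0
  have := degree_of_pow_dvd (k := 1) (Q := P) h.irr hu
    (hD ▸ pow_dvd_pow P (by omega : 1 + 1 ≤ ε))
  rw [h.deg] at this
  have := hP.natDegree_pos
  omega

/-- The case where `σ(x ^ a)` contributes the prime `P`, with the power of two in `a + 1` trivial. -/
lemma three_primes_aux (h : Lin x y) (hP : Irreducible P) {u β v ε' γ i j : ℕ} (hu : Odd u)
    (hv : Odd v) (hau : a + 1 = u) (gx : geo u x = P) (gy : geo v y = P ^ ε')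
    (hε' : ε' ≤ 1) (hγ : 1 ≤ γ) (hP1 : P + 1 = x ^ i * y ^ j)
    (hb : b + 1 = 2 ^ β * v) (hc : c + 1 = 2 ^ γ)
    (ex : a = 2 ^ β - 1 + i * (2 ^ γ - 1)) (ey : b = j * (2 ^ γ - 1)) (eP : c = 1 + 2 ^ β * ε') :
    x ^ a * y ^ b * P ^ c = x ^ 2 * y * geo 3 x ∨
      x ^ a * y ^ b * P ^ c = x ^ 4 * y ^ 3 * geo 5 x := by
  have key : (u = 3 ∧ i = 1 ∧ j = 1) ∨ (u = 5 ∧ i = 1 ∧ j = 3) := by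
    rcases h.geo_irreducible hu (gx ▸ hP) (by rw [gx]; exact hP1) with hu | hu
    · left
      rw [← gx, hu, h.geo_three_add_one] at hP1
      have := h.exp_eq hP1
      omega
    · right
      rw [← gx, hu, h.geo_five_add_one] at hP1
      have := h.exp_eq hP1
      omega
  have hε : ε' = 0 := by
    by_contra h0
    have h1 : ε' = 1 := by omega
    rw [h1, pow_one] at gy
    rw [h1, mul_one] at eP
    have hs := h.symm
    rcases hs.geo_irreducible hv (gy ▸ hP) (i := j) (j := i) (by rw [gy, hP1, mul_comm]) with hv | hv
    · rw [← gy, hv, hs.geo_three_add_one, mul_comm] at hP1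
      have := h.exp_eq hP1
      rcases two_pow_cases β with ⟨-, h2⟩ | ⟨-, g, h2, hg⟩ <;>
      rcases two_pow_cases γ with ⟨h3, h3'⟩ | ⟨-, g', h3, hg'⟩ <;>
      rcases key with ⟨k1, k2, k3⟩ | ⟨k1, k2, k3⟩ <;> subst k2 k3 <;> omega
    · rw [← gy, hv, hs.geo_five_add_one, mul_comm] at hP1
      have := h.exp_eq hP1
      omega
  rw [hε, mul_zero, add_zero] at eP
  have hc1 : 2 ^ γ - 1 = 1 := by omega
  rw [hc1, mul_one] at ex ey
  rw [← gx, eP]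
  rcases key with ⟨k1, k2, k3⟩ | ⟨k1, k2, k3⟩
  · left
    rw [k1, show a = 2 by omega, show b = 1 by omega, pow_one, pow_one]
  · right
    rw [k1, show a = 4 by omega, show b = 3 by omega, pow_one]

lemma three_primes_case (h : Lin x y) (hP : Irreducible P) (hx : P ≠ x) (hy : P ≠ y) (hc : 1 ≤ c)
    (hA : geo (a + 1) x * geo (b + 1) y * geo (c + 1) P = x ^ a * y ^ b * P ^ c) :
    Sporadic x y (x ^ a * y ^ b * P ^ c) ∨ Sporadic y x (x ^ a * y ^ b * P ^ c) := by
  have dx : geo (a + 1) x ∣ x ^ a * y ^ b * P ^ c :=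
    ⟨geo (b + 1) y * geo (c + 1) P, by rw [← hA]; ring⟩
  have dy : geo (b + 1) y ∣ y ^ b * x ^ a * P ^ c :=
    ⟨geo (a + 1) x * geo (c + 1) P, by rw [mul_comm (y ^ b), ← hA]; ring⟩
  have dP : geo (c + 1) P ∣ x ^ a * y ^ b * P ^ c :=
    ⟨geo (a + 1) x * geo (b + 1) y, by rw [← hA]; ring⟩
  have ix := h.irr
  have iy := h.irr'
  have nxy := h.ne
  have dvd3 : ∀ {D : (ZMod 2)[X]}, D ∣ x ^ a * y ^ b * P ^ c → ∃ i j k, D = x ^ i * y ^ j * P ^ k := by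
    intro D hD
    obtain ⟨D₂, k, rfl, h2, -⟩ := dvd_mul_pow_cases hP hD
    obtain ⟨D₃, j, rfl, h3, -⟩ := dvd_mul_pow_cases iy h2
    obtain ⟨i, -, hi⟩ := (dvd_prime_pow ix.prime a).1 h3
    exact ⟨i, j, k, by rw [eq_of_associated hi]⟩
  obtain ⟨α, u, ε, hu, hau, gx, hε⟩ := row_three_x h hP (by omega : a + 1 ≠ 0) dx
  obtain ⟨β, v, ε', hv, hbv, gy, hε'⟩ := row_three_x h.symm hP (by omega : b + 1 ≠ 0) dy
  obtain ⟨γ, w, hw, hcw⟩ := Nat.exists_eq_two_pow_mul_odd (by omega : c + 1 ≠ 0)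
  have gP : geo w P = 1 := by
    obtain ⟨i, j, k, he⟩ := dvd3 ((geo_dvd_geo (Dvd.intro_left _ hcw.symm) P).trans dP)
    have hi : i = 0 := eq_zero_of_not_dvd (U := 1) (V := y ^ j * P ^ k) (by rw [he]; ring)
      (not_dvd_geo_odd h hP hx hw)
    have hj : j = 0 := eq_zero_of_not_dvd (U := x ^ i) (V := P ^ k) he
      (not_dvd_geo_odd h.symm hP hy hw)
    have hk : k = 0 := eq_zero_of_not_dvd (U := x ^ i * y ^ j) (V := 1) (by rw [he]; ring)
      (not_dvd_geo_self hP hw.pos.ne')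
    rw [he, hi, hj, hk]; simp
  have hw1 : w = 1 := by
    have := natDegree_geo hw.pos.ne' hP.natDegree_pos
    rw [gP, natDegree_one] at this
    have h2 := hP.natDegree_pos
    have h3 := hw.pos
    rcases Nat.mul_eq_zero.1 this.symm with h4 | h4 <;> omega
  rw [hw1, mul_one] at hcw
  have hγ : 1 ≤ γ := by
    by_contra h0
    rw [show γ = 0 by omega] at hcw
    omega
  have sP : geo (c + 1) P = (P + 1) ^ (2 ^ γ - 1) := by
    rw [hcw]
    have := geo_two_pow_mul γ 1 P
    rwa [mul_one, geo_one, one_pow, mul_one] at this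
  have sx : geo (a + 1) x = y ^ (2 ^ α - 1) * (P ^ ε) ^ 2 ^ α := by
    rw [hau, geo_two_pow_mul, gx, h.eq_add_one]
  have sy : geo (b + 1) y = x ^ (2 ^ β - 1) * (P ^ ε') ^ 2 ^ β := by
    rw [hbv, geo_two_pow_mul, gy, h.eq_add_one']
  obtain ⟨i, j, k, hP1⟩ := dvd3 ((dvd_pow_self (P + 1) (by omega)).trans (sP ▸ dP))
  have hk : k = 0 := eq_zero_of_not_dvd (U := x ^ i * y ^ j) (V := 1) (by rw [hP1]; ring)
    (not_dvd_add_one_self hP)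
  rw [hk, pow_zero, mul_one] at hP1
  have he : x ^ a * y ^ b * P ^ c = x ^ (2 ^ β - 1 + i * (2 ^ γ - 1)) *
      y ^ (2 ^ α - 1 + j * (2 ^ γ - 1)) * P ^ (2 ^ α * ε + 2 ^ β * ε') := by
    rw [← hA, sx, sy, sP, hP1]
    simp only [pow_add, mul_pow, ← pow_mul]
    ring
  have nd2 : ∀ {T U V : (ZMod 2)[X]}, Irreducible T → Irreducible U → Irreducible V →
      T ≠ U → T ≠ V → ∀ i j : ℕ, ¬ T ∣ U ^ i * V ^ j :=
    fun hT hU hV h1 h2 i j => not_dvd_mul hT (not_dvd_pow hT hU h1 _) (not_dvd_pow hT hV h2 _)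
  have ex : a = 2 ^ β - 1 + i * (2 ^ γ - 1) :=
    exp_eq ix (nd2 ix iy hP nxy hx.symm b c) (nd2 ix iy hP nxy hx.symm _ _)
      (by rw [← mul_assoc, he, mul_assoc])
  have ey : b = 2 ^ α - 1 + j * (2 ^ γ - 1) :=
    exp_eq iy (nd2 iy ix hP nxy.symm hy.symm a c) (nd2 iy ix hP nxy.symm hy.symm
      (2 ^ β - 1 + i * (2 ^ γ - 1)) (2 ^ α * ε + 2 ^ β * ε')) (by linear_combination he)
  have eP : c = 2 ^ α * ε + 2 ^ β * ε' :=
    exp_eq hP (nd2 hP ix iy hx hy a b) (nd2 hP ix iy hx hy (2 ^ β - 1 + i * (2 ^ γ - 1))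
      (2 ^ α - 1 + j * (2 ^ γ - 1))) (by linear_combination he)
  have hodd : (α = 0 ∧ ε = 1) ∨ (β = 0 ∧ ε' = 1) := by
    rcases two_pow_cases α with ⟨h1, h1'⟩ | ⟨-, f, h1, -⟩ <;>
    rcases two_pow_cases β with ⟨h2, h2'⟩ | ⟨-, g, h2, -⟩ <;>
    rcases two_pow_cases γ with ⟨h3, h3'⟩ | ⟨-, g', h3, hg'⟩ <;>
    interval_cases ε <;> interval_cases ε' <;> omega
  rcases hodd with ⟨rfl, rfl⟩ | ⟨rfl, rfl⟩
  · left
    rw [pow_zero] at ey eP hau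
    rw [pow_one] at gx
    rcases three_primes_aux h hP hu hv (by omega) gx gy hε' hγ hP1 hbv hcw ex (by omega)
      (by omega) with h | h
    · exact Or.inl h
    · exact Or.inr (Or.inr (Or.inl h))
  · right
    rw [pow_zero] at ex eP hbv
    rw [pow_one] at gy
    rw [mul_comm (x ^ a)]
    rcases three_primes_aux h.symm hP hv hu (by omega) gy gx hε hγ (by rw [hP1, mul_comm]) hau hcw ey
      (by omega) (by omega) with h | h
    · exact Or.inl h
    · exact Or.inr (Or.inr (Or.inl h))

end small

/-! ### Four prime factors -/

section pairs
variable {x y P Q : (ZMod 2)[X]} {a b c d : ℕ} {α u ε η β v ε' η' γ w o δ i j k l e : ℕ}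

/-- The polynomials `geo n R` form a strong divisibility sequence. -/
lemma dvd_geo_gcd {R : (ZMod 2)[X]} (hP : Irreducible P) (hR : ¬ P ∣ R) (m n : ℕ)
    (hm : P ∣ geo m R) (hn : P ∣ geo n R) : P ∣ geo (Nat.gcd m n) R := by
  induction m, n using Nat.gcd.induction with
  | H0 n => rwa [Nat.gcd_zero_left]
  | H1 m n hpos ih =>
    rw [Nat.gcd_rec]
    refine ih ?_ hm
    have h1 : geo n R = geo (m * (n / m)) R + R ^ (m * (n / m)) * geo (n % m) R := by
      conv_lhs => rw [← Nat.div_add_mod n m]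
      rw [geo, Finset.sum_range_add, geo, geo, Finset.mul_sum]
      simp only [pow_add]
    have h2 : P ∣ geo (m * (n / m)) R := hm.trans (geo_dvd_geo ⟨_, rfl⟩ R)
    rw [h1, dvd_add_right h2] at hn
    exact (hP.prime.dvd_or_dvd hn).resolve_left fun h => hR (hP.prime.dvd_of_dvd_pow h)

/-- A prime number `r` divides `u` as soon as `geo r x` and `geo u x` have a common prime factor. -/
lemma dvd_of_dvd_geo {r : ℕ} (hr : r.Prime) (hP : Irreducible P) (hx : ¬ P ∣ x) (h1 : P ∣ geo r x)
    (h2 : P ∣ geo u x) : r ∣ u := by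
  rcases hr.eq_one_or_self_of_dvd _ (Nat.gcd_dvd_left r u) with h | h
  · have := dvd_geo_gcd hP hx _ _ h1 h2
    rw [h, geo_one] at this
    exact absurd (isUnit_of_dvd_one this) hP.not_isUnit
  · exact h ▸ Nat.gcd_dvd_right r u

lemma natDegree_eq_of_dvd {D : (ZMod 2)[X]} (hQ : Irreducible Q) (h : D ∣ Q) (hD : 0 < D.natDegree) :
    D.natDegree = Q.natDegree := by
  rcases hQ.dvd_iff.1 h with h | h
  · rw [natDegree_eq_zero_of_isUnit h] at hD
    omega
  · rw [eq_of_associated h]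

lemma OddPair.exp_eq (h : OddPair x y P Q) {k l e k' l' e' : ℕ}
    (he : x ^ k * y ^ l * P ^ e = x ^ k' * y ^ l' * P ^ e') : k = k' ∧ l = l' ∧ e = e' := by
  obtain ⟨h1, h2, h3, -⟩ := exponents_eq h (a := k) (b := l) (c := e) (d := 0) (a' := k')
    (b' := l') (c' := e') (d' := 0) (by rw [he])
  exact ⟨h1, h2, h3⟩

lemma OddPair.not_dvd_x (h : OddPair x y P Q) : ¬ P ∣ x := fun hd =>
  h.Px (eq_of_dvd_irr h.irrP h.lin.irr hd)

lemma OddPair.exists_exp (h : OddPair x y P Q) {D : (ZMod 2)[X]} (hD : D ∣ x ^ k * y ^ l * P ^ e) :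
    ∃ i j f, D = x ^ i * y ^ j * P ^ f := by
  obtain ⟨D₂, f, rfl, h2, -⟩ := dvd_mul_pow_cases h.irrP hD
  obtain ⟨D₃, j, rfl, h3, -⟩ := dvd_mul_pow_cases h.lin.irr' h2
  obtain ⟨i, -, hi⟩ := (dvd_prime_pow h.lin.irr.prime k).1 h3
  exact ⟨i, j, f, by rw [eq_of_associated hi]⟩

/-- If `geo w P` is the larger odd prime `Q`, then `w - 1` is a power of two, as `Q + 1` has no
prime factors besides `x`, `y`, `P`. -/
lemma Config.w_eq (h : Config x y P Q a b c d α u ε η β v ε' η' γ w o δ i j k l e) (ho : o = 1) :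
    ∃ s, w = 2 * 2 ^ s + 1 ∧ e = 1 ∧ k = i * (2 * 2 ^ s - 1) ∧ l = j * (2 * 2 ^ s - 1) := by
  have gP := h.gP
  obtain ⟨m, rfl⟩ := h.hw
  rw [ho, pow_one] at gP
  have hm : m ≠ 0 := by
    rintro rfl
    rw [mul_zero, zero_add, geo_one] at gP
    exact not_irreducible_one (gP ▸ h.odd.irrQ)
  have hQ := geo_odd_add_one m P
  rw [gP] at hQ
  obtain ⟨s, n, hn, rfl⟩ := Nat.exists_eq_two_pow_mul_odd hm
  have h1 : geo n P ∣ x ^ k * y ^ l * P ^ e := by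
    rw [← h.Q1, hQ]
    exact ((geo_dvd_geo (Dvd.intro_left _ rfl) P).trans (dvd_pow_self _ two_ne_zero)).mul_left _
  obtain ⟨i', j', f, he⟩ := h.odd.exists_exp h1
  have hi : i' = 0 := eq_zero_of_not_dvd (U := 1) (V := y ^ j' * P ^ f) (by rw [he]; ring)
    (not_dvd_geo_odd h.odd.lin h.odd.irrP h.odd.Px hn)
  have hj : j' = 0 := eq_zero_of_not_dvd (U := x ^ i') (V := P ^ f) he
    (not_dvd_geo_odd h.odd.lin.symm h.odd.irrP h.odd.Py hn)
  have hf : f = 0 := eq_zero_of_not_dvd (U := x ^ i' * y ^ j') (V := 1) (by rw [he]; ring)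
    (not_dvd_geo_self h.odd.irrP hn.pos.ne')
  have hn1 : n = 1 := by
    have h2 := natDegree_geo hn.pos.ne' h.odd.irrP.natDegree_pos
    rw [he, hi, hj, hf] at h2
    simp only [pow_zero, mul_one, natDegree_one] at h2
    have h3 := h.odd.irrP.natDegree_pos
    have h4 := hn.pos
    rcases Nat.mul_eq_zero.1 h2.symm with h5 | h5 <;> omega
  subst hn1
  rw [geo_two_pow_mul, geo_one, one_pow, mul_one, h.P1, h.Q1] at hQ
  have hs : 2 * 2 ^ s - 1 = 1 + 2 * (2 ^ s - 1) := by
    have := Nat.one_le_two_pow (n := s)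
    omega
  have h5 := h.odd.exp_eq (k' := i * (2 * 2 ^ s - 1)) (l' := j * (2 * 2 ^ s - 1)) (e' := 1)
    (hQ.trans (by rw [hs]; simp only [mul_pow, ← pow_mul, mul_add, pow_add]; ring))
  exact ⟨s, by rw [mul_one], h5.2.2, h5.1, h5.2.1⟩

/-- When `Q` is the odd part `geo w P` of `σ(P ^ c)`, it does not divide `σ(x ^ a)`: if `geo u x = Q`, then
`P` would divide `Q + 1` to an even power, and `geo u x = P Q` is excluded by `Lin.two_primes`. -/
lemma Config.eta_eq_zero (h : Config x y P Q a b c d α u ε η β v ε' η' γ w o δ i j k l e)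
    (ho : o = 1) : η = 0 := by
  by_contra h0
  have hη := h.hη
  have hε := h.hε
  have gx := h.gx
  have gP := h.gP
  have h1 : η = 1 := by omega
  obtain ⟨s, hw, he, -, -⟩ := h.w_eq ho
  have hp := h.odd.irrP.natDegree_pos
  have hdeg := natDegree_geo h.hw.pos.ne' hp
  rw [gP, ho, pow_one, hw, Nat.add_sub_cancel] at hdeg
  have hs := Nat.one_le_two_pow (n := s)
  rw [h1, pow_one] at gx
  interval_cases ε
  · rw [pow_zero, one_mul] at gx
    obtain ⟨m, rfl⟩ := h.hu
    have h2 := geo_odd_add_one m x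
    rw [gx, h.Q1, he, pow_one] at h2
    have hxy : ¬ P ∣ x * (x + 1) := by
      rw [← h.odd.lin.eq_add_one]
      exact not_dvd_mul h.odd.irrP h.odd.not_dvd_x
        (fun hd => h.odd.Py (eq_of_dvd_irr h.odd.irrP h.odd.lin.irr' hd))
    have h3 : P ∣ geo m x := h.odd.irrP.prime.dvd_of_dvd_pow
      ((h.odd.irrP.prime.dvd_or_dvd (h2 ▸ Dvd.intro_left _ rfl)).resolve_left hxy)
    -- `P` divides `Q + 1` exactly once by `e = 1`, but it divides the square of `geo m x`.
    have h4 : P * P ∣ (x ^ k * y ^ l) * P := by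
      rw [h2, ← pow_two]
      exact (pow_dvd_pow_of_dvd h3 2).mul_left _
    exact not_dvd_mul h.odd.irrP (not_dvd_pow h.odd.irrP h.odd.lin.irr h.odd.Px k)
      (not_dvd_pow h.odd.irrP h.odd.lin.irr' h.odd.Py l)
      ((mul_dvd_mul_iff_right h.odd.irrP.ne_zero).1 h4)
  · rw [pow_one] at gx
    have hu := h.odd.lin.natDegree_geo h.hu.pos.ne'
    rw [gx, natDegree_mul h.odd.irrP.ne_zero h.odd.irrQ.ne_zero] at hu
    have hd2 : 2 * P.natDegree ≤ Q.natDegree := by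
      rw [hdeg]; exact Nat.mul_le_mul_right _ (by omega)
    have key : ∀ r, r.Prime → r ≠ 2 → P = geo r x → False := by
      intro r hr hr2 hPr
      have h3 : r ∣ u := dvd_of_dvd_geo hr h.odd.irrP h.odd.not_dvd_x (hPr ▸ dvd_rfl)
        (gx ▸ Dvd.intro _ rfl)
      have h4 := h.odd.lin.natDegree_geo hr.ne_zero
      rw [← hPr] at h4
      -- `u = (r - 1) w + 1`, so `r ∣ w - 1 = 2 ^ (s + 1)`.
      have h5 : u + 2 * 2 ^ s = r * (2 * 2 ^ s + 1) := by
        have h6 := hr.pos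
        have h7 := h.hu.pos
        obtain ⟨q, rfl⟩ : ∃ q, r = q + 1 := ⟨r - 1, by omega⟩
        rw [Nat.add_sub_cancel] at h4
        rw [hdeg, h4] at hu
        have : u = q + 2 * 2 ^ s * q + 1 := by omega
        rw [this]; ring
      have h6 : r ∣ 2 * 2 ^ s := (Nat.dvd_add_right h3).1 (h5 ▸ Dvd.intro _ rfl)
      rw [← pow_succ'] at h6
      exact hr2 ((Nat.prime_dvd_prime_iff_eq hr Nat.prime_two).1 (hr.dvd_of_dvd_pow h6))
    have same_deg : ∀ U V : (ZMod 2)[X], U + 1 = x ^ 2 * y → V + 1 = x * y ^ 2 →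
        U.natDegree = V.natDegree := by
      intro U V hU hV
      have ix := h.odd.lin.irr.ne_zero
      have iy := h.odd.lin.irr'.ne_zero
      rw [← natDegree_add_one U, ← natDegree_add_one V, hU, hV, natDegree_mul (pow_ne_zero _ ix) iy,
        natDegree_mul ix (pow_ne_zero _ iy), natDegree_pow, natDegree_pow, h.odd.lin.deg,
        h.odd.lin.deg']
    rcases h.odd.lin.two_primes h.odd.irrP h.odd.irrQ h.odd.ne h.odd.deg h.hi h.hj h.hk h.hl h.P1 h.Q1
      gx.symm with h3 | h3 | ⟨h3, h4⟩ | ⟨h3, h4⟩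
    · exact key 3 (by norm_num) (by norm_num) h3
    · exact key 5 (by norm_num) (by norm_num) h3
    · have := same_deg P Q (by rw [h3]; linear_combination two_eq_zero)
        (by rw [h4]; linear_combination two_eq_zero)
      omega
    · have := same_deg Q P (by rw [h3]; linear_combination two_eq_zero)
        (by rw [h4]; linear_combination two_eq_zero)
      omega

lemma Lin.geo_eq_prime (hL : Lin x y) (hP : Irreducible P) (hu : Odd u) (hg : geo u x = P)
    (h1 : P + 1 = x ^ i * y ^ j) : (u = 3 ∧ i = 1 ∧ j = 1) ∨ (u = 5 ∧ i = 1 ∧ j = 3) := by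
  rcases hL.geo_irreducible hu (hg ▸ hP) (by rw [hg]; exact h1) with hu | hu
  · left
    rw [← hg, hu, hL.geo_three_add_one] at h1
    have := hL.exp_eq h1
    omega
  · right
    rw [← hg, hu, hL.geo_five_add_one] at h1
    have := hL.exp_eq h1
    omega

/-- The sub-case in which only `σ(x ^ a)` involves `P` and `Q` comes from `σ(P ^ c)`. -/
lemma Config.tower (h : Config x y P Q a b c d α u ε η β v ε' η' γ w o δ i j k l e) (ho : o = 1)
    (hη : η = 0) (hη' : η' = 0) (hε : ε = 1) (hε' : ε' = 0) :
    Sporadic x y (x ^ a * y ^ b * P ^ c * Q ^ d) := by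
  obtain ⟨s, hw, he, hk, hl⟩ := h.w_eq ho
  subst hη hη' hε hε' ho
  obtain ⟨odd, ha, hb, hc, hd, hu, hv, hw', gx, gy, gP, -, -, -, -, -, hδ, hi, hj, -, -, P1, Q1, ex, ey,
    eP, eQ⟩ := h
  simp only [pow_zero, pow_one, mul_one, mul_zero, zero_add, add_zero] at *
  have hv1 := odd.lin.symm.eq_one_of_geo_eq_one hv gy
  have hγ : γ = 0 := by
    rcases two_pow_cases γ with ⟨h1, -⟩ | ⟨-, f, h1, -⟩
    · exact h1
    · rcases two_pow_cases δ with ⟨h2, -⟩ | ⟨-, g, h2, -⟩ <;> omega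
  subst hγ hv1
  simp only [pow_zero, mul_one, one_mul, Nat.sub_self, mul_zero, add_zero] at *
  have hδ2 : 2 ^ δ - 1 = 1 := by omega
  rw [hδ2, mul_one] at ex ey eP
  have hα : 2 ^ α = 1 := by
    rcases two_pow_cases α with ⟨-, h1⟩ | ⟨-, f, h1, -⟩ <;> omega
  have hs : 2 ^ s = 1 := by omega
  rw [hs] at hk hl hw
  simp only [mul_one, Nat.reduceSub] at hk hl
  subst hk hl hw
  change geo 3 P = Q at gP
  have hβ := Nat.one_le_two_pow (n := β)
  rcases odd.lin.geo_eq_prime odd.irrP hu gx P1 with ⟨rfl, rfl, rfl⟩ | ⟨rfl, rfl, rfl⟩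
  · right; left
    rw [← gP, ← gx, show a = 2 by omega, show b = 1 by omega, show c = 2 by omega,
      show d = 1 by omega, pow_one, pow_one]
  · exfalso
    have h1 : geo 3 x ∣ Q := by
      rw [← gP, ← gx]
      exact ⟨x ^ 6 + x ^ 5 + x ^ 4 + x ^ 2 + 1, by
        simp only [geo_three, geo_five]; linear_combination (1 * x ^ 0 + 1 * x ^ 1 + 1 * x ^ 2 + 2 * x ^ 3 + 2 * x ^ 4 + 1 * x ^ 5) * two_eq_zero⟩
    have h2 := odd.lin.natDegree_geo (n := 3) (by norm_num)
    have h3 := odd.lin.natDegree_geo (n := 5) (by norm_num)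
    have h4 := natDegree_eq_of_dvd odd.irrQ h1 (by omega)
    have h5 := natDegree_geo (n := 3) (R := P) (by norm_num) odd.irrP.natDegree_pos
    rw [gP, ← gx, h3] at h5
    omega

end pairs

section pairs
variable {x y P Q : (ZMod 2)[X]} {a b c d : ℕ} {α u ε η β v ε' η' γ w o δ i j k l e : ℕ}

/-- The classification when `Q` comes from `σ(P ^ c)`: exactly one of `σ(x ^ a)`, `σ(y ^ b)` involves
`P`. -/
lemma Config.of_o_eq_one (h : Config x y P Q a b c d α u ε η β v ε' η' γ w o δ i j k l e)
    (ho : o = 1) : Sporadic x y (x ^ a * y ^ b * P ^ c * Q ^ d) ∨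
      Sporadic y x (x ^ a * y ^ b * P ^ c * Q ^ d) := by
  have hη := h.eta_eq_zero ho
  have hη' := h.symm.eta_eq_zero ho
  have hε := h.hε
  have hε' := h.hε'
  rcases (by omega : ε = 0 ∨ ε = 1) with h1 | h1 <;> rcases (by omega : ε' = 0 ∨ ε' = 1) with h2 | h2
  · exfalso
    obtain ⟨s, hw, he, -, -⟩ := h.w_eq ho
    have h3 := h.hc
    have h4 := h.eP
    have h5 := h.eQ
    have h6 := h.hd
    subst h1 h2 hη hη' ho he hw
    simp only [mul_zero, zero_add, mul_one, one_mul] at h4 h5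
    have h7 := Nat.one_le_two_pow (n := s)
    have h8 := Nat.le_mul_of_pos_right (2 ^ γ) (show 0 < 2 * 2 ^ s + 1 by omega)
    have h9 : 2 ^ γ * 3 ≤ 2 ^ γ * (2 * 2 ^ s + 1) := Nat.mul_le_mul_left _ (by omega)
    have := Nat.one_le_two_pow (n := γ)
    omega
  · right
    rw [mul_comm (x ^ a)]
    exact h.symm.tower ho hη' hη h2 h1
  · exact Or.inl (h.tower ho hη hη' h1 h2)
  · exfalso
    obtain ⟨s, hw, he, hk, hl⟩ := h.w_eq ho
    obtain ⟨odd, ha, hb, hc, hd, hu, hv, hw', gx, gy, gP, -, -, -, -, -, hδ, hi, hj, -, -, P1, Q1, ex,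
      ey, eP, eQ⟩ := h
    subst hη hη' h1 h2 ho
    simp only [pow_zero, pow_one, mul_one, mul_zero, zero_add] at *
    have key : u = 3 ∧ v = 3 ∧ i = 1 ∧ j = 1 := by
      rcases odd.lin.geo_eq_prime odd.irrP hu gx P1 with h1 | h1 <;>
      rcases odd.lin.symm.geo_eq_prime odd.irrP hv gy (by rw [P1, mul_comm]) with h2 | h2 <;> omega
    obtain ⟨rfl, rfl, rfl, rfl⟩ := key
    have hγ : γ = 0 := by
      rcases two_pow_cases γ with ⟨h1, -⟩ | ⟨-, f, h1, -⟩
      · exact h1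
      · rcases two_pow_cases δ with ⟨h2, -⟩ | ⟨-, g, h2, -⟩ <;> omega
    subst hγ
    have hδ2 : 2 ^ δ - 1 = 1 := by omega
    simp only [pow_zero, mul_one, one_mul, Nat.sub_self, mul_zero, add_zero, hδ2] at *
    have := Nat.one_le_two_pow (n := s)
    have := Nat.one_le_two_pow (n := α)
    have := Nat.one_le_two_pow (n := β)
    omega

/-- `σ(P ^ c)` and `σ(Q ^ d)` split over `x`, `y`, and `Q` itself is `σ(x ^ a)`. -/
lemma Config.single (h : Config x y P Q a b c d α u ε η β v ε' η' γ w o δ i j k l e) (ho : o = 0)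
    (hw : w = 1) (hγ : 1 ≤ γ) (hα : α = 0) (hη : η = 1) (hε : ε = 0)
    (hB : (η' = 0 ∧ δ = 1) ∨ (η' = 1 ∧ β = 1 ∧ δ = 2)) :
    Sporadic x y (x ^ a * y ^ b * P ^ c * Q ^ d) := by
  subst ho hw hα hη hε
  obtain ⟨odd, ha, hb, hc, hd, hu, hv, hw', gx, gy, gP, -, -, hε', -, -, hδ, hi, hj, hk, hl, P1, Q1, ex,
    ey, eP, eQ⟩ := h
  simp only [pow_zero, pow_one, mul_one, one_mul, mul_zero, zero_add, add_zero, Nat.sub_self] at *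
  obtain ⟨m, rfl⟩ := hu
  have hm : m ≠ 0 := by
    rintro rfl
    rw [mul_zero, zero_add, geo_one] at gx
    exact not_irreducible_one (gx ▸ odd.irrQ)
  have hQ := geo_odd_add_one m x
  rw [gx, ← odd.lin.eq_add_one] at hQ
  obtain ⟨t, n, hn, rfl⟩ := Nat.exists_eq_two_pow_mul_odd hm
  have h1 : geo n x ∣ x ^ k * y ^ l * P ^ e := by
    rw [← Q1, hQ]
    exact ((geo_dvd_geo (Dvd.intro_left _ rfl) x).trans (dvd_pow_self _ two_ne_zero)).mul_left _
  obtain ⟨i', j', f, he⟩ := odd.exists_exp h1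
  have hi' : i' = 0 := eq_zero_of_not_dvd (U := 1) (V := y ^ j' * P ^ f) (by rw [he]; ring)
    (odd.lin.not_dvd_geo hn.pos.ne')
  have hj' : j' = 0 := eq_zero_of_not_dvd (U := x ^ i') (V := P ^ f) he (odd.lin.not_dvd_geo' hn)
  rw [hi', hj', pow_zero, pow_zero, one_mul, one_mul] at he
  have hf : f ≤ 1 := by
    by_contra h0
    have := degree_of_sq_dvd odd.lin.irr odd.irrP hn (he ▸ pow_dvd_pow P (by omega : 2 ≤ f))
    rw [odd.lin.deg] at this
    have := odd.irrP.natDegree_pos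
    omega
  have ht := Nat.one_le_two_pow (n := t)
  rw [geo_two_pow_mul, ← odd.lin.eq_add_one, he, Q1] at hQ
  obtain ⟨rfl, rfl, rfl⟩ := odd.exp_eq (k' := 1) (l' := 1 + 2 * (2 ^ t - 1)) (e' := 2 * (2 ^ t * f))
    (hQ.trans (by simp only [mul_pow, ← pow_mul, pow_add]; ring))
  interval_cases f
  · rw [pow_zero] at he
    have hn1 := odd.lin.eq_one_of_geo_eq_one hn he
    subst hn1
    simp only [mul_zero, pow_zero, mul_one, zero_mul, add_zero] at *
    have hβ : β = 0 ∧ ε' = 1 := by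
      rcases two_pow_cases β with ⟨h1, h1'⟩ | ⟨-, f, h1, hf⟩ <;>
      rcases two_pow_cases γ with ⟨h2, -⟩ | ⟨-, g, h2, hg⟩ <;>
      interval_cases ε' <;> omega
    obtain ⟨rfl, rfl⟩ := hβ
    have hη' : η' = 0 := by omega
    subst hη'
    simp only [pow_zero, pow_one, mul_one, one_mul, Nat.sub_self, zero_add, mul_zero] at *
    have hγ2 : 2 ^ γ - 1 = 1 := by omega
    have hδ2 : 2 ^ δ - 1 = 1 := by omega
    rw [hγ2, hδ2, mul_one] at ex ey
    have hP := odd.lin.symm.geo_eq_prime odd.irrP hv gy (by rw [P1, mul_comm])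
    have hQ' := odd.lin.geo_eq_prime (i := 1) odd.irrQ ⟨_, rfl⟩ gx (by rw [pow_one]; exact Q1)
    have hv5 : v = 5 ∧ 2 * 2 ^ t + 1 = 5 := by
      rcases hP with hP | hP <;> rcases hQ' with hQ' | hQ'
      · exfalso
        apply odd.ne
        have h2 : P + 1 = Q + 1 := by
          rw [P1, Q1, hP.2.1, hP.2.2, hQ'.2.2, pow_one, pow_one]
        linear_combination h2
      all_goals omega
    rw [hv5.2] at gx ha
    rw [hv5.1] at gy hb
    right; right; right; right
    rw [show a = 4 by omega, show b = 4 by omega, show c = 1 by omega, show d = 1 by omega, gx, gy]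
    ring
  · exfalso
    rw [pow_one] at he
    have hβ : β = 0 ∧ ε' = 1 := by
      rcases two_pow_cases β with ⟨h1, h1'⟩ | ⟨-, f, h1, hf⟩ <;>
      rcases two_pow_cases γ with ⟨h2, -⟩ | ⟨-, g, h2, hg⟩ <;>
      rw [mul_assoc] at eP <;> interval_cases ε' <;> omega
    obtain ⟨rfl, rfl⟩ := hβ
    have hη' : η' = 0 := by omega
    subst hη'
    have hδ1 : δ = 1 := by omega
    subst hδ1
    simp only [pow_zero, pow_one, mul_one, one_mul, Nat.sub_self, zero_add, mul_zero,
      Nat.add_one_sub_one] at *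
    have hP := odd.lin.symm.geo_eq_prime odd.irrP hv gy (by rw [P1, mul_comm])
    have hP' := odd.lin.geo_eq_prime odd.irrP hn he P1
    have ht1 : 2 ^ t = 1 := by
      rcases two_pow_cases t with ⟨h1, h1'⟩ | ⟨-, f, h1, hf⟩
      · exact h1'
      · rcases two_pow_cases γ with ⟨h2, -⟩ | ⟨-, g, h2, hg⟩
        · omega
        · have h3 : γ ≠ 1 := by rintro rfl; omega
          have h4 : 2 ^ γ = 4 * 2 ^ (γ - 2) := by
            rw [show (4 : ℕ) = 2 ^ 2 by norm_num, ← pow_add, Nat.add_sub_cancel' (by omega)]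
          omega
    have hn3 : n = 3 := by omega
    subst hn3
    rw [ht1] at gx
    change geo 7 x = Q at gx
    have h2 : (1 + x ^ 2 * y) ∣ Q := ⟨1 + x * y ^ 2, by
      rw [← gx, odd.lin.eq_add_one]
      simp only [geo, Finset.sum_range_succ, Finset.sum_range_zero]
      linear_combination (- x ^ 2 - x ^ 3 - x ^ 4 - x ^ 5) * two_eq_zero⟩
    have h3 : (1 + x ^ 2 * y).natDegree = 3 := by
      rw [add_comm, natDegree_add_one, natDegree_mul (pow_ne_zero _ odd.lin.irr.ne_zero)
        odd.lin.irr'.ne_zero, natDegree_pow, odd.lin.deg, odd.lin.deg']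
    have h4 := natDegree_eq_of_dvd odd.irrQ h2 (by omega)
    rw [← gx, odd.lin.natDegree_geo (by norm_num)] at h4
    omega

end pairs

section pairs
variable {x y P Q : (ZMod 2)[X]} {a b c d : ℕ} {α u ε η β v ε' η' γ w o δ i j k l e : ℕ}

/-- If `P = geo r x` and `P * Q = geo u x` with `r` prime, then `u = r ^ 2`: the proper divisor
`geo (u / r) x` of `P * Q` can only be `P`. -/
lemma OddPair.eq_sq (h : OddPair x y P Q) {r : ℕ} (hr : r.Prime) (hu : u ≠ 0)
    (hP : P = geo r x) (hg : P * Q = geo u x) : u = r * r ∧ Q = geo r (x ^ r) := by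
  obtain ⟨n, rfl⟩ : r ∣ u := dvd_of_dvd_geo hr h.irrP h.not_dvd_x (hP ▸ dvd_rfl)
    (hg ▸ Dvd.intro _ rfl)
  have hn0 : n ≠ 0 := fun h0 => hu (by rw [h0, mul_zero])
  have hQ : Q = geo n (x ^ r) := by
    rw [geo_mul_index, ← hP] at hg
    exact mul_left_cancel₀ h.irrP.ne_zero hg
  have hdQ := natDegree_geo (n := n) (R := x ^ r) hn0
    (by rw [natDegree_pow, h.lin.deg]; have := hr.pos; omega)
  rw [← hQ, natDegree_pow, h.lin.deg, mul_one] at hdQ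
  have hdP := h.lin.natDegree_geo hr.ne_zero
  rw [← hP] at hdP
  have hd : geo n x ∣ P * Q ^ 1 := by
    rw [pow_one, hg]; exact geo_dvd_geo (Dvd.intro_left _ rfl) x
  obtain ⟨D, f, hD, hDP, hf⟩ := dvd_mul_pow_cases h.irrQ hd
  obtain ⟨g, hg1, hg2⟩ := (dvd_prime_pow h.irrP.prime 1).1 (show D ∣ P ^ 1 by rwa [pow_one])
  rw [eq_of_associated hg2] at hD
  have h1 := h.lin.natDegree_geo hn0
  rw [hD, natDegree_mul (pow_ne_zero _ h.irrP.ne_zero) (pow_ne_zero _ h.irrQ.ne_zero), natDegree_pow,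
    natDegree_pow, hdP] at h1
  have hq := h.irrQ.natDegree_pos
  have h3 := hr.two_le
  obtain ⟨q, rfl⟩ : ∃ q, n = q + 1 := ⟨n - 1, by omega⟩
  rw [Nat.add_sub_cancel] at h1 hdQ
  have hq0 : 0 < q := by
    rcases Nat.eq_zero_or_pos q with h0 | h0
    · rw [h0, zero_mul] at hdQ; omega
    · exact h0
  have h4 : q * 2 ≤ q * r := Nat.mul_le_mul_left _ h3
  have hqr : q + 1 = r := by
    interval_cases f <;> interval_cases g <;> omega
  rw [hqr] at hQ ⊢
  exact ⟨rfl, hQ⟩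

/-- The factorization of `Q + 1` for the two candidates `Q = geo r (x ^ r)`, `r = 3, 5`. -/
lemma one_add_eq (h : Lin x y) : geo 3 (x ^ 3) + 1 = x ^ 3 * y ^ 1 * geo 3 x ^ 1 ∧
    geo 5 (x ^ 5) + 1 = x ^ 5 * y ^ 3 * geo 5 x ^ 3 := by
  have h3 := geo_mul 3 x
  have h5 := geo_mul 5 x
  rw [← h.eq_add_one] at h3 h5
  constructor
  · rw [geo_three (x ^ 3)]
    linear_combination two_eq_zero - x ^ 3 * h3
  · rw [geo_five (x ^ 5), mul_assoc, ← mul_pow, mul_comm y, h5]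
    linear_combination (1 - x ^ 10 - x ^ 15) * two_eq_zero

/-- `σ(P ^ c)` and `σ(Q ^ d)` split over `x`, `y`, and `σ(x ^ a) = P Q`. -/
lemma Config.double (h : Config x y P Q a b c d α u ε η β v ε' η' γ w o δ i j k l e) (ho : o = 0)
    (hw : w = 1) (hγ : 1 ≤ γ) (hα : α = 0) (hη : η = 1) (hε : ε = 1)
    (hB : (η' = 0 ∧ δ = 1) ∨ (η' = 1 ∧ β = 1 ∧ δ = 2)) :
    Sporadic x y (x ^ a * y ^ b * P ^ c * Q ^ d) := by
  subst ho hw hα hη hε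
  obtain ⟨odd, ha, hb, hc, hd, hu, hv, hw', gx, gy, gP, -, -, hε', -, -, hδ, hi, hj, hk, hl, P1, Q1, ex,
    ey, eP, eQ⟩ := h
  simp only [pow_zero, pow_one, mul_one, one_mul, mul_zero, zero_add, add_zero, Nat.sub_self] at *
  have hg4 : γ ≠ 1 → 2 ^ γ = 4 * 2 ^ (γ - 2) := fun h1 => by
    rw [show (4 : ℕ) = 2 ^ 2 by norm_num, ← pow_add, Nat.add_sub_cancel' (by omega)]
  have hg1 : γ = 1 → 2 ^ γ = 2 := by rintro rfl; rfl
  have hd1 : δ = 1 → 2 ^ δ = 2 := by rintro rfl; rfl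
  have hd2 : δ = 2 → 2 ^ δ = 4 := by rintro rfl; rfl
  have hb1 : β = 1 → 2 ^ β = 2 := by rintro rfl; rfl
  rcases odd.lin.two_primes odd.irrP odd.irrQ odd.ne odd.deg hi hj hk hl P1 Q1 gx.symm with
    h3 | h5 | hmut
  · exfalso
    obtain ⟨rfl, hQ⟩ := odd.eq_sq Nat.prime_three hu.pos.ne' h3 gx.symm
    have h9 := (one_add_eq odd.lin).1
    rw [← h3, ← hQ, Q1] at h9
    obtain ⟨rfl, rfl, rfl⟩ := odd.exp_eq h9
    have hβ : β = 0 ∧ ε' = 1 := by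
      rcases two_pow_cases β with ⟨h1, h1'⟩ | ⟨-, f, h1, hf⟩ <;>
      rcases two_pow_cases γ with ⟨h2, -⟩ | ⟨-, g, h2, hg⟩ <;>
      interval_cases ε' <;> omega
    obtain ⟨rfl, rfl⟩ := hβ
    have hη' : η' = 0 := by omega
    subst hη'
    simp only [pow_zero, pow_one, mul_one, one_mul, Nat.sub_self, zero_add] at *
    have hP := odd.lin.symm.geo_eq_prime odd.irrP hv gy (by rw [P1, mul_comm])
    have hP' := odd.lin.geo_eq_prime odd.irrP (by decide) h3.symm P1
    rw [show i = 1 by omega] at ex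
    rw [show j = 1 by omega] at ey
    omega
  · exfalso
    obtain ⟨rfl, hQ⟩ := odd.eq_sq Nat.prime_five hu.pos.ne' h5 gx.symm
    have h9 := (one_add_eq odd.lin).2
    rw [← h5, ← hQ, Q1] at h9
    obtain ⟨rfl, rfl, rfl⟩ := odd.exp_eq h9
    have hβ : β = 0 ∧ ε' = 1 := by
      rcases two_pow_cases β with ⟨h1, h1'⟩ | ⟨-, f, h1, hf⟩ <;>
      rcases two_pow_cases γ with ⟨h2, -⟩ | ⟨-, g, h2, hg⟩ <;>
      interval_cases ε' <;> omega
    obtain ⟨rfl, rfl⟩ := hβ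
    have h10 := hg4 (by rintro rfl; omega)
    omega
  · have hij : (i = 2 ∧ j = 1 ∧ k = 1 ∧ l = 2 ∧ e = 0) ∨ (i = 1 ∧ j = 2 ∧ k = 2 ∧ l = 1 ∧ e = 0) := by
      rcases hmut with ⟨h1, h2⟩ | ⟨h1, h2⟩
      · have h3 := odd.lin.exp_eq (i := i) (j := j) (i' := 2) (j' := 1)
          (by rw [← P1, h1]; linear_combination two_eq_zero)
        have h4 := odd.exp_eq (k := k) (l := l) (e := e) (k' := 1) (l' := 2) (e' := 0)
          (by rw [← Q1, h2]; linear_combination two_eq_zero)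
        omega
      · have h3 := odd.lin.exp_eq (i := i) (j := j) (i' := 1) (j' := 2)
          (by rw [← P1, h2]; linear_combination two_eq_zero)
        have h4 := odd.exp_eq (k := k) (l := l) (e := e) (k' := 2) (l' := 1) (e' := 0)
          (by rw [← Q1, h1]; linear_combination two_eq_zero)
        omega
    have he : e = 0 := by omega
    subst he
    have hPQ : P * Q = (1 + x ^ 2 * y) * (1 + x * y ^ 2) := by
      rcases hmut with ⟨h1, h2⟩ | ⟨h1, h2⟩ <;> rw [h1, h2]
      ring
    have ha6 : a = 6 := by
      have h1 : geo 7 x = P * Q := by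
        rw [hPQ, odd.lin.eq_add_one]
        simp only [geo, Finset.sum_range_succ, Finset.sum_range_zero]
        linear_combination (- x ^ 2 - x ^ 3 - x ^ 4 - x ^ 5) * two_eq_zero
      have h2 := congrArg natDegree (gx.trans h1.symm)
      rw [odd.lin.natDegree_geo hu.pos.ne', odd.lin.natDegree_geo (by norm_num)] at h2
      omega
    simp only [zero_mul, add_zero, pow_zero, mul_one] at *
    have hb1' := Nat.one_le_two_pow (n := β)
    rcases (by omega : ε' = 0 ∨ ε' = 1) with rfl | rfl <;> rcases hB with ⟨rfl, hδ1⟩ | ⟨rfl, hβ1, hδ2⟩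
    · have hv1 := odd.lin.symm.eq_one_of_geo_eq_one hv (by rw [gy]; simp)
      subst hv1
      rw [show 2 ^ γ - 1 = 1 by omega, hd1 hδ1] at ex ey
      right; right; right; left
      rw [ha6, show b = 3 by omega, show c = 1 by omega, show d = 1 by have := hd1 hδ1; omega, ← hPQ]
      ring
    · exfalso
      have := odd.lin.symm.geo_eq_prime (i := l) (j := k) odd.irrQ hv (by rw [gy]; simp)
        (by rw [Q1, mul_comm])
      omega
    · exfalso
      have := odd.lin.symm.geo_eq_prime odd.irrP hv (by rw [gy]; simp) (by rw [P1, mul_comm])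
      omega
    · exfalso
      have h1 := hd2 hδ2
      have h2 := hb1 hβ1
      rw [show 2 ^ γ - 1 = 3 by omega, h1] at ex ey
      omega

lemma four_primes_case (h : OddPair x y P Q) (hc : 1 ≤ c) (hd : 1 ≤ d)
    (hA : geo (a + 1) x * geo (b + 1) y * geo (c + 1) P * geo (d + 1) Q =
      x ^ a * y ^ b * P ^ c * Q ^ d) :
    Sporadic x y (x ^ a * y ^ b * P ^ c * Q ^ d) ∨
      Sporadic y x (x ^ a * y ^ b * P ^ c * Q ^ d) := by
  obtain ⟨α, u, ε, η, β, v, ε', η', γ, w, o, δ, i, j, k, l, e, h⟩ := exists_config h hc hd hA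
  rcases (by have := h.ho; omega : o = 1 ∨ o = 0) with ho | ho
  · exact h.of_o_eq_one ho
  have hw : w = 1 := by
    have h1 := natDegree_geo h.hw.pos.ne' h.odd.irrP.natDegree_pos
    rw [h.gP, ho, pow_zero, natDegree_one] at h1
    have h2 := h.odd.irrP.natDegree_pos
    have h3 := h.hw.pos
    rcases Nat.mul_eq_zero.1 h1.symm with h4 | h4 <;> omega
  have hγ : 1 ≤ γ := by
    by_contra h0
    have h1 := h.hc
    rw [show γ = 0 by omega, hw] at h1
    omega
  have eQ := h.eQ
  have hd' := h.hd
  have hη := h.hη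
  have hη' := h.hη'
  have hε := h.hε
  have hε' := h.hε'
  have hδ := h.hδ
  have h4 : δ ≠ 1 → 2 ^ δ = 4 * 2 ^ (δ - 2) := fun h1 => by
    rw [show (4 : ℕ) = 2 ^ 2 by norm_num, ← pow_add, Nat.add_sub_cancel' (by omega)]
  have h2 : δ = 1 → 2 ^ δ = 2 := by rintro rfl; rfl
  rw [ho, mul_zero, add_zero] at eQ
  have aux : ∀ {β η' : ℕ}, η' ≤ 1 → d = 1 + 2 ^ β * η' →
      (η' = 0 ∧ δ = 1) ∨ (η' = 1 ∧ β = 1 ∧ δ = 2) := by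
    intro β η' h5 h6
    interval_cases η'
    · left
      refine ⟨rfl, ?_⟩
      by_contra h7
      have h8 := h4 h7
      omega
    · right
      have h8 : 2 ^ δ = 4 * 2 ^ (δ - 2) := h4 fun h7 => by
        have := h2 h7
        have := Nat.one_le_two_pow (n := β)
        omega
      have h9 : β = 1 := by
        rcases β with _ | _ | β
        · omega
        · rfl
        · rw [pow_succ, pow_succ] at h6
          omega
      subst h9
      refine ⟨rfl, rfl, Nat.pow_right_injective le_rfl (?_ : 2 ^ δ = 2 ^ 2)⟩
      omega
  have hodd : (α = 0 ∧ η = 1) ∨ (β = 0 ∧ η' = 1) := by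
    rcases two_pow_cases α with ⟨h1, h1'⟩ | ⟨-, f, h1, -⟩ <;>
    rcases two_pow_cases β with ⟨h2, h2'⟩ | ⟨-, g, h2, -⟩ <;>
    rcases two_pow_cases δ with ⟨h3, h3'⟩ | ⟨-, g', h3, hg'⟩ <;>
    interval_cases η <;> interval_cases η' <;> omega
  rcases hodd with ⟨h5, h6⟩ | ⟨h5, h6⟩
  · left
    have hB := aux (β := β) hη' (by rw [eQ, h5, h6]; simp)
    rcases (by omega : ε = 0 ∨ ε = 1) with h7 | h7
    · exact h.single ho hw hγ h5 h6 h7 hB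
    · exact h.double ho hw hγ h5 h6 h7 hB
  · right
    have hB := aux (β := α) hη (by rw [eQ, h5, h6]; ring)
    rw [mul_comm (x ^ a)]
    rcases (by omega : ε' = 0 ∨ ε' = 1) with h7 | h7
    · exact h.symm.single ho hw hγ h5 h6 h7 hB
    · exact h.symm.double ho hw hγ h5 h6 h7 hB

end pairs

/-! ### The classification -/

lemma Sporadic.list {A : (ZMod 2)[X]} (h : Sporadic X (X + 1) A ∨ Sporadic (X + 1) X A) :
    A = X * (X + 1) ^ 2 * (X ^ 2 + X + 1) ∨
    A = X ^ 2 * (X + 1) * (X ^ 2 + X + 1) ∨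
    A = X * (X + 1) ^ 2 * (X ^ 2 + X + 1) ^ 2 * (X ^ 4 + X + 1) ∨
    A = X ^ 2 * (X + 1) * (X ^ 2 + X + 1) ^ 2 * (X ^ 4 + X + 1) ∨
    A = X ^ 3 * (X + 1) ^ 4 * (X ^ 4 + X ^ 3 + 1) ∨
    A = X ^ 4 * (X + 1) ^ 3 * (X ^ 4 + X ^ 3 + X ^ 2 + X + 1) ∨
    A = X ^ 3 * (X + 1) ^ 6 * (X ^ 3 + X + 1) * (X ^ 3 + X ^ 2 + 1) ∨
    A = X ^ 6 * (X + 1) ^ 3 * (X ^ 3 + X + 1) * (X ^ 3 + X ^ 2 + 1) ∨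
    A = X ^ 4 * (X + 1) ^ 4 * (X ^ 4 + X ^ 3 + 1) * (X ^ 4 + X ^ 3 + X ^ 2 + X + 1) := by
  have e1 : geo 3 (X : (ZMod 2)[X]) = X ^ 2 + X + 1 := by rw [geo_three]; ring
  have e2 : geo 3 (X + 1 : (ZMod 2)[X]) = X ^ 2 + X + 1 := by
    rw [lin_zero.geo_three_symm, e1]
  have e3 : geo 3 (X ^ 2 + X + 1 : (ZMod 2)[X]) = X ^ 4 + X + 1 := by
    rw [geo_three]; linear_combination (1 + X + 2 * X ^ 2 + X ^ 3) * (two_eq_zero)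
  have e4 : geo 5 (X : (ZMod 2)[X]) = X ^ 4 + X ^ 3 + X ^ 2 + X + 1 := by rw [geo_five]; ring
  have e5 : geo 5 (X + 1 : (ZMod 2)[X]) = X ^ 4 + X ^ 3 + 1 := by
    rw [geo_five]; linear_combination (2 + 5 * X + 5 * X ^ 2 + 2 * X ^ 3) * (two_eq_zero)
  have e6 : (1 + X ^ 2 * (X + 1) : (ZMod 2)[X]) = X ^ 3 + X ^ 2 + 1 := by ring
  have e7 : (1 + X * (X + 1) ^ 2 : (ZMod 2)[X]) = X ^ 3 + X + 1 := by
    linear_combination (X ^ 2) * (two_eq_zero)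
  have e8 : (1 + (X + 1) ^ 2 * X : (ZMod 2)[X]) = X ^ 3 + X + 1 := by rw [mul_comm, e7]
  have e9 : (1 + (X + 1) * X ^ 2 : (ZMod 2)[X]) = X ^ 3 + X ^ 2 + 1 := by rw [mul_comm, e6]
  simp only [Sporadic, e1, e2, e3, e4, e5, e6, e7, e8, e9] at h
  rcases h with (h | h | h | h | h) | (h | h | h | h | h) <;> rw [h]
  · exact Or.inr (Or.inl rfl)
  · exact Or.inr (Or.inr (Or.inr (Or.inl rfl)))
  · iterate 5 right
    exact Or.inl rfl
  · iterate 7 right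
    left; ring
  · iterate 8 right
    ring
  · left; ring
  · right; right; left; ring
  · iterate 4 right
    left; ring
  · iterate 6 right
    left; ring
  · iterate 8 right
    ring

/-- A perfect polynomial with one to four prime factors has the form `x ^ a y ^ b ∏ P ^ N P`, the
product ranging over at most two further primes. -/
lemma perfect_cases {A : (ZMod 2)[X]} (hperf : sigma A = A) (h1 : 1 ≤ omega A) (h4 : omega A ≤ 4) :
    (∃ n : ℕ, 0 < n ∧ A = (X * (X + 1)) ^ (2 ^ n - 1)) ∨
      (Sporadic X (X + 1) A ∨ Sporadic (X + 1) X A) := by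
  have hA : A ≠ 0 := by
    rintro rfl
    rw [omega_zero] at h1
    omega
  obtain ⟨s, N, hs, hN, rfl, hcard⟩ := exists_factorization hA
  rw [hcard] at h1 h4
  rw [sigma_prod s N hs] at hperf
  have hx : X ∈ s := by simpa using mem_of_perfect hs hN hperf h1 h4 0
  have hy : X + 1 ∈ s := by
    have := mem_of_perfect hs hN hperf h1 h4 1
    rwa [show (X - C 1 : (ZMod 2)[X]) = X + 1 by rw [C_1]; linear_combination - two_eq_zero] at this
  have hL := lin_zero
  have hy' : X + 1 ∈ s.erase X := Finset.mem_erase.2 ⟨hL.ne.symm, hy⟩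
  obtain ⟨t, ht⟩ : ∃ t, t = (s.erase X).erase (X + 1) := ⟨_, rfl⟩
  have htc : t.card = s.card - 2 := by
    rw [ht, Finset.card_erase_of_mem hy', Finset.card_erase_of_mem hx]
    omega
  have hsplit : ∀ f : (ZMod 2)[X] → (ZMod 2)[X],
      ∏ P ∈ s, f P = f X * f (X + 1) * ∏ P ∈ t, f P := by
    intro f
    rw [ht, mul_assoc, Finset.mul_prod_erase _ f hy', Finset.mul_prod_erase _ f hx]
  have hmem : ∀ P ∈ t, P ∈ s ∧ P ≠ X ∧ P ≠ X + 1 := by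
    intro P hP
    rw [ht, Finset.mem_erase, Finset.mem_erase] at hP
    exact ⟨hP.2.2, hP.2.1, hP.1⟩
  rw [hsplit, hsplit] at hperf
  rw [hsplit]
  rcases (by omega : t.card = 0 ∨ t.card = 1 ∨ t.card = 2) with h | h | h
  · left
    rw [Finset.card_eq_zero] at h
    rw [h, Finset.prod_empty, Finset.prod_empty, mul_one, mul_one] at hperf
    obtain ⟨n, ha, hb⟩ := two_primes_case hL hperf
    refine ⟨n, ?_, ?_⟩
    · by_contra h0
      have := hN X hx
      rw [ha, show n = 0 by omega] at this
      simp at this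
    · rw [h, Finset.prod_empty, mul_one, ha, hb, mul_pow]
  · right
    obtain ⟨P, rfl⟩ := Finset.card_eq_one.1 h
    rw [Finset.prod_singleton] at hperf ⊢
    rw [Finset.prod_singleton] at hperf
    obtain ⟨hP, hPx, hPy⟩ := hmem P (Finset.mem_singleton_self P)
    exact three_primes_case hL (hs P hP) hPx hPy (hN P hP) hperf
  · right
    obtain ⟨P, Q, hne, hd, rfl⟩ : ∃ P Q, P ≠ Q ∧ P.natDegree ≤ Q.natDegree ∧ t = {P, Q} := by
      obtain ⟨P, Q, hne, rfl⟩ := Finset.card_eq_two.1 h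
      rcases le_total P.natDegree Q.natDegree with hd | hd
      · exact ⟨P, Q, hne, hd, rfl⟩
      · exact ⟨Q, P, hne.symm, hd, Finset.pair_comm P Q⟩
    obtain ⟨hP, hPx, hPy⟩ := hmem P (by simp)
    obtain ⟨hQ, hQx, hQy⟩ := hmem Q (by simp)
    rw [Finset.prod_pair hne] at hperf ⊢
    rw [Finset.prod_pair hne, ← mul_assoc, ← mul_assoc] at hperf
    rw [← mul_assoc]
    exact four_primes_case ⟨hL, hs P hP, hs Q hQ, hne, hPx, hPy, hQx, hQy, hd⟩ (hN P hP) (hN Q hQ) hperf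

end F2Perfect

/-- Classification of the perfect binary polynomials with at most four distinct
irreducible factors: the trivial ones `(x(x+1))^{2ⁿ−1}` and nine sporadic ones. -/
theorem statement15 (A : Polynomial (ZMod 2)) (hperf : sigma A = A)
    (h1 : 1 ≤ omega A) (h4 : omega A ≤ 4) :
    (∃ n : ℕ, 0 < n ∧ A = (X * (X + 1)) ^ (2 ^ n - 1)) ∨
    A = X * (X + 1) ^ 2 * (X ^ 2 + X + 1) ∨
    A = X ^ 2 * (X + 1) * (X ^ 2 + X + 1) ∨
    A = X * (X + 1) ^ 2 * (X ^ 2 + X + 1) ^ 2 * (X ^ 4 + X + 1) ∨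
    A = X ^ 2 * (X + 1) * (X ^ 2 + X + 1) ^ 2 * (X ^ 4 + X + 1) ∨
    A = X ^ 3 * (X + 1) ^ 4 * (X ^ 4 + X ^ 3 + 1) ∨
    A = X ^ 4 * (X + 1) ^ 3 * (X ^ 4 + X ^ 3 + X ^ 2 + X + 1) ∨
    A = X ^ 3 * (X + 1) ^ 6 * (X ^ 3 + X + 1) * (X ^ 3 + X ^ 2 + 1) ∨
    A = X ^ 6 * (X + 1) ^ 3 * (X ^ 3 + X + 1) * (X ^ 3 + X ^ 2 + 1) ∨
    A = X ^ 4 * (X + 1) ^ 4 * (X ^ 4 + X ^ 3 + 1) * (X ^ 4 + X ^ 3 + X ^ 2 + X + 1) :=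
  (F2Perfect.perfect_cases hperf h1 h4).imp_right F2Perfect.Sporadic.list
end

section
/- Each of the five polynomials M₅ₐ = x(x+1)²(x²+x+1), M₅ᵦ = x²(x+1)(x²+x+1), M₁₆ = x⁴(x+1)⁴(x⁴+x³+1)(x⁴+x³+x²+x+1), M₂₀ₐ = x⁴(x+1)⁶(x³+x+1)(x³+x²+1)(x⁴+x³+x²+x+1), and M₂₀ᵦ = x⁶(x+1)⁴(x³+x+1)(x³+x²+1)(x⁴+x³+1) in F₂[x] is perfect, i.e., a fixed point of σ. -/
/-!
The only unit of `F₂[x]` is `1`, so every divisor of `A * B` with `A`, `B` coprime is uniquely a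
product of a divisor of `A` and a divisor of `B`. Hence `σ` is multiplicative on coprime factors,
and `σ (P ^ k) = 1 + P + ⋯ + P ^ k` for `P` irreducible. Each of the five polynomials is given by
its factorization into powers of distinct irreducibles, so its `σ` is an explicit product of such
geometric sums. These sums factor over the same irreducibles; for instance, with
`Φ = x⁴ + x³ + x² + x + 1`,
* `σ (x⁴) = Φ`, `σ ((x + 1)⁴) = x⁴ + x³ + 1`,
* `σ (x⁶) = σ ((x + 1)⁶) = (x³ + x + 1)(x³ + x² + 1)`,
* `σ (x³ + x + 1) = x(x + 1)²`, `σ (x³ + x² + 1) = x²(x + 1)`,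
* `σ (x⁴ + x³ + 1) = x³(x + 1)`, `σ Φ = x(x + 1)³`,

and multiplying them gives the polynomial back.
-/

open Polynomial

/-! ### Multiplicativity of the divisor sum -/

/-- The only unit of `F₂[x]` is `1`. -/
instance subsingleton_units : Subsingleton ((ZMod 2)[X])ˣ := by
  have h : ∀ u : ((ZMod 2)[X])ˣ, u = 1 := by
    intro u
    obtain ⟨r, hr, hu⟩ := Polynomial.isUnit_iff.1 u.isUnit
    have hr1 : r = 1 := (by decide : ∀ r : ZMod 2, r ≠ 0 → r = 1) r hr.ne_zero
    ext1
    rw [← hu, hr1, map_one, Units.val_one]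
  exact ⟨fun a b => (h a).trans (h b).symm⟩

theorem divisors_finite {A : (ZMod 2)[X]} (hA : A ≠ 0) : {D | D ∣ A}.Finite := by
  classical
  have : Fintype ((ZMod 2)[X])ˣ := Fintype.ofSubsingleton 1
  exact @Set.toFinite _ _ (@Finite.of_fintype _ (UniqueFactorizationMonoid.fintypeSubtypeDvd A hA))

theorem sigma_eq_sum {A : (ZMod 2)[X]} (hA : A ≠ 0) :
    sigma A = ∑ D ∈ (divisors_finite hA).toFinset, D :=
  finsum_mem_eq_finite_toFinset_sum (fun D => D) (divisors_finite hA)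

/-- `σ` is multiplicative on coprime factors. -/
theorem sigma_mul {A B : (ZMod 2)[X]} (hA : A ≠ 0) (hB : B ≠ 0) (h : IsCoprime A B) :
    sigma (A * B) = sigma A * sigma B := by
  rw [sigma_eq_sum hA, sigma_eq_sum hB, sigma_eq_sum (mul_ne_zero hA hB), Finset.sum_mul_sum,
    ← Finset.sum_product']
  symm
  refine Finset.sum_bij (fun p _ => p.1 * p.2) ?_ ?_ ?_ (fun _ _ => rfl)
  · rintro ⟨a, b⟩ hab
    simp only [Finset.mem_product, Set.Finite.mem_toFinset, Set.mem_ofPred_eq] at hab ⊢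
    exact mul_dvd_mul hab.1 hab.2
  · rintro ⟨a, b⟩ hab ⟨a', b'⟩ hab' heq
    simp only [Finset.mem_product, Set.Finite.mem_toFinset, Set.mem_ofPred_eq] at hab hab' heq
    -- `c` is coprime to `d'`, so it divides `c'`
    have key : ∀ {c d c' d' : (ZMod 2)[X]}, c ∣ A → d' ∣ B → c * d = c' * d' → c ∣ c' :=
      fun hc hd' e => ((h.of_isCoprime_of_dvd_left hc).of_isCoprime_of_dvd_right
        hd').dvd_of_dvd_mul_right (e ▸ dvd_mul_right _ _)
    -- mutual divisibility is equality, since `1` is the only unit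
    have h1 : a = a' := associated_iff_eq.1
      (associated_of_dvd_dvd (key hab.1 hab'.2 heq) (key hab'.1 hab.2 heq.symm))
    subst h1
    have ha : a ≠ 0 := fun h0 => hA (by simpa [h0] using hab.1)
    rw [mul_left_cancel₀ ha heq]
  · intro D hD
    simp only [Set.Finite.mem_toFinset, Set.mem_ofPred_eq] at hD
    obtain ⟨a, b, ha, hb, rfl⟩ := exists_dvd_and_dvd_of_dvd_mul hD
    exact ⟨(a, b), by simp [ha, hb], rfl⟩

theorem sigma_pow {P : (ZMod 2)[X]} (hP : Irreducible P) (k : ℕ) :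
    sigma (P ^ k) = ∑ i ∈ Finset.range (k + 1), P ^ i := by
  classical
  have himg : (divisors_finite (pow_ne_zero k hP.ne_zero)).toFinset =
      (Finset.range (k + 1)).image (fun i => P ^ i) := by
    ext D
    simp only [Set.Finite.mem_toFinset, Set.mem_ofPred_eq, dvd_prime_pow hP.prime,
      associated_iff_eq, Finset.mem_image, Finset.mem_range, Nat.lt_succ_iff, eq_comm (a := D)]
  rw [sigma_eq_sum (pow_ne_zero k hP.ne_zero), himg, Finset.sum_image]
  exact fun i _ j _ hij => pow_injective_of_not_isUnit hP.not_isUnit hP.ne_zero hij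

theorem sigma_irreducible {P : (ZMod 2)[X]} (hP : Irreducible P) : sigma P = P + 1 := by
  have := sigma_pow hP 1
  simpa [Finset.sum_range_succ, add_comm] using this

theorem isCoprime_of_coeff_ne {P Q : (ZMod 2)[X]} (hP : Irreducible P) (hQ : Irreducible Q)
    (n : ℕ) (h : P.coeff n ≠ Q.coeff n) : IsCoprime P Q :=
  hP.coprime_iff_not_dvd.2 fun hd =>
    h (congrArg (coeff · n) (associated_iff_eq.1 (hP.associated_of_dvd hQ hd)))

/-! ### Irreducibility of the factors -/

theorem irreducible_X_add_one : Irreducible (X + 1 : (ZMod 2)[X]) := by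
  simpa [CharTwo.sub_eq_add] using Polynomial.irreducible_X_sub_C (1 : ZMod 2)

/-- A polynomial of degree `1`, `2` or `3` without roots in `F₂` is irreducible. -/
theorem irreducible_of_eval {f : (ZMod 2)[X]} (hd : f.natDegree ∈ Finset.Icc 1 3)
    (h0 : f.eval 0 ≠ 0) (h1 : f.eval 1 ≠ 0) : Irreducible f := by
  refine Polynomial.irreducible_of_degree_le_three_of_not_isRoot hd fun x hx => ?_
  fin_cases x
  · exact h0 hx
  · exact h1 hx

theorem irreducible_two : Irreducible (X ^ 2 + X + 1 : (ZMod 2)[X]) := by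
  have hd : (X ^ 2 + X + 1 : (ZMod 2)[X]).natDegree = 2 := by compute_degree!
  exact irreducible_of_eval (by simp [hd]) (by simp) (by simp; decide)

theorem irreducible_three : Irreducible (X ^ 3 + X + 1 : (ZMod 2)[X]) := by
  have hd : (X ^ 3 + X + 1 : (ZMod 2)[X]).natDegree = 3 := by compute_degree!
  exact irreducible_of_eval (by simp [hd]) (by simp) (by simp; decide)

theorem irreducible_three' : Irreducible (X ^ 3 + X ^ 2 + 1 : (ZMod 2)[X]) := by
  have hd : (X ^ 3 + X ^ 2 + 1 : (ZMod 2)[X]).natDegree = 3 := by compute_degree!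
  exact irreducible_of_eval (by simp [hd]) (by simp) (by simp; decide)

/-- A quartic without roots in `F₂` that is coprime to `x² + x + 1`, the only irreducible
quadratic over `F₂`, is irreducible. -/
theorem irreducible_of_natDegree_four {f : (ZMod 2)[X]} (hm : f.Monic) (hd : f.natDegree = 4)
    (h0 : f.eval 0 ≠ 0) (h1 : f.eval 1 ≠ 0) (hq : IsCoprime (X ^ 2 + X + 1) f) :
    Irreducible f := by
  have hne : f ≠ 1 := by
    rintro rfl
    simp at hd
  rw [hm.irreducible_iff_lt_natDegree_lt hne, hd]
  intro q hqm hqd hqf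
  have hroot : ∀ x : ZMod 2, q.eval x ≠ 0 := by
    intro x hx
    have hfx := eval_eq_zero_of_dvd_of_eval_eq_zero hqf hx
    fin_cases x
    · exact h0 hfx
    · exact h1 hfx
  have hirr : Irreducible q := irreducible_of_eval
    (by simp only [Finset.mem_Ioc, Finset.mem_Icc] at hqd ⊢; omega) (hroot 0) (hroot 1)
  have hq2 : q = X ^ 2 + X + 1 := by
    have hle : q.natDegree ≤ 2 := (Finset.mem_Ioc.1 hqd).2
    have hpos : 0 < q.natDegree := (Finset.mem_Ioc.1 hqd).1
    have e := q.as_sum_range_C_mul_X_pow' (Nat.lt_succ_of_le hle)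
    simp only [Finset.sum_range_succ, Finset.sum_range_zero, zero_add, pow_zero, mul_one,
      pow_one] at e
    have r0 := hroot 0
    have r1 := hroot 1
    rw [e] at r0 r1
    have hlc : q.coeff 1 ≠ 0 ∨ q.coeff 2 ≠ 0 := by
      have h1 := hqm.coeff_natDegree
      rcases (by omega : q.natDegree = 1 ∨ q.natDegree = 2) with h | h <;> rw [h] at h1 <;>
        simp [h1]
    simp only [eval_add, eval_mul, eval_C, eval_pow, eval_X] at r0 r1
    -- `q` is nonconstant and has no roots: a finite check on its three coefficients
    have : q.coeff 0 = 1 ∧ q.coeff 1 = 1 ∧ q.coeff 2 = 1 := by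
      generalize q.coeff 0 = a at *
      generalize q.coeff 1 = b at *
      generalize q.coeff 2 = c at *
      clear e
      decide +revert
    rw [e, this.1, this.2.1, this.2.2]
    simp
    ring
  exact hirr.not_isUnit ((hq.isUnit_of_dvd' (hq2 ▸ dvd_rfl) hqf))

theorem irreducible_four : Irreducible (X ^ 4 + X ^ 3 + 1 : (ZMod 2)[X]) := by
  refine irreducible_of_natDegree_four (by monicity!) (by compute_degree!) (by simp)
    (by simp; decide) ⟨X ^ 3 + X ^ 2 + X, X + 1, ?_⟩
  ring_nf
  reduce_mod_char

theorem irreducible_four' : Irreducible (X ^ 4 + X ^ 3 + X ^ 2 + X + 1 : (ZMod 2)[X]) := by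
  refine irreducible_of_natDegree_four (by monicity!) (by compute_degree!) (by simp)
    (by simp; decide) ⟨X ^ 3 + 1, X, ?_⟩
  ring_nf
  reduce_mod_char

/-! ### The five perfect polynomials -/

/-- The five sporadic perfect polynomials `M₅ₐ, M₅ᵦ, M₁₆, M₂₀ₐ, M₂₀ᵦ` are fixed
points of `σ`. -/
theorem statement16 :
    sigma (X * (X + 1) ^ 2 * (X ^ 2 + X + 1) : Polynomial (ZMod 2)) =
      X * (X + 1) ^ 2 * (X ^ 2 + X + 1) ∧
    sigma (X ^ 2 * (X + 1) * (X ^ 2 + X + 1) : Polynomial (ZMod 2)) =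
      X ^ 2 * (X + 1) * (X ^ 2 + X + 1) ∧
    sigma (X ^ 4 * (X + 1) ^ 4 * (X ^ 4 + X ^ 3 + 1) * (X ^ 4 + X ^ 3 + X ^ 2 + X + 1) :
        Polynomial (ZMod 2)) =
      X ^ 4 * (X + 1) ^ 4 * (X ^ 4 + X ^ 3 + 1) * (X ^ 4 + X ^ 3 + X ^ 2 + X + 1) ∧
    sigma (X ^ 4 * (X + 1) ^ 6 * (X ^ 3 + X + 1) * (X ^ 3 + X ^ 2 + 1) *
        (X ^ 4 + X ^ 3 + X ^ 2 + X + 1) : Polynomial (ZMod 2)) =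
      X ^ 4 * (X + 1) ^ 6 * (X ^ 3 + X + 1) * (X ^ 3 + X ^ 2 + 1) *
        (X ^ 4 + X ^ 3 + X ^ 2 + X + 1) ∧
    sigma (X ^ 6 * (X + 1) ^ 4 * (X ^ 3 + X + 1) * (X ^ 3 + X ^ 2 + 1) *
        (X ^ 4 + X ^ 3 + 1) : Polynomial (ZMod 2)) =
      X ^ 6 * (X + 1) ^ 4 * (X ^ 3 + X + 1) * (X ^ 3 + X ^ 2 + 1) *
        (X ^ 4 + X ^ 3 + 1) := by
  -- `Y` stands for `x + 1`, `P` for `x³ + x² + 1`, `Q` for `x⁴ + x³ + x² + x + 1`, and `2`, `3`, `4`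
  -- for the other factors of these degrees
  have hX := irreducible_X (R := ZMod 2)
  have hY := irreducible_X_add_one
  have h2 := irreducible_two
  have h3 := irreducible_three
  have hP := irreducible_three'
  have h4 := irreducible_four
  have hQ := irreducible_four'
  have c3P := isCoprime_of_coeff_ne h3 hP 1 (by simp [coeff_X, coeff_one])
  have c34 := isCoprime_of_coeff_ne h3 h4 4 (by simp [coeff_X, coeff_one])
  have c3Q := isCoprime_of_coeff_ne h3 hQ 4 (by simp [coeff_X, coeff_one])
  have cP4 := isCoprime_of_coeff_ne hP h4 4 (by simp [coeff_X, coeff_one])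
  have cPQ := isCoprime_of_coeff_ne hP hQ 4 (by simp [coeff_X, coeff_one])
  have c4Q := isCoprime_of_coeff_ne h4 hQ 1 (by simp [coeff_X, coeff_one])
  have cX2 := isCoprime_of_coeff_ne hX h2 0 (by simp [coeff_X, coeff_one])
  have cX3 := isCoprime_of_coeff_ne hX h3 0 (by simp [coeff_X, coeff_one])
  have cXP := isCoprime_of_coeff_ne hX hP 0 (by simp [coeff_X, coeff_one])
  have cX4 := isCoprime_of_coeff_ne hX h4 0 (by simp [coeff_X, coeff_one])
  have cXQ := isCoprime_of_coeff_ne hX hQ 0 (by simp [coeff_X, coeff_one])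
  have cXY := isCoprime_of_coeff_ne hX hY 0 (by simp [coeff_X, coeff_one])
  have cY2 := isCoprime_of_coeff_ne hY h2 2 (by simp [coeff_X, coeff_one])
  have cY3 := isCoprime_of_coeff_ne hY h3 3 (by simp [coeff_X, coeff_one])
  have cYP := isCoprime_of_coeff_ne hY hP 3 (by simp [coeff_X, coeff_one])
  have cY4 := isCoprime_of_coeff_ne hY h4 4 (by simp [coeff_X, coeff_one])
  have cYQ := isCoprime_of_coeff_ne hY hQ 4 (by simp [coeff_X, coeff_one])
  refine ⟨?_, ?_, ?_, ?_, ?_⟩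
  · rw [sigma_mul (by simp [hY.ne_zero]) h2.ne_zero
        (cX2.mul_left cY2.pow_left),
      sigma_mul hX.ne_zero (pow_ne_zero _ hY.ne_zero)
        cXY.pow_right,
      sigma_irreducible hX,
      sigma_pow hY,
      sigma_irreducible h2]
    simp only [Finset.sum_range_succ, Finset.sum_range_zero]
    ring_nf
    reduce_mod_char
  · rw [sigma_mul (by simp [hY.ne_zero]) h2.ne_zero
        (cX2.pow_left.mul_left cY2),
      sigma_mul (pow_ne_zero _ hX.ne_zero) hY.ne_zero
        cXY.pow_left,
      sigma_pow hX,
      sigma_irreducible hY,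
      sigma_irreducible h2]
    simp only [Finset.sum_range_succ, Finset.sum_range_zero]
    ring_nf
    reduce_mod_char
  · rw [sigma_mul (by simp [hY.ne_zero, h4.ne_zero]) hQ.ne_zero
        ((cXQ.pow_left.mul_left cYQ.pow_left).mul_left c4Q),
      sigma_mul (by simp [hY.ne_zero]) h4.ne_zero
        (cX4.pow_left.mul_left cY4.pow_left),
      sigma_mul (pow_ne_zero _ hX.ne_zero) (pow_ne_zero _ hY.ne_zero)
        cXY.pow,
      sigma_pow hX,
      sigma_pow hY,
      sigma_irreducible h4,
      sigma_irreducible hQ]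
    simp only [Finset.sum_range_succ, Finset.sum_range_zero]
    ring_nf
    reduce_mod_char
  · rw [sigma_mul (by simp [hY.ne_zero, h3.ne_zero, hP.ne_zero]) hQ.ne_zero
        (((cXQ.pow_left.mul_left cYQ.pow_left).mul_left c3Q).mul_left cPQ),
      sigma_mul (by simp [hY.ne_zero, h3.ne_zero]) hP.ne_zero
        ((cXP.pow_left.mul_left cYP.pow_left).mul_left c3P),
      sigma_mul (by simp [hY.ne_zero]) h3.ne_zero
        (cX3.pow_left.mul_left cY3.pow_left),
      sigma_mul (pow_ne_zero _ hX.ne_zero) (pow_ne_zero _ hY.ne_zero)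
        cXY.pow,
      sigma_pow hX,
      sigma_pow hY,
      sigma_irreducible h3,
      sigma_irreducible hP,
      sigma_irreducible hQ]
    simp only [Finset.sum_range_succ, Finset.sum_range_zero]
    ring_nf
    reduce_mod_char
  · rw [sigma_mul (by simp [hY.ne_zero, h3.ne_zero, hP.ne_zero]) h4.ne_zero
        (((cX4.pow_left.mul_left cY4.pow_left).mul_left c34).mul_left cP4),
      sigma_mul (by simp [hY.ne_zero, h3.ne_zero]) hP.ne_zero
        ((cXP.pow_left.mul_left cYP.pow_left).mul_left c3P),
      sigma_mul (by simp [hY.ne_zero]) h3.ne_zero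
        (cX3.pow_left.mul_left cY3.pow_left),
      sigma_mul (pow_ne_zero _ hX.ne_zero) (pow_ne_zero _ hY.ne_zero)
        cXY.pow,
      sigma_pow hX,
      sigma_pow hY,
      sigma_irreducible h3,
      sigma_irreducible hP,
      sigma_irreducible h4]
    simp only [Finset.sum_range_succ, Finset.sum_range_zero]
    ring_nf
    reduce_mod_char
end

section
/- If A ∈ F₂[x] is a perfect polynomial of positive degree that is even, then both x and x+1 divide A, i.e., x(x+1) ∣ A. -/
/-!
Let `a, b ∈ F₂`, let `A` be perfect with `A(a) = 0`, and suppose `A(b) = 1`. Every divisor of `A`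
then takes the value `1` at `b`, so `A(b) = σ(A)(b)` is the parity of the number of divisors of `A`,
which is therefore odd. Write `A = (x - a)^k B` with `B(a) ≠ 0`. The divisors of `A` are the
products `(x - a)^j D` with `j ≤ k` and `D ∣ B`, so `A` has `k + 1` times as many divisors as `B`
(`card_divs_mul`), and `B` has an odd number of divisors. The divisors of `A` not vanishing at `a`
are exactly the divisors of `B`, so `A(a) = σ(A)(a)` is the parity of their number, namely `1`: a
contradiction. Hence an even perfect polynomial, having one root in `F₂`, vanishes at both `0`
and `1`.
-/

open Polynomial

lemma monic_of_ne_zero {D : Polynomial (ZMod 2)} (h : D ≠ 0) : D.Monic := by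
  have h1 : D.leadingCoeff ≠ 0 := leadingCoeff_ne_zero.mpr h
  have key : ∀ c : ZMod 2, c ≠ 0 → c = 1 := by decide
  exact key _ h1

lemma finite_divs {A : Polynomial (ZMod 2)} (hA : A ≠ 0) : {D | D ∣ A}.Finite := by
  -- The unit group of `F₂[x]` is trivial, so divisors up to units are the same as divisors.
  have hu : Subsingleton (Polynomial (ZMod 2))ˣ := by
    refine ⟨fun u v => Units.ext ?_⟩
    rw [(monic_of_ne_zero u.ne_zero).eq_one_of_isUnit u.isUnit,
      (monic_of_ne_zero v.ne_zero).eq_one_of_isUnit v.isUnit]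
  have : Fintype (Polynomial (ZMod 2))ˣ := Fintype.ofSubsingleton 1
  have : Fintype {D | D ∣ A} := UniqueFactorizationMonoid.fintypeSubtypeDvd A hA
  exact Set.toFinite _

/-- The finite set of divisors of a nonzero binary polynomial. -/
noncomputable def divs (A : Polynomial (ZMod 2)) (hA : A ≠ 0) : Finset (Polynomial (ZMod 2)) :=
  (finite_divs hA).toFinset

lemma mem_divs {A : Polynomial (ZMod 2)} (hA : A ≠ 0) {D : Polynomial (ZMod 2)} :
    D ∈ divs A hA ↔ D ∣ A := by
  simp [divs]

lemma sigma_eq {A : Polynomial (ZMod 2)} (hA : A ≠ 0) : sigma A = ∑ D ∈ divs A hA, D :=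
  finsum_mem_eq_finite_toFinset_sum (fun D => D) (finite_divs hA)

lemma eval_eq_one_of_dvd {A D : Polynomial (ZMod 2)} {c : ZMod 2} (h : D ∣ A)
    (hA : A.eval c ≠ 0) : D.eval c = 1 := by
  have h1 : D.eval c ≠ 0 := fun h0 => hA (eval_eq_zero_of_dvd_of_eval_eq_zero h h0)
  have key : ∀ c : ZMod 2, c ≠ 0 → c = 1 := by decide
  exact key _ h1

lemma dvd_pow_mul_iff {a : ZMod 2} {k : ℕ} {B : Polynomial (ZMod 2)}
    (D : Polynomial (ZMod 2)) :
    D ∣ (X - C a) ^ k * B ↔ ∃ j ≤ k, ∃ E, E ∣ B ∧ (X - C a) ^ j * E = D := by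
  constructor
  · intro h
    obtain ⟨d, E, hd, hE, rfl⟩ := exists_dvd_and_dvd_of_dvd_mul h
    obtain ⟨j, hj, hassoc⟩ := (dvd_prime_pow (prime_X_sub_C a) k).mp hd
    have hd0 : d ≠ 0 := ne_zero_of_dvd_ne_zero (pow_ne_zero k (X_sub_C_ne_zero a)) hd
    exact ⟨j, hj, E, hE, by
      rw [eq_of_monic_of_associated (monic_of_ne_zero hd0) ((monic_X_sub_C a).pow j) hassoc]⟩
  · rintro ⟨j, hj, E, hE, rfl⟩
    exact mul_dvd_mul (pow_dvd_pow _ hj) hE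

lemma rootMultiplicity_pow_mul {a : ZMod 2} {E : Polynomial (ZMod 2)} (hE : E.eval a ≠ 0) (j : ℕ) :
    ((X - C a) ^ j * E).rootMultiplicity a = j := by
  have hE0 : E ≠ 0 := by rintro rfl; simp at hE
  rw [rootMultiplicity_mul (mul_ne_zero (pow_ne_zero j (X_sub_C_ne_zero a)) hE0),
    rootMultiplicity_X_sub_C_pow, rootMultiplicity_eq_zero hE, add_zero]

lemma card_divs_mul {a : ZMod 2} {k : ℕ} {B : Polynomial (ZMod 2)} (hB : B ≠ 0)
    (hBa : B.eval a ≠ 0) (hA : (X - C a) ^ k * B ≠ 0) :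
    (divs ((X - C a) ^ k * B) hA).card = (k + 1) * (divs B hB).card := by
  rw [← Finset.card_range (k + 1), ← Finset.card_product]
  symm
  refine Finset.card_bij (fun p _ => (X - C a) ^ p.1 * p.2) ?_ ?_ ?_
  · rintro ⟨j, E⟩ h
    simp only [Finset.mem_product, Finset.mem_range, mem_divs] at h
    exact (mem_divs hA).mpr ((dvd_pow_mul_iff _).mpr ⟨j, by omega, E, h.2, rfl⟩)
  · rintro ⟨i, E⟩ h ⟨j, F⟩ h' heq
    simp only [Finset.mem_product, Finset.mem_range, mem_divs] at h h' heq
    have hij : i = j := by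
      rw [← rootMultiplicity_pow_mul (by rw [eval_eq_one_of_dvd h.2 hBa]; exact one_ne_zero) i,
        heq,
        rootMultiplicity_pow_mul (by rw [eval_eq_one_of_dvd h'.2 hBa]; exact one_ne_zero) j]
    subst hij
    rw [mul_left_cancel₀ (pow_ne_zero i (X_sub_C_ne_zero a)) heq]
  · intro D hD
    obtain ⟨j, hj, E, hE, rfl⟩ := (dvd_pow_mul_iff D).mp ((mem_divs hA).mp hD)
    exact ⟨(j, E), by simp [mem_divs, hE]; omega, rfl⟩

lemma eval_sigma_of_eval_ne_zero {A : Polynomial (ZMod 2)} (hA : A ≠ 0) {b : ZMod 2}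
    (hb : A.eval b ≠ 0) : (sigma A).eval b = ((divs A hA).card : ZMod 2) := by
  rw [sigma_eq hA, eval_finsetSum,
    Finset.sum_congr rfl fun D hD => eval_eq_one_of_dvd ((mem_divs hA).mp hD) hb]
  simp

/-- Divisors vanishing at `a` contribute nothing, and the others are the divisors of `B`. -/
lemma eval_sigma_pow_mul {a : ZMod 2} {k : ℕ} {B : Polynomial (ZMod 2)} (hB : B ≠ 0)
    (hBa : B.eval a ≠ 0) (hA : (X - C a) ^ k * B ≠ 0) :
    (sigma ((X - C a) ^ k * B)).eval a = ((divs B hB).card : ZMod 2) := by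
  rw [← eval_sigma_of_eval_ne_zero hB hBa, sigma_eq hA, sigma_eq hB, eval_finsetSum,
    eval_finsetSum]
  symm
  refine Finset.sum_subset ?_ ?_
  · intro D hD
    exact (mem_divs hA).mpr (((mem_divs hB).mp hD).mul_left _)
  · intro D hD hDB
    obtain ⟨j, -, E, hE, rfl⟩ := (dvd_pow_mul_iff D).mp ((mem_divs hA).mp hD)
    rcases Nat.eq_zero_or_pos j with rfl | hj
    · exact absurd ((mem_divs hB).mpr (by simpa using hE)) hDB
    · simp [hj.ne']

lemma eval_eq_zero_of_perfect {A : Polynomial (ZMod 2)} (hA : A ≠ 0) (hperf : sigma A = A)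
    {a : ZMod 2} (ha : A.eval a = 0) (b : ZMod 2) : A.eval b = 0 := by
  by_contra hb
  obtain ⟨B, hAB, hnd⟩ := exists_eq_pow_rootMultiplicity_mul_and_not_dvd A hA a
  generalize A.rootMultiplicity a = k at hAB
  subst hAB
  have hBa : B.eval a ≠ 0 := fun h => hnd (dvd_iff_isRoot.mpr h)
  have hB : B ≠ 0 := right_ne_zero_of_mul hA
  have h1 := eval_sigma_of_eval_ne_zero hA hb
  have h2 := eval_sigma_pow_mul hB hBa hA
  rw [hperf] at h1 h2
  rw [card_divs_mul hB hBa hA, Nat.cast_mul, ← h2, ha, mul_zero] at h1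
  exact hb h1

/-- An even perfect polynomial of positive degree is divisible by `x(x+1)`. -/
theorem statement17 (A : Polynomial (ZMod 2)) (hdeg : 0 < A.natDegree)
    (hperf : sigma A = A) (heven : IsEven A) :
    X * (X + 1) ∣ A := by
  have hA : A ≠ 0 := by rintro rfl; simp at hdeg
  have hroot : ∃ a, A.eval a = 0 := by
    by_contra! h
    have key : ∀ c : ZMod 2, c ≠ 0 → c = 1 := by decide
    exact heven ⟨key _ (h 0), key _ (h 1)⟩
  obtain ⟨a, ha⟩ := hroot
  have hX : X ∣ A := by
    simpa using dvd_iff_isRoot.mpr (eval_eq_zero_of_perfect hA hperf ha 0)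
  have hX1 : X + 1 ∣ A := by
    have h := dvd_iff_isRoot.mpr (eval_eq_zero_of_perfect hA hperf ha 1)
    rwa [C_1, CharTwo.sub_eq_add] at h
  exact IsCoprime.mul_dvd ⟨-1, 1, by ring⟩ hX hX1
end
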